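/- arXiv:2409.12819 — 2 statements merged into one kernel-verified Lean document; each statement's English description precedes it below -/
import Mathlib

section
/- Let m, r be positive integers with 2 ≤ r ≤ m/100, and let M = ⌈(2^{3r-2}(r-1)^{2r-1}/r!)^{1/(r-1)} · m · (m(r-1)+r)^{1/(r-1)}⌉. For any constant 0 < c < 1, if q is a squarefree positive integer with φ(q) ≥ ⌈M/⌊c(m-1)/(r-1)⌋⌉, then there are at least 2(1-c)m · (⌈M/⌊c(m-1)/(r-1)⌋⌉)^{-5} · φ(q)(φ(q)-1) many m-tuples a ∈ ((ℤ/qℤ)^×)^m such that π(x;q,a) → ∞ as x → ∞. -/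
open Filter

/-- `π(x; q, a)`: the number of indices `n` with `p_n ≤ x` such that the `m` consecutive
primes `p_n, p_{n+1}, …, p_{n+m-1}` satisfy `p_{n+i} ≡ a_i (mod q)` for all `i`. -/
noncomputable def consecCount (q m : ℕ) (a : Fin m → (ZMod q)ˣ) (x : ℝ) : ℕ :=
  Set.ncard {n : ℕ | (Nat.nth Nat.Prime n : ℝ) ≤ x ∧
    ∀ i : Fin m, ((Nat.nth Nat.Prime (n + (i : ℕ)) : ℕ) : ZMod q) = (a i : ZMod q)}

/-- The quantity `M = ⌈(2^(3r-2) (r-1)^(2r-1) / r!)^(1/(r-1)) · m · (m(r-1)+r)^(1/(r-1))⌉`. -/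
noncomputable def Mval (m r : ℕ) : ℕ :=
  ⌈((2 : ℝ) ^ (3 * r - 2) * ((r : ℝ) - 1) ^ (2 * r - 1) / (r.factorial : ℝ)) ^
        ((1 : ℝ) / ((r : ℝ) - 1)) *
      (m : ℝ) * ((m : ℝ) * ((r : ℝ) - 1) + (r : ℝ)) ^ ((1 : ℝ) / ((r : ℝ) - 1))⌉₊

/-- `K = ⌈M / ⌊c(m-1)/(r-1)⌋⌉`. -/
noncomputable def Kval (m r : ℕ) (c : ℝ) : ℕ :=
  ⌈(Mval m r : ℝ) / (⌊c * ((m : ℝ) - 1) / ((r : ℝ) - 1)⌋₊ : ℝ)⌉₊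


section
open Finset

lemma s5_crt_sum (a b : ℕ) (ha : 0 < a) (hb : 0 < b) (hab : Nat.Coprime a b) (u v : ℕ → ℝ)
    (hu : Function.Periodic u a) (hv : Function.Periodic v b) :
    ∑ t ∈ range (a * b), u t * v t = (∑ t ∈ range a, u t) * (∑ t ∈ range b, v t) := by
  rw [Finset.sum_mul_sum, ← Finset.sum_product']
  have hinj : Set.InjOn (fun t : ℕ => (t % a, t % b)) (range (a * b) : Finset ℕ) := by
    intro s hs t ht hst
    simp only [Prod.mk.injEq] at hst
    simp only [coe_range, Set.mem_Iio] at hs ht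
    have := (Nat.modEq_and_modEq_iff_modEq_mul hab).1 ⟨hst.1, hst.2⟩
    exact Nat.ModEq.eq_of_lt_of_lt this hs ht
  have himg : (range (a * b)).image (fun t : ℕ => (t % a, t % b)) = range a ×ˢ range b := by
    apply Finset.eq_of_subset_of_card_le
    · intro x hx
      simp only [mem_image, mem_range] at hx
      obtain ⟨t, _, rfl⟩ := hx
      simp [Nat.mod_lt _ ha, Nat.mod_lt _ hb]
    · rw [Finset.card_image_of_injOn hinj]; simp
  rw [← himg, Finset.sum_image hinj]
  apply Finset.sum_congr rfl
  intro t _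
  simp only [hu.map_mod_nat, hv.map_mod_nat]

lemma s5_prod_periodic (S : Finset ℕ) (g : ℕ → ℕ → ℝ) (hg : ∀ p ∈ S, Function.Periodic (g p) p) :
    Function.Periodic (fun t => ∏ p ∈ S, g p t) (∏ p ∈ S, p) := by
  intro t
  apply Finset.prod_congr rfl
  intro p hp
  obtain ⟨k, hk⟩ := Finset.dvd_prod_of_mem (fun p => p) hp
  rw [hk, mul_comm]
  have := (hg p hp).nat_mul k
  simpa using this t

lemma s5_crt_prod (S : Finset ℕ) (hS : ∀ p ∈ S, p.Prime) (g : ℕ → ℕ → ℝ)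
    (hg : ∀ p ∈ S, Function.Periodic (g p) p) :
    ∑ t ∈ range (∏ p ∈ S, p), ∏ p ∈ S, g p t = ∏ p ∈ S, ∑ t ∈ range p, g p t := by
  classical
  induction S using Finset.induction_on with
  | empty => simp
  | insert a s ha ih =>
    have hs : ∀ p ∈ s, p.Prime := fun p hp => hS p (mem_insert_of_mem hp)
    have hgs : ∀ p ∈ s, Function.Periodic (g p) p := fun p hp => hg p (mem_insert_of_mem hp)
    rw [Finset.prod_insert ha, Finset.prod_insert ha, ← ih hs hgs]
    simp_rw [Finset.prod_insert ha]
    apply s5_crt_sum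
    · exact (hS a (mem_insert_self _ _)).pos
    · exact Finset.prod_pos fun p hp => (hs p hp).pos
    · apply Nat.Coprime.prod_right
      intro p hp
      rw [Nat.coprime_primes (hS a (mem_insert_self _ _)) (hs p hp)]
      rintro rfl; exact ha hp
    · exact hg a (mem_insert_self _ _)
    · exact s5_prod_periodic s g hgs

lemma s5_incomplete (u : ℕ → ℝ) (Q : ℕ) (hQ : 0 < Q) (hu : Function.Periodic u Q) (C : ℝ)
    (hC : ∀ t, |u t| ≤ C) (h0 : 0 ≤ ∑ t ∈ range Q, u t) (X : ℕ) :
    ∑ t ∈ range X, u t ≤ X * ((∑ t ∈ range Q, u t) / Q) + Q * C := by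
  have key : ∀ a b : ℕ, ∑ t ∈ range (Q * a + b), u t
      = a * (∑ t ∈ range Q, u t) + ∑ t ∈ range b, u t := by
    intro a
    induction a with
    | zero => intro b; simp
    | succ a ih =>
      intro b
      have : Q * (a + 1) + b = Q + (Q * a + b) := by ring
      rw [this, Finset.sum_range_add]
      have h2 : ∀ x, u (Q + x) = u x := fun x => by rw [add_comm]; exact hu x
      simp_rw [h2]
      rw [ih]; push_cast; ring
  have hX := Nat.div_add_mod X Q
  have h1 := key (X / Q) (X % Q)
  rw [hX] at h1
  rw [h1]
  have hC0 : 0 ≤ C := (abs_nonneg _).trans (hC 0)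
  have h3 : ∑ t ∈ range (X % Q), u t ≤ Q * C := by
    calc ∑ t ∈ range (X % Q), u t ≤ ∑ t ∈ range (X % Q), C :=
          Finset.sum_le_sum fun t _ => (le_abs_self _).trans (hC t)
      _ = ((X % Q : ℕ) : ℝ) * C := by simp
      _ ≤ Q * C := by
          gcongr
          exact (Nat.mod_lt _ hQ).le
  have h4 : ((X / Q : ℕ) : ℝ) * (∑ t ∈ range Q, u t) ≤ X * ((∑ t ∈ range Q, u t) / Q) := by
    rw [mul_div_assoc', mul_comm (X : ℝ), mul_div_assoc, mul_comm]
    gcongr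
    exact Nat.cast_div_le
  linarith

/-- The Selberg density sum. -/
noncomputable def s5G (ρ : ℕ) (P : Finset ℕ) (z : ℕ) : ℝ :=
  ∑ S ∈ P.powerset with ∏ p ∈ S, p ≤ z, ∏ p ∈ S, ((ρ : ℝ) / ((p : ℝ) - ρ))

lemma s5_selberg (P : Finset ℕ) (hP : ∀ p ∈ P, p.Prime) (B : ℕ → ℕ → Prop)
    [∀ p t, Decidable (B p t)] (ρ : ℕ) (hρ : 0 < ρ) (hρP : ∀ p ∈ P, ρ < p)
    (hper : ∀ p ∈ P, ∀ t, B p (t + p) ↔ B p t)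
    (hcard : ∀ p ∈ P, ((range p).filter (B p)).card = ρ) (z X : ℕ) (hz : 1 ≤ z) :
    (((range X).filter (fun t => ∀ p ∈ P, ¬ B p t)).card : ℝ) ≤ X / s5G ρ P z + (z : ℝ) ^ 4 := by
  classical
  set 𝒮 := P.powerset.filter (fun S => ∏ p ∈ S, p ≤ z) with h𝒮
  set h : Finset ℕ → ℝ := fun S => ∏ p ∈ S, ((ρ : ℝ) / ((p : ℝ) - ρ)) with hh
  have hρR : (0 : ℝ) < ρ := by exact_mod_cast hρ
  have hpR : ∀ p ∈ P, (0 : ℝ) < (p : ℝ) - ρ := fun p hp => by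
    have : (ρ : ℝ) < p := by exact_mod_cast hρP p hp
    linarith
  have hG : s5G ρ P z = ∑ S ∈ 𝒮, h S := rfl
  have hmem : ∀ S ∈ 𝒮, S ⊆ P ∧ ∏ p ∈ S, p ≤ z := fun S hS => by
    simpa [h𝒮] using hS
  have hpos : ∀ S ∈ 𝒮, 0 < h S := fun S hS =>
    Finset.prod_pos fun p hp => div_pos hρR (hpR p ((hmem S hS).1 hp))
  have hGpos : 0 < s5G ρ P z := by
    rw [hG]
    apply Finset.sum_pos hpos
    exact ⟨∅, by simp [h𝒮, hz]⟩
  set G := s5G ρ P z with hGdef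
  let f : ℕ → ℕ → ℝ := fun p t => if B p t then -(((p : ℝ) - ρ) / ρ) else 1
  have hfper : ∀ p ∈ P, Function.Periodic (f p) p := by
    intro p hp t
    simp only [f, hper p hp t]
  have hfsum : ∀ p ∈ P, ∑ t ∈ range p, f p t = 0 := by
    intro p hp
    simp only [f]
    rw [Finset.sum_ite]
    have h2 := Finset.card_filter_add_card_filter_not (s := range p) (B p)
    rw [hcard p hp, card_range] at h2
    have h3 : (((range p).filter (fun t => ¬ B p t)).card : ℝ) = p - ρ := by
      have h4 : ((ρ + ((range p).filter (fun t => ¬ B p t)).card : ℕ) : ℝ) = p := by rw [h2]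
      push_cast at h4; linarith
    simp only [sum_const, nsmul_eq_mul, hcard p hp, h3]
    field_simp
    ring
  have hfsum2 : ∀ p ∈ P, ∑ t ∈ range p, (f p t) ^ 2 = p * (((p : ℝ) - ρ) / ρ) := by
    intro p hp
    simp only [f, ite_pow]
    rw [Finset.sum_ite]
    have h2 := Finset.card_filter_add_card_filter_not (s := range p) (B p)
    rw [hcard p hp, card_range] at h2
    have h3 : (((range p).filter (fun t => ¬ B p t)).card : ℝ) = p - ρ := by
      have h4 : ((ρ + ((range p).filter (fun t => ¬ B p t)).card : ℕ) : ℝ) = p := by rw [h2]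
      push_cast at h4; linarith
    simp only [sum_const, nsmul_eq_mul, hcard p hp, h3]
    field_simp
    ring
  have hfabs : ∀ p ∈ P, ∀ t, |f p t| ≤ p := by
    intro p hp t
    have hp1 : (1 : ℝ) ≤ p := by exact_mod_cast (hP p hp).one_lt.le
    have hρ1 : (1 : ℝ) ≤ ρ := by exact_mod_cast hρ
    simp only [f]
    split_ifs
    · rw [abs_neg, abs_of_nonneg (div_nonneg (hpR p hp).le hρR.le), div_le_iff₀ hρR]
      nlinarith
    · simpa using hp1
  let F : Finset ℕ → ℕ → ℝ := fun S t => ∏ p ∈ S, f p t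
  have hFabs : ∀ S ∈ 𝒮, ∀ t, |F S t| ≤ z := by
    intro S hS t
    simp only [F, Finset.abs_prod]
    calc ∏ p ∈ S, |f p t| ≤ ∏ p ∈ S, (p : ℝ) :=
          Finset.prod_le_prod (fun _ _ => abs_nonneg _)
            (fun p hp => hfabs p ((hmem S hS).1 hp) t)
      _ = ((∏ p ∈ S, p : ℕ) : ℝ) := by push_cast; rfl
      _ ≤ z := by exact_mod_cast (hmem S hS).2
  have hcorr : ∀ S ∈ 𝒮, ∀ S' ∈ 𝒮, ∑ t ∈ range X, F S t * F S' t
      ≤ (if S = S' then X * (h S)⁻¹ else 0) + (z : ℝ) ^ 4 := by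
    intro S hS S' hS'
    let g : ℕ → ℕ → ℝ := fun p t => (if p ∈ S then f p t else 1) * (if p ∈ S' then f p t else 1)
    have hUP : S ∪ S' ⊆ P := union_subset (hmem S hS).1 (hmem S' hS').1
    have hFF : ∀ t, F S t * F S' t = ∏ p ∈ S ∪ S', g p t := by
      intro t
      simp only [F, g, Finset.prod_mul_distrib]
      congr 1
      · rw [Finset.prod_ite_mem]; congr 1; ext; simp
      · rw [Finset.prod_ite_mem]; congr 1; ext; simp
    have hgper : ∀ p ∈ S ∪ S', Function.Periodic (g p) p := by
      intro p hp t
      simp only [g, hfper p (hUP hp) t]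
    have hper' := s5_prod_periodic (S ∪ S') g hgper
    have hsum := s5_crt_prod (S ∪ S') (fun p hp => hP p (hUP hp)) g hgper
    set Q := ∏ p ∈ S ∪ S', p with hQ
    have hQpos : 0 < Q := Finset.prod_pos fun p hp => (hP p (hUP hp)).pos
    have hQz : Q ≤ z * z := by
      calc Q ≤ Q * ∏ p ∈ S ∩ S', p := by
            apply Nat.le_mul_of_pos_right
            exact Finset.prod_pos fun p hp => (hP p (hUP (inter_subset_union hp))).pos
        _ = (∏ p ∈ S, p) * (∏ p ∈ S', p) := Finset.prod_union_inter
        _ ≤ z * z := Nat.mul_le_mul (hmem S hS).2 (hmem S' hS').2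
    have hbd : ∀ t, |∏ p ∈ S ∪ S', g p t| ≤ (z : ℝ) * z := by
      intro t
      rw [← hFF, abs_mul]
      exact mul_le_mul (hFabs S hS t) (hFabs S' hS' t) (abs_nonneg _) (by positivity)
    have hval : ∑ t ∈ range Q, ∏ p ∈ S ∪ S', g p t = if S = S' then Q * (h S)⁻¹ else 0 := by
      rw [hsum]
      split_ifs with hSS
      · subst hSS
        simp only [hh, hQ, union_self]
        rw [← Finset.prod_inv_distrib]
        push_cast
        rw [← Finset.prod_mul_distrib]
        apply Finset.prod_congr rfl
        intro p hp
        simp only [g, hp, if_true, ← pow_two]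
        rw [hfsum2 p ((hmem S hS).1 hp), inv_div]
      · have : ∃ p ∈ S ∪ S', ¬ (p ∈ S ∧ p ∈ S') := by
          by_contra! hcon
          apply hSS
          ext p
          constructor
          · intro hp; exact (hcon p (mem_union_left _ hp)).2
          · intro hp; exact (hcon p (mem_union_right _ hp)).1
        obtain ⟨p, hp, hnp⟩ := this
        apply Finset.prod_eq_zero hp
        rw [← hfsum p (hUP hp)]
        apply Finset.sum_congr rfl
        intro t _
        simp only [g]
        rcases mem_union.1 hp with h1 | h1
        · have : p ∉ S' := fun h2 => hnp ⟨h1, h2⟩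
          simp [h1, this]
        · have : p ∉ S := fun h2 => hnp ⟨h2, h1⟩
          simp [h1, this]
    have h0 : 0 ≤ ∑ t ∈ range Q, ∏ p ∈ S ∪ S', g p t := by
      rw [hval]
      split_ifs
      · have := hpos S hS; positivity
      · exact le_rfl
    have hinc := s5_incomplete _ Q hQpos hper' ((z : ℝ) * z) hbd h0 X
    simp_rw [hFF]
    refine hinc.trans ?_
    have hQR : (0 : ℝ) < Q := by exact_mod_cast hQpos
    have hQzR : (Q : ℝ) ≤ z * z := by exact_mod_cast hQz
    apply add_le_add
    · rw [hval]
      split_ifs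
      · rw [mul_div_cancel_left₀ _ hQR.ne']
      · simp
    · calc (Q : ℝ) * (z * z) ≤ (z * z) * (z * z) := by gcongr
        _ = (z : ℝ) ^ 4 := by ring
  have hle : (((range X).filter (fun t => ∀ p ∈ P, ¬ B p t)).card : ℝ)
      ≤ ∑ t ∈ range X, (∑ S ∈ 𝒮, h S / G * F S t) ^ 2 := by
    rw [Finset.card_eq_sum_ones, Finset.sum_filter]
    push_cast
    apply Finset.sum_le_sum
    intro t _
    split_ifs with ht
    · have : ∑ S ∈ 𝒮, h S / G * F S t = 1 := by
        have h1 : ∀ S ∈ 𝒮, h S / G * F S t = h S / G := by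
          intro S hS
          have : F S t = 1 := Finset.prod_eq_one fun p hp => by
            simp only [f, ht p ((hmem S hS).1 hp), if_false]
          rw [this, mul_one]
        rw [Finset.sum_congr rfl h1, ← Finset.sum_div, ← hG, div_self hGpos.ne']
      rw [this]; norm_num
    · positivity
  refine hle.trans ?_
  have hexp : ∑ t ∈ range X, (∑ S ∈ 𝒮, h S / G * F S t) ^ 2
      = ∑ S ∈ 𝒮, ∑ S' ∈ 𝒮, (h S / G) * (h S' / G) * ∑ t ∈ range X, F S t * F S' t := by
    simp_rw [pow_two, Finset.sum_mul_sum, Finset.mul_sum]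
    rw [Finset.sum_comm]
    apply Finset.sum_congr rfl; intro S _
    rw [Finset.sum_comm]
    apply Finset.sum_congr rfl; intro S' _
    apply Finset.sum_congr rfl; intro t _
    ring
  rw [hexp]
  have hGsum : ∑ S ∈ 𝒮, h S / G = 1 := by
    rw [← Finset.sum_div, ← hG, div_self hGpos.ne']
  calc ∑ S ∈ 𝒮, ∑ S' ∈ 𝒮, (h S / G) * (h S' / G) * ∑ t ∈ range X, F S t * F S' t
      ≤ ∑ S ∈ 𝒮, ∑ S' ∈ 𝒮, (h S / G) * (h S' / G) *
          ((if S = S' then X * (h S)⁻¹ else 0) + (z : ℝ) ^ 4) := by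
        apply Finset.sum_le_sum; intro S hS
        apply Finset.sum_le_sum; intro S' hS'
        have h1 := hpos S hS
        have h2 := hpos S' hS'
        exact mul_le_mul_of_nonneg_left (hcorr S hS S' hS') (by positivity)
    _ = X / G + (∑ S ∈ 𝒮, h S / G) * (∑ S ∈ 𝒮, h S / G) * (z : ℝ) ^ 4 := by
        simp_rw [mul_add, Finset.sum_add_distrib]
        congr 1
        · simp_rw [mul_ite, mul_zero]
          have : ∀ S ∈ 𝒮, (∑ S' ∈ 𝒮, if S = S' then (h S / G) * (h S' / G) * (X * (h S)⁻¹) else 0)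
              = h S / G * (X / G) := by
            intro S hS
            rw [Finset.sum_ite_eq, if_pos hS]
            have := (hpos S hS).ne'
            field_simp
          rw [Finset.sum_congr rfl this, ← Finset.sum_mul, hGsum, one_mul]
        · rw [Finset.sum_mul_sum, Finset.sum_mul]
          apply Finset.sum_congr rfl; intro S _
          rw [Finset.sum_mul]
    _ = X / G + (z : ℝ) ^ 4 := by rw [hGsum]; ring
lemma s5_union_sum (U : Finset ℕ) (u v : ℕ → ℝ) :
    ∑ x ∈ (U.powerset ×ˢ U.powerset) with x.1 ∪ x.2 = U, (∏ p ∈ x.1, u p) * (∏ p ∈ x.2, v p)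
      = ∏ p ∈ U, ((1 + u p) * v p + u p) := by
  classical
  rw [Finset.prod_add]
  have h1 : ∀ B ∈ U.powerset, (∏ p ∈ B, (1 + u p) * v p) * ∏ p ∈ U \ B, u p
      = ∑ C ∈ B.powerset, (∏ p ∈ C, u p) * (∏ p ∈ B, v p) * ∏ p ∈ U \ B, u p := by
    intro B _
    rw [Finset.prod_mul_distrib, ← Finset.sum_mul, ← Finset.sum_mul]
    congr 2
    rw [Finset.prod_one_add]
  rw [Finset.sum_congr rfl h1, Finset.sum_sigma']
  refine Finset.sum_bij' (fun x _ => ⟨x.2, x.1 ∩ x.2⟩) (fun y _ => ((U \ y.1) ∪ y.2, y.1)) ?_ ?_ ?_ ?_ ?_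
  · rintro ⟨A, B⟩ h
    simp only [mem_filter, mem_product, mem_powerset] at h
    simp only [mem_sigma, mem_powerset]
    exact ⟨h.1.2, inter_subset_right⟩
  · rintro ⟨B, C⟩ h
    simp only [mem_sigma, mem_powerset] at h
    simp only [mem_filter, mem_product, mem_powerset]
    refine ⟨⟨union_subset sdiff_subset (h.2.trans h.1), h.1⟩, ?_⟩
    ext x
    have h1 := @h.1 x
    have h2 := @h.2 x
    simp only [mem_union, Finset.mem_sdiff]
    tauto
  · rintro ⟨A, B⟩ h
    simp only [mem_filter, mem_product, mem_powerset] at h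
    simp only [Prod.mk.injEq, and_true]
    have h2 := h.2
    ext x
    have h3 : x ∈ A ∪ B ↔ x ∈ U := by rw [h2]
    simp only [mem_union, Finset.mem_sdiff, mem_inter] at *
    tauto
  · rintro ⟨B, C⟩ h
    simp only [mem_sigma, mem_powerset] at h
    simp only [Sigma.mk.injEq, heq_eq_eq, true_and]
    ext x
    have h2 := @h.2 x
    simp only [mem_union, Finset.mem_sdiff, mem_inter] at *
    tauto
  · rintro ⟨A, B⟩ h
    simp only [mem_filter, mem_product, mem_powerset] at h
    simp only
    have h2 : U \ B = A \ B := by rw [← h.2, union_sdiff_right]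
    rw [h2, ← Finset.prod_inter_mul_prod_sdiff A B u]
    ring

lemma s5G_succ (ρ : ℕ) (P : Finset ℕ) (hP : ∀ p ∈ P, ρ + 1 < p) (z y : ℕ) :
    s5G ρ P z * s5G 1 P y ≤ s5G (ρ + 1) P (z * y) := by
  classical
  unfold s5G
  rw [Finset.sum_mul_sum, ← Finset.sum_product']
  have hpR : ∀ p ∈ P, (ρ : ℝ) + 1 < p := fun p hp => by exact_mod_cast hP p hp
  have hu : ∀ p ∈ P, 0 ≤ (ρ : ℝ) / ((p : ℝ) - ρ) := fun p hp =>
    div_nonneg (by positivity) (by linarith [hpR p hp])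
  have hv : ∀ p ∈ P, 0 ≤ ((1 : ℕ) : ℝ) / ((p : ℝ) - (1 : ℕ)) := fun p hp =>
    div_nonneg (by positivity) (by
      have := hpR p hp
      have h3 : (0 : ℝ) ≤ ρ := by positivity
      push_cast; linarith)
  rw [← Finset.sum_fiberwise_of_maps_to (g := fun x : Finset ℕ × Finset ℕ => x.1 ∪ x.2)
    (t := P.powerset.filter (fun S => ∏ p ∈ S, p ≤ z * y))]
  · apply Finset.sum_le_sum
    intro U hU
    simp only [mem_filter, mem_powerset] at hU
    calc _ ≤ ∑ x ∈ (U.powerset ×ˢ U.powerset) with x.1 ∪ x.2 = U,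
          (∏ p ∈ x.1, ((ρ : ℝ) / ((p : ℝ) - ρ))) * (∏ p ∈ x.2, ((1 : ℕ) : ℝ) / ((p : ℝ) - (1 : ℕ))) := by
          apply Finset.sum_le_sum_of_subset_of_nonneg
          · rintro ⟨A, B⟩ h
            simp only [mem_filter, mem_product, mem_powerset] at h ⊢
            refine ⟨⟨?_, ?_⟩, h.2⟩
            · rw [← h.2]; exact subset_union_left
            · rw [← h.2]; exact subset_union_right
          · rintro ⟨A, B⟩ h _
            simp only [mem_filter, mem_product, mem_powerset] at h
            apply mul_nonneg
            · exact Finset.prod_nonneg fun p hp => hu p (hU.1 (h.1.1 hp))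
            · exact Finset.prod_nonneg fun p hp => hv p (hU.1 (h.1.2 hp))
      _ = _ := s5_union_sum U _ _
      _ ≤ _ := by
          apply Finset.prod_le_prod
          · intro p hp
            have h1 := hu p (hU.1 hp)
            have h2 := hv p (hU.1 hp)
            positivity
          · intro p hp
            have h1 := hpR p (hU.1 hp)
            have h0 : (0 : ℝ) ≤ ρ := by positivity
            have e1 : (0 : ℝ) < p - ρ := by linarith
            have e2 : (0 : ℝ) < p - 1 := by linarith
            have e3 : (0 : ℝ) < p - (ρ + 1) := by linarith
            push_cast
            have : (1 + (ρ : ℝ) / (p - ρ)) * (1 / (p - 1)) + ρ / (p - ρ)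
                = (p + ρ * (p - 1)) / ((p - ρ) * (p - 1)) := by
              field_simp; ring
            rw [this, div_le_div_iff₀ (by positivity) e3]
            nlinarith [mul_nonneg h0 e2.le, mul_nonneg h0 h0, mul_nonneg (mul_nonneg h0 h0) e2.le]
  · rintro ⟨A, B⟩ h
    simp only [mem_filter, mem_product, mem_powerset] at h ⊢
    refine ⟨union_subset h.1.1 h.2.1, ?_⟩
    calc ∏ p ∈ A ∪ B, p ≤ (∏ p ∈ A ∪ B, p) * ∏ p ∈ A ∩ B, p := by
          apply Nat.le_mul_of_pos_right
          exact Finset.prod_pos fun p hp =>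
            (Nat.zero_lt_of_lt (hP p (h.1.1 (inter_subset_left hp))))
      _ = (∏ p ∈ A, p) * (∏ p ∈ B, p) := Finset.prod_union_inter
      _ ≤ z * y := Nat.mul_le_mul h.1.2 h.2.2

lemma s5G_pow (ρ : ℕ) (P : Finset ℕ) (hP : ∀ p ∈ P, ρ < p ∧ 1 < p) (y : ℕ) :
    s5G 1 P y ^ ρ ≤ s5G ρ P (y ^ ρ) := by
  classical
  induction ρ with
  | zero =>
    simp only [pow_zero]
    unfold s5G
    have : (∅ : Finset ℕ) ∈ P.powerset.filter (fun S => ∏ p ∈ S, p ≤ 1) := by simp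
    calc (1 : ℝ) = ∏ p ∈ (∅ : Finset ℕ), (((0 : ℕ) : ℝ) / ((p : ℝ) - (0 : ℕ))) := by simp
      _ ≤ _ := Finset.single_le_sum (f := fun S : Finset ℕ => ∏ p ∈ S, (((0 : ℕ) : ℝ) / ((p : ℝ) - (0 : ℕ))))
          (fun S _ => Finset.prod_nonneg fun p _ => by simp) this
  | succ ρ ih =>
    have h1 := ih (fun p hp => ⟨by have := (hP p hp).1; omega, (hP p hp).2⟩)
    have h2 := s5G_succ ρ P (fun p hp => (hP p hp).1) (y ^ ρ) y
    rw [pow_succ, pow_succ]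
    refine le_trans ?_ h2
    apply mul_le_mul_of_nonneg_right h1
    unfold s5G
    apply Finset.sum_nonneg
    intro S hS
    simp only [mem_filter, mem_powerset] at hS
    refine Finset.prod_nonneg fun p hp => div_nonneg (by positivity) ?_
    have : (1 : ℝ) < p := by exact_mod_cast (hP p (hS.1 hp)).2
    push_cast; linarith

lemma s5_factored (S : Finset ℕ) (hS : ∀ p ∈ S, p.Prime) (N : Finset ℕ)
    (hN : ∀ n ∈ N, n ∈ Nat.factoredNumbers S) :
    ∑ n ∈ N, (1 : ℝ) / n ≤ ∏ p ∈ S, (1 - (1 : ℝ) / p)⁻¹ := by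
  classical
  let f : ℕ →* ℝ := ⟨⟨fun n => (1 : ℝ) / n, by simp⟩, by intro a b; simp [mul_comm]⟩
  have hf : ∀ {p : ℕ}, p.Prime → ‖f p‖ < 1 := by
    intro p hp
    have : (1 : ℝ) < p := by exact_mod_cast hp.one_lt
    simp only [f, MonoidHom.coe_mk, OneHom.coe_mk, norm_div, norm_one, RCLike.norm_natCast]
    rw [div_lt_one (by linarith)]; exact this
  have := (EulerProduct.summable_and_hasSum_factoredNumbers_prod_filter_prime_geometric hf S).2
  rw [Finset.filter_true_of_mem hS] at this
  have h2 := sum_le_hasSum (N.subtype (· ∈ Nat.factoredNumbers S)) (fun i _ => by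
    simp only [f, MonoidHom.coe_mk, OneHom.coe_mk]; positivity) this
  rw [Finset.sum_subtype_of_mem (f := fun n : ℕ => f n) hN] at h2
  exact h2

lemma s5_fiber (S : Finset ℕ) (hS : ∀ p ∈ S, p.Prime) (y : ℕ) :
    ∑ n ∈ Icc 1 y with n.primeFactors = S, (1 : ℝ) / n ≤ ∏ p ∈ S, (((1 : ℕ) : ℝ) / ((p : ℝ) - (1 : ℕ))) := by
  classical
  set d := ∏ p ∈ S, p with hd
  have hdpos : 0 < d := Finset.prod_pos fun p hp => (hS p hp).pos
  have hdvd : ∀ n ∈ (Icc 1 y).filter (fun n => n.primeFactors = S), d ∣ n := by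
    intro n hn
    simp only [mem_filter] at hn
    rw [hd, ← hn.2]
    exact Nat.prod_primeFactors_dvd n
  have hinj : Set.InjOn (fun n => n / d) ((Icc 1 y).filter (fun n => n.primeFactors = S) : Finset ℕ) := by
    intro a ha b hb hab
    obtain ⟨a', rfl⟩ := hdvd a ha
    obtain ⟨b', rfl⟩ := hdvd b hb
    simp only [Nat.mul_div_cancel_left _ hdpos] at hab
    rw [hab]
  have h1 := s5_factored S hS (((Icc 1 y).filter (fun n => n.primeFactors = S)).image (fun n => n / d)) (by
    intro m hm
    obtain ⟨n, hn, rfl⟩ := mem_image.1 hm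
    have hdn := hdvd n hn
    simp only [mem_filter, mem_Icc] at hn
    have hn0 : n ≠ 0 := by omega
    apply Nat.mem_factoredNumbers_of_dvd _ (Nat.div_dvd_of_dvd hdn)
    apply Nat.mem_factoredNumbers_of_primeFactors_subset hn0
    rw [hn.2])
  rw [Finset.sum_image hinj] at h1
  have h3 : ∑ n ∈ Icc 1 y with n.primeFactors = S, (1 : ℝ) / n
      = (∏ p ∈ S, (1 : ℝ) / p) * ∑ n ∈ Icc 1 y with n.primeFactors = S, (1 : ℝ) / (n / d : ℕ) := by
    rw [Finset.mul_sum]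
    apply Finset.sum_congr rfl
    intro n hn
    obtain ⟨a, rfl⟩ := hdvd n hn
    rw [Nat.mul_div_cancel_left _ hdpos, hd]
    push_cast
    rw [Finset.prod_div_distrib]
    simp [mul_comm]
  rw [h3]
  calc _ ≤ (∏ p ∈ S, (1 : ℝ) / p) * ∏ p ∈ S, (1 - (1 : ℝ) / p)⁻¹ :=
        mul_le_mul_of_nonneg_left h1 (Finset.prod_nonneg fun p _ => by positivity)
    _ = _ := by
        rw [← Finset.prod_mul_distrib]
        apply Finset.prod_congr rfl
        intro p hp
        have : (1 : ℝ) < p := by exact_mod_cast (hS p hp).one_lt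
        have h4 : (p : ℝ) - 1 ≠ 0 := by linarith
        have h5 : (p : ℝ) ≠ 0 := by linarith
        have h6 : (1 - 1 / (p : ℝ)) = (p - 1) / p := by field_simp
        rw [h6]; push_cast
        field_simp

lemma s5G_one (D : Finset ℕ) (hD : ∀ p ∈ D, p.Prime) (y : ℕ) (hy : 0 < y) :
    Real.log y ≤ (∏ p ∈ D, (1 - (1 : ℝ) / p)⁻¹) *
      s5G 1 ((Icc 1 y).filter (fun p => p.Prime ∧ p ∉ D)) y := by
  classical
  have hlog : Real.log y ≤ ∑ n ∈ Icc 1 y, (1 : ℝ) / n := by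
    have h1 := log_add_one_le_harmonic y
    have h2 : ((harmonic y : ℚ) : ℝ) = ∑ n ∈ Icc 1 y, (1 : ℝ) / n := by
      rw [harmonic_eq_sum_Icc]; push_cast; simp
    rw [← h2]
    refine le_trans ?_ h1
    apply Real.log_le_log (by exact_mod_cast hy)
    push_cast; linarith
  refine hlog.trans ?_
  set hw : ℕ → ℝ := fun p => ((1 : ℕ) : ℝ) / ((p : ℝ) - (1 : ℕ)) with hhw
  have hwpos : ∀ p : ℕ, p.Prime → 0 < hw p := fun p hp => by
    have : (1 : ℝ) < p := by exact_mod_cast hp.one_lt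
    simp only [hhw]; push_cast
    apply div_pos one_pos; linarith
  have hDprod : ∏ p ∈ D, (1 - (1 : ℝ) / p)⁻¹ = ∑ A ∈ D.powerset, ∏ p ∈ A, hw p := by
    rw [← Finset.prod_one_add]
    apply Finset.prod_congr rfl
    intro p hp
    have : (1 : ℝ) < p := by exact_mod_cast (hD p hp).one_lt
    have h4 : (p : ℝ) - 1 ≠ 0 := by linarith
    have h5 : (p : ℝ) ≠ 0 := by linarith
    have h6 : (1 - 1 / (p : ℝ)) = (p - 1) / p := by field_simp
    simp only [hhw]
    rw [h6]; push_cast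
    field_simp; ring
  rw [hDprod]
  set 𝒮 := ((Icc 1 y).filter Nat.Prime).powerset.filter (fun S => ∏ p ∈ S, p ≤ y) with h𝒮
  rw [← Finset.sum_fiberwise_of_maps_to (g := Nat.primeFactors) (t := 𝒮)]
  · have h1 : ∀ S ∈ 𝒮, ∑ n ∈ Icc 1 y with n.primeFactors = S, (1 : ℝ) / n ≤ ∏ p ∈ S, hw p := by
      intro S hS
      apply s5_fiber
      intro p hp
      simp only [h𝒮, mem_filter, mem_powerset] at hS
      exact (mem_filter.1 (hS.1 hp)).2
    refine (Finset.sum_le_sum h1).trans ?_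
    unfold s5G
    rw [Finset.sum_mul_sum, ← Finset.sum_product']
    have hinj : Set.InjOn (fun S : Finset ℕ => (S ∩ D, S \ D)) (𝒮 : Set (Finset ℕ)) := by
      intro A _ B _ hAB
      simp only [Prod.mk.injEq] at hAB
      ext x
      have e1 : x ∈ A ∩ D ↔ x ∈ B ∩ D := by rw [hAB.1]
      have e2 : x ∈ A \ D ↔ x ∈ B \ D := by rw [hAB.2]
      simp only [mem_inter, Finset.mem_sdiff] at e1 e2
      tauto
    have h2 : ∑ S ∈ 𝒮, ∏ p ∈ S, hw p
        = ∑ x ∈ 𝒮.image (fun S : Finset ℕ => (S ∩ D, S \ D)), (∏ p ∈ x.1, hw p) * (∏ p ∈ x.2, hw p) := by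
      rw [Finset.sum_image hinj]
      apply Finset.sum_congr rfl
      intro S _
      rw [Finset.prod_inter_mul_prod_sdiff]
    rw [h2]
    apply Finset.sum_le_sum_of_subset_of_nonneg
    · intro x hx
      obtain ⟨S, hS, rfl⟩ := mem_image.1 hx
      simp only [h𝒮, mem_filter, mem_powerset] at hS
      simp only [mem_product, mem_filter, mem_powerset]
      refine ⟨inter_subset_right, ?_, ?_⟩
      · intro p hp
        have hp' := Finset.mem_sdiff.1 hp
        have h3 := mem_filter.1 (hS.1 hp'.1)
        simp only [mem_filter]
        exact ⟨h3.1, h3.2, hp'.2⟩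
      · refine le_trans ?_ hS.2
        apply Finset.prod_le_prod_of_subset_of_one_le' sdiff_subset
        intro p hp _
        exact (mem_filter.1 (hS.1 hp)).2.one_lt.le
    · rintro ⟨A, B⟩ h _
      simp only [mem_product, mem_filter, mem_powerset] at h
      apply mul_nonneg
      · exact Finset.prod_nonneg fun p hp => (hwpos p (hD p (h.1 hp))).le
      · refine Finset.prod_nonneg fun p hp => (hwpos p ?_).le
        exact (mem_filter.1 (h.2.1 hp)).2.1
  · intro n hn
    simp only [mem_Icc] at hn
    simp only [h𝒮, mem_filter, mem_powerset]
    refine ⟨?_, ?_⟩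
    · intro p hp
      have := Nat.mem_primeFactors.1 hp
      simp only [mem_filter, mem_Icc]
      exact ⟨⟨this.1.one_lt.le, (Nat.le_of_dvd (by omega) this.2.1).trans hn.2⟩, this.1⟩
    · exact (Nat.le_of_dvd (by omega) (Nat.prod_primeFactors_dvd n)).trans hn.2

lemma s5_tuple_card (ρ W p : ℕ) (hp : p.Prime) (hpW : ¬ p ∣ W) (c : Fin ρ → ℕ)
    (hc : ∀ i j, c i ≡ c j [MOD p] → i = j) :
    ((range p).filter (fun t => ∃ i, p ∣ W * t + c i)).card = ρ := by
  classical
  have : Fact p.Prime := ⟨hp⟩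
  have hW0 : (W : ZMod p) ≠ 0 := by
    rwa [Ne, ZMod.natCast_eq_zero_iff]
  let g : Fin ρ → ℕ := fun i => (-(c i : ZMod p) / W).val
  have hg : Function.Injective g := by
    intro i j hij
    have h1 := ZMod.val_injective p hij
    have h2 : (c i : ZMod p) = c j := by
      field_simp at h1
      simpa using h1
    exact hc i j ((ZMod.natCast_eq_natCast_iff _ _ _).1 h2)
  have : (range p).filter (fun t => ∃ i, p ∣ W * t + c i) = univ.image g := by
    ext t
    simp only [mem_filter, mem_range, mem_image, mem_univ, true_and]
    have key : ∀ i, p ∣ W * t + c i ↔ (t : ZMod p) = -(c i : ZMod p) / W := by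
      intro i
      rw [← ZMod.natCast_eq_zero_iff]
      push_cast
      rw [eq_div_iff hW0, eq_neg_iff_add_eq_zero, mul_comm]
    constructor
    · rintro ⟨ht, i, hi⟩
      refine ⟨i, ?_⟩
      simp only [g]
      rw [← (key i).1 hi, ZMod.val_natCast_of_lt ht]
    · rintro ⟨i, rfl⟩
      refine ⟨ZMod.val_lt _, i, ?_⟩
      rw [key]
      simp [g]
  rw [this, Finset.card_image_of_injective _ hg]
  simp

lemma s5_tuple (ρ W : ℕ) (hρ : 0 < ρ) (c : Fin ρ → ℕ) (D : Finset ℕ) (hD : ∀ p ∈ D, p.Prime)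
    (hW : ∀ p, p.Prime → p ∣ W → p ∈ D) (hs : ∀ p, p.Prime → p ≤ ρ → p ∈ D)
    (hc : ∀ i j, i ≠ j → ∀ p, p.Prime → c i ≡ c j [MOD p] → p ∈ D) (Y X : ℕ) (hY : 2 ≤ Y) :
    (((range X).filter (fun t => ∀ i, (W * t + c i).Prime ∧ Y < W * t + c i)).card : ℝ)
      ≤ X * ((∏ p ∈ D, (1 - (1 : ℝ) / p)⁻¹) / Real.log Y) ^ ρ + ((Y : ℝ) ^ ρ) ^ 4 := by
  classical
  set P := (Icc 1 Y).filter (fun p => p.Prime ∧ p ∉ D) with hP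
  have hPm : ∀ p ∈ P, p ≤ Y ∧ p.Prime ∧ p ∉ D := by
    intro p hp
    simp only [hP, mem_filter, mem_Icc] at hp
    exact ⟨hp.1.2, hp.2⟩
  have hPρ : ∀ p ∈ P, ρ < p := fun p hp => by
    by_contra hcon
    exact (hPm p hp).2.2 (hs p (hPm p hp).2.1 (by omega))
  have h1 := s5_selberg P (fun p hp => (hPm p hp).2.1) (fun p t => ∃ i, p ∣ W * t + c i) ρ hρ hPρ
    (by
      intro p hp t
      apply exists_congr
      intro i
      have : W * (t + p) + c i = (W * t + c i) + p * W := by ring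
      rw [this]
      exact (Nat.dvd_add_left (dvd_mul_right p W)))
    (by
      intro p hp
      convert s5_tuple_card ρ W p (hPm p hp).2.1 (fun h => (hPm p hp).2.2 (hW p (hPm p hp).2.1 h)) c ?_
      intro i j hij
      by_contra hne
      exact (hPm p hp).2.2 (hc i j hne p (hPm p hp).2.1 hij)) (Y ^ ρ) X (Nat.one_le_pow _ _ (by omega))
  have h2 := s5G_pow ρ P (fun p hp => ⟨hPρ p hp, (hPm p hp).2.1.one_lt⟩) Y
  have h3 := s5G_one D hD Y (by omega)
  rw [← hP] at h3
  set E := ∏ p ∈ D, (1 - (1 : ℝ) / p)⁻¹ with hE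
  have hEpos : 0 < E := Finset.prod_pos fun p hp => by
    have : (1 : ℝ) < p := by exact_mod_cast (hD p hp).one_lt
    apply inv_pos.2
    rw [sub_pos, div_lt_one (by linarith)]; exact this
  have hlog : 0 < Real.log Y := Real.log_pos (by exact_mod_cast (by omega : 1 < Y))
  have h4 : (Real.log Y / E) ^ ρ ≤ s5G ρ P (Y ^ ρ) := by
    refine le_trans ?_ h2
    apply pow_le_pow_left₀ (by positivity)
    rw [div_le_iff₀ hEpos, mul_comm]; exact h3
  have h5 : (X : ℝ) / s5G ρ P (Y ^ ρ) ≤ X * (E / Real.log Y) ^ ρ := by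
    rw [div_eq_mul_inv]
    apply mul_le_mul_of_nonneg_left _ (by positivity)
    calc (s5G ρ P (Y ^ ρ))⁻¹ ≤ ((Real.log Y / E) ^ ρ)⁻¹ := inv_anti₀ (by positivity) h4
      _ = (E / Real.log Y) ^ ρ := by rw [← inv_pow, inv_div]
  have h6 : (((range X).filter (fun t => ∀ i, (W * t + c i).Prime ∧ Y < W * t + c i)).card : ℝ)
      ≤ (((range X).filter (fun t => ∀ p ∈ P, ¬ ∃ i, p ∣ W * t + c i)).card : ℝ) := by
    norm_cast
    apply Finset.card_le_card
    intro t ht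
    simp only [mem_filter] at ht ⊢
    refine ⟨ht.1, ?_⟩
    rintro p hp ⟨i, hi⟩
    have h7 := ht.2 i
    have h8 := hPm p hp
    have := (Nat.prime_dvd_prime_iff_eq h8.2.1 h7.1).1 hi
    omega
  push_cast at h1
  linarith [h6, h1, h5]

lemma s5_tuple' (ρ W w H : ℕ) (hρ : 0 < ρ) (hW0 : 0 < W) (hw : 2 ≤ w) (hρw : ρ ≤ w)
    (hWw : ∀ p, p.Prime → p ≤ w → p ∣ W)
    (he : ∀ N : ℕ, w ^ N ≤ H ^ (ρ * ρ) → (((1 - (1 : ℝ) / w)⁻¹) ^ N) ^ ρ ≤ 2)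
    (c : Fin ρ → ℕ) (hc : Function.Injective c) (hcH : ∀ i j, c i ≤ c j + H) (Y X : ℕ) (hY : 2 ≤ Y) (hH : 0 < H) :
    (((range X).filter (fun t => ∀ i, (W * t + c i).Prime ∧ Y < W * t + c i)).card : ℝ)
      ≤ X * (2 * (W / (W.totient * Real.log Y)) ^ ρ) + ((Y : ℝ) ^ ρ) ^ 4 := by
  classical
  set Δ : ℕ := ∏ x : Fin ρ × Fin ρ, (if x.1 = x.2 then 1 else Nat.dist (c x.1) (c x.2)) with hΔ
  have hdist : ∀ a b : ℕ, a ≤ b + H → b ≤ a + H → Nat.dist a b ≤ H := by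
    intro a b h1 h2; unfold Nat.dist; omega
  have hdpos : ∀ x : Fin ρ × Fin ρ, 0 < (if x.1 = x.2 then 1 else Nat.dist (c x.1) (c x.2)) := by
    intro x
    split_ifs with h
    · exact one_pos
    · have : c x.1 ≠ c x.2 := fun h2 => h (hc h2)
      exact Nat.dist_pos_of_ne this
  have hΔpos : 0 < Δ := Finset.prod_pos fun x _ => hdpos x
  have hΔle : Δ ≤ H ^ (ρ * ρ) := by
    calc Δ ≤ ∏ x : Fin ρ × Fin ρ, H := by
          apply Finset.prod_le_prod' 
          intro x _
          split_ifs
          · exact hH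
          · exact hdist _ _ (hcH _ _) (hcH _ _)
      _ = H ^ (ρ * ρ) := by simp
  set D := W.primeFactors ∪ (Δ.primeFactors \ W.primeFactors) with hD
  have hDp : ∀ p ∈ D, p.Prime := by
    intro p hp
    simp only [hD, mem_union, Finset.mem_sdiff] at hp
    rcases hp with h | h
    · exact Nat.prime_of_mem_primeFactors h
    · exact Nat.prime_of_mem_primeFactors h.1
  have hDW : ∀ p, p.Prime → p ∣ W → p ∈ D := fun p hp h =>
    mem_union_left _ (Nat.mem_primeFactors.2 ⟨hp, h, hW0.ne'⟩)
  have hmain := s5_tuple ρ W hρ c D hDp hDW (fun p hp h => hDW p hp (hWw p hp (h.trans hρw)))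
    (by
      intro i j hij p hp hmod
      have h1 : p ∣ Δ := by
        have h2 : p ∣ (if (i, j).1 = (i, j).2 then 1 else Nat.dist (c (i, j).1) (c (i, j).2)) := by
          simp only [hij, if_false]
          unfold Nat.dist
          rcases le_total (c i) (c j) with h | h
          · rw [Nat.sub_eq_zero_of_le h, zero_add]
            exact (Nat.modEq_iff_dvd' h).1 hmod
          · rw [Nat.sub_eq_zero_of_le h, add_zero]
            exact (Nat.modEq_iff_dvd' h).1 hmod.symm
        exact h2.trans (Finset.dvd_prod_of_mem
          (fun x : Fin ρ × Fin ρ => if x.1 = x.2 then 1 else Nat.dist (c x.1) (c x.2)) (mem_univ (i, j)))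
      have h3 : p ∈ Δ.primeFactors := Nat.mem_primeFactors.2 ⟨hp, h1, hΔpos.ne'⟩
      by_cases h4 : p ∈ W.primeFactors
      · exact mem_union_left _ h4
      · exact mem_union_right _ (Finset.mem_sdiff.2 ⟨h3, h4⟩)) Y X hY
  refine hmain.trans ?_
  have hE1 : ∏ p ∈ W.primeFactors, (1 - (1 : ℝ) / p)⁻¹ = W / W.totient := by
    have h1 := Nat.totient_eq_mul_prod_factors W
    have h2 : (W.totient : ℝ) = W * ∏ p ∈ W.primeFactors, (1 - (1 : ℝ) / p) := by
      have : ((W.totient : ℚ) : ℝ) = ((W * ∏ p ∈ W.primeFactors, (1 - (p : ℚ)⁻¹) : ℚ) : ℝ) := by rw [h1]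
      push_cast at this
      simpa using this
    rw [Finset.prod_inv_distrib, h2]
    have hW : (W : ℝ) ≠ 0 := by exact_mod_cast hW0.ne'
    rw [div_mul_eq_div_div, div_self hW, one_div]
  set V := Δ.primeFactors \ W.primeFactors with hV
  have hVw : ∀ p ∈ V, p.Prime ∧ w ≤ p := by
    intro p hp
    have h1 := Finset.mem_sdiff.1 hp
    have h2 := Nat.mem_primeFactors.1 h1.1
    refine ⟨h2.1, ?_⟩
    by_contra hcon
    exact h1.2 (Nat.mem_primeFactors.2 ⟨h2.1, hWw p h2.1 (by omega), hW0.ne'⟩)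
  have hwR : (2 : ℝ) ≤ w := by exact_mod_cast hw
  have hE2 : ∏ p ∈ V, (1 - (1 : ℝ) / p)⁻¹ ≤ ((1 - (1 : ℝ) / w)⁻¹) ^ V.card := by
    rw [← Finset.prod_const]
    apply Finset.prod_le_prod
    · intro p hp
      have : (1 : ℝ) < p := by exact_mod_cast (hVw p hp).1.one_lt
      apply inv_nonneg.2
      rw [sub_nonneg, div_le_one (by linarith)]; exact this.le
    intro p hp
    have h1 : (w : ℝ) ≤ p := by exact_mod_cast (hVw p hp).2
    have h2 : (1 : ℝ) / p ≤ 1 / w := one_div_le_one_div_of_le (by linarith) h1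
    have h3 : (1 : ℝ) / w < 1 := by rw [div_lt_one (by linarith)]; linarith
    apply inv_anti₀ <;> linarith
  have hcardV : w ^ V.card ≤ H ^ (ρ * ρ) := by
    calc w ^ V.card ≤ ∏ p ∈ V, p := Finset.pow_card_le_prod _ _ _ (fun p hp => (hVw p hp).2)
      _ ≤ ∏ p ∈ Δ.primeFactors, p := by
          apply Finset.prod_le_prod_of_subset_of_one_le' sdiff_subset
          intro p hp _
          exact (Nat.prime_of_mem_primeFactors hp).one_lt.le
      _ ≤ Δ := Nat.le_of_dvd hΔpos (Nat.prod_primeFactors_dvd Δ)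
      _ ≤ _ := hΔle
  have hE : ∏ p ∈ D, (1 - (1 : ℝ) / p)⁻¹ ≤ W / W.totient * ((1 - (1 : ℝ) / w)⁻¹) ^ V.card := by
    rw [hD, Finset.prod_union disjoint_sdiff, hE1]
    apply mul_le_mul_of_nonneg_left hE2 (by positivity)
  have hE0 : 0 ≤ ∏ p ∈ D, (1 - (1 : ℝ) / p)⁻¹ := Finset.prod_nonneg fun p hp => by
    have : (1 : ℝ) < p := by exact_mod_cast (hDp p hp).one_lt
    apply inv_nonneg.2
    rw [sub_nonneg, div_le_one (by linarith)]; exact this.le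
  have hlog : 0 < Real.log Y := Real.log_pos (by exact_mod_cast (by omega : 1 < Y))
  have h9 := he V.card hcardV
  gcongr
  calc ((∏ p ∈ D, (1 - (1 : ℝ) / p)⁻¹) / Real.log Y) ^ ρ
      ≤ ((W / W.totient * ((1 - (1 : ℝ) / w)⁻¹) ^ V.card) / Real.log Y) ^ ρ := by gcongr
    _ = (((1 - (1 : ℝ) / w)⁻¹) ^ V.card) ^ ρ * (W / (W.totient * Real.log Y)) ^ ρ := by
        rw [← mul_pow]; congr 1; rw [div_mul_eq_div_div]; ring
    _ ≤ 2 * (W / (W.totient * Real.log Y)) ^ ρ := by gcongr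

lemma s5_mono_card (k N : ℕ) :
    ((Fintype.piFinset (fun _ : Fin k => range (N + 1))).filter (fun u => Monotone u)).card
      ≤ (N + k).choose k := by
  classical
  rw [← card_range (N + k), ← Finset.card_powersetCard]
  have hsm : ∀ u : Fin k → ℕ, Monotone u → StrictMono (fun i : Fin k => u i + (i : ℕ)) := by
    intro u hu i j hij
    have := hu hij.le
    have h2 : (i : ℕ) < j := hij
    simp only; omega
  apply Finset.card_le_card_of_injOn (fun u => univ.image (fun i : Fin k => u i + (i : ℕ)))
  · intro u hu
    simp only [coe_filter, Fintype.mem_piFinset, mem_range, Set.mem_ofPred_eq] at hu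
    simp only [mem_coe, mem_powersetCard]
    refine ⟨?_, ?_⟩
    · intro x hx
      obtain ⟨i, _, rfl⟩ := mem_image.1 hx
      have := hu.1 i
      have := i.2
      simp only [mem_range]; omega
    · rw [Finset.card_image_of_injective _ (hsm u hu.2).injective]; simp
  · intro u hu v hv huv
    simp only [coe_filter, Fintype.mem_piFinset, mem_range, Set.mem_ofPred_eq] at hu hv
    have h1 : Set.range (fun i : Fin k => u i + (i : ℕ)) = Set.range (fun i : Fin k => v i + (i : ℕ)) := by
      have := congrArg (fun s : Finset ℕ => (s : Set ℕ)) huv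
      simpa using this
    have h2 := ((hsm u hu.2).range_inj (hsm v hv.2)).1 h1
    ext i
    have := congrFun h2 i
    simpa using this

/-- The n-th prime. -/
noncomputable abbrev s5p (n : ℕ) : ℕ := Nat.nth Nat.Prime n

lemma s5p_prime (n : ℕ) : (s5p n).Prime := Nat.prime_nth_prime n
lemma s5p_mono : StrictMono s5p := Nat.nth_strictMono Nat.infinite_setOfPred_prime

lemma s5_fibre (k W w H : ℕ) (hW0 : 0 < W) (hw : 2 ≤ w) (hρw : k + 1 ≤ w)
    (hWw : ∀ p, p.Prime → p ≤ w → p ∣ W)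
    (he : ∀ N : ℕ, w ^ N ≤ H ^ ((k + 1) * (k + 1)) → (((1 - (1 : ℝ) / w)⁻¹) ^ N) ^ (k + 1) ≤ 2)
    (Y x : ℕ) (hY : 2 ≤ Y) (hH : 0 < H) (𝒢 : Finset ℕ)
    (h𝒢 : ∀ n ∈ 𝒢, Y < s5p n ∧ s5p n ≤ x ∧ s5p (n + k) ≤ s5p n + H) (b : Fin (k + 1) → ZMod W) :
    ((𝒢.filter (fun n => ∀ i : Fin (k + 1), (s5p (n + i) : ZMod W) = b i)).card : ℝ)
      ≤ ((H / W + 1 + k).choose k : ℝ) *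
        ((x / W + 1 : ℕ) * (2 * (W / (W.totient * Real.log Y)) ^ (k + 1)) + ((Y : ℝ) ^ (k + 1)) ^ 4) := by
  classical
  have hNZ : NeZero W := ⟨hW0.ne'⟩
  set F := 𝒢.filter (fun n => ∀ i : Fin (k + 1), (s5p (n + i) : ZMod W) = b i) with hF
  set Bd : ℝ := (x / W + 1 : ℕ) * (2 * (W / (W.totient * Real.log Y)) ^ (k + 1)) + ((Y : ℝ) ^ (k + 1)) ^ 4 with hBd
  have hlog : 0 < Real.log Y := Real.log_pos (by exact_mod_cast (by omega : 1 < Y))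
  have hBd0 : 0 ≤ Bd := by positivity
  set 𝒯 := (Fintype.piFinset (fun _ : Fin k => range (H / W + 1 + 1))).filter (fun u => Monotone u) with h𝒯
  let U : ℕ → Fin k → ℕ := fun n i => s5p (n + i + 1) / W - s5p n / W
  have hmem : ∀ n ∈ F, s5p n ≤ x ∧ (∀ i ≤ k, Y < s5p (n + i) ∧ s5p n ≤ s5p (n + i) ∧ s5p (n + i) ≤ s5p n + H) ∧
      ∀ i : Fin (k + 1), s5p (n + i) % W = (b i).val := by
    intro n hn
    have h1 := mem_filter.1 hn
    have h2 := h𝒢 n h1.1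
    refine ⟨h2.2.1, ?_, ?_⟩
    · intro i hi
      have h3 : s5p n ≤ s5p (n + i) := s5p_mono.monotone (by omega)
      have h4 : s5p (n + i) ≤ s5p (n + k) := s5p_mono.monotone (by omega)
      exact ⟨by omega, h3, by omega⟩
    · intro i
      rw [← h1.2 i, ZMod.val_natCast]
  have hmaps : ∀ n ∈ F, U n ∈ 𝒯 := by
    intro n hn
    simp only [h𝒯, mem_filter, Fintype.mem_piFinset, mem_range]
    refine ⟨?_, ?_⟩
    · intro i
      have h1 := (hmem n hn).2.1 (i + 1) (by have := i.2; omega)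
      simp only [U]
      have h2 : s5p (n + i + 1) / W ≤ (s5p n + H) / W := Nat.div_le_div_right (by
        have := h1.2.2; rw [← add_assoc] at this; exact this)
      have h3 : (s5p n + H) / W ≤ s5p n / W + H / W + 1 := by
        have e1 := Nat.div_add_mod (s5p n) W
        have e2 := Nat.div_add_mod H W
        have e3 := Nat.mod_lt (s5p n) hW0
        have e4 := Nat.mod_lt H hW0
        have : (s5p n + H) / W < s5p n / W + H / W + 2 := by
          rw [Nat.div_lt_iff_lt_mul hW0]
          nlinarith
        exact Nat.le_of_lt_succ this
      clear_value 𝒯 F Bd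
      generalize s5p (n + i + 1) / W = a1 at h2 ⊢
      generalize (s5p n + H) / W = a2 at h2 h3
      generalize s5p n / W = a3 at h3 ⊢
      generalize H / W = a4 at h3 ⊢
      omega
    · intro i j hij
      simp only [U]
      apply Nat.sub_le_sub_right
      apply Nat.div_le_div_right
      apply s5p_mono.monotone
      have : (i : ℕ) ≤ j := hij
      omega
  have hfib : ∀ u ∈ 𝒯, ((F.filter (fun n => U n = u)).card : ℝ) ≤ Bd := by
    intro u _
    rcases Finset.eq_empty_or_nonempty (F.filter (fun n => U n = u)) with h0 | ⟨n₀, hn₀⟩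
    · rw [h0]; simpa using hBd0
    let c : Fin (k + 1) → ℕ := fun i => W * (Fin.cons 0 u : Fin (k + 1) → ℕ) i + (b i).val
    have hc : ∀ n ∈ F.filter (fun n => U n = u), ∀ i : Fin (k + 1), W * (s5p n / W) + c i = s5p (n + i) := by
      intro n hn i
      have h1 := mem_filter.1 hn
      have h2 := hmem n h1.1
      simp only [c]
      rw [← h2.2.2 i]
      have h3 := Nat.div_add_mod (s5p (n + i)) W
      have h4 : (Fin.cons 0 u : Fin (k + 1) → ℕ) i = s5p (n + i) / W - s5p n / W := by
        refine Fin.cases ?_ ?_ i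
        · simp
        · intro j
          rw [Fin.cons_succ, ← h1.2]
          simp [U, add_assoc]
      have h5 : s5p n / W ≤ s5p (n + i) / W := Nat.div_le_div_right (h2.2.1 i (by have := i.2; omega)).2.1
      rw [h4, ← add_assoc, ← mul_add, Nat.add_sub_cancel' h5]
      exact h3
    have hcinj : Function.Injective c := by
      intro i j hij
      have h1 := hc n₀ hn₀ i
      have h2 := hc n₀ hn₀ j
      rw [hij, h2] at h1
      have := s5p_mono.injective h1
      ext; omega
    have hcH : ∀ i j, c i ≤ c j + H := by
      intro i j
      have h1 := hc n₀ hn₀ i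
      have h2 := hc n₀ hn₀ j
      have h3 := (hmem n₀ (mem_filter.1 hn₀).1).2.1 i (by have := i.2; omega)
      have h4 := (hmem n₀ (mem_filter.1 hn₀).1).2.1 j (by have := j.2; omega)
      omega
    have hB := s5_tuple' (k + 1) W w H (by omega) hW0 hw hρw hWw he c hcinj hcH Y (x / W + 1) hY hH
    refine le_trans ?_ hB
    norm_cast
    apply Finset.card_le_card_of_injOn (fun n => s5p n / W)
    · intro n hn
      have h2 := hmem n (mem_filter.1 hn).1
      simp only [coe_filter, mem_range, Set.mem_ofPred_eq]
      refine ⟨Nat.lt_succ_of_le (Nat.div_le_div_right h2.1), ?_⟩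
      intro i
      rw [hc n hn i]
      exact ⟨s5p_prime _, (h2.2.1 i (by have := i.2; omega)).1⟩
    · intro n hn n' hn' hnn
      have h1 := hc n hn 0
      have h2 := hc n' hn' 0
      simp only at hnn
      rw [hnn, h2] at h1
      have := s5p_mono.injective h1
      simpa using this.symm
  rw [Finset.card_eq_sum_card_fiberwise (f := U) (t := 𝒯) hmaps]
  push_cast
  calc ∑ u ∈ 𝒯, ((F.filter (fun n => U n = u)).card : ℝ) ≤ ∑ u ∈ 𝒯, Bd := Finset.sum_le_sum hfib
    _ = (𝒯.card : ℝ) * Bd := by simp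
    _ ≤ _ := by
        apply mul_le_mul_of_nonneg_right _ hBd0
        exact_mod_cast s5_mono_card k (H / W + 1)

lemma s5_units_fibre (q W : ℕ) (hW0 : 0 < W) (hqW : q ∣ W) (a : (ZMod q)ˣ) [NeZero W] [NeZero q] :
    (univ.filter (fun b : (ZMod W)ˣ => ZMod.unitsMap hqW b = a)).card * q.totient = W.totient := by
  classical
  have hsurj := ZMod.unitsMap_surjective hqW
  have h1 : ∀ a' : (ZMod q)ˣ, (univ.filter (fun b : (ZMod W)ˣ => ZMod.unitsMap hqW b = a')).card
      = (univ.filter (fun b : (ZMod W)ˣ => ZMod.unitsMap hqW b = a)).card := by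
    intro a'
    exact MonoidHom.card_fiber_eq_of_mem_range (ZMod.unitsMap hqW) (hsurj a') (hsurj a)
  have h2 : (univ : Finset (ZMod W)ˣ).card = ∑ a' : (ZMod q)ˣ,
      (univ.filter (fun b : (ZMod W)ˣ => ZMod.unitsMap hqW b = a')).card :=
    Finset.card_eq_sum_card_fiberwise (fun _ _ => mem_univ _)
  simp_rw [h1] at h2
  rw [Finset.sum_const, card_univ, card_univ, ZMod.card_units_eq_totient, ZMod.card_units_eq_totient] at h2
  rw [h2, smul_eq_mul, mul_comm]

lemma s5_combine (k q W : ℕ) (hW0 : 0 < W) (hq : 0 < q) (hqW : q ∣ W) (𝒢 : Finset ℕ)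
    (h𝒢 : ∀ n ∈ 𝒢, W < s5p n) (Bd : ℝ) 
    (hfib : ∀ b : Fin (k + 1) → ZMod W,
      ((𝒢.filter (fun n => ∀ i : Fin (k + 1), (s5p (n + i) : ZMod W) = b i)).card : ℝ) ≤ Bd)
    (𝒜 : Finset (Fin (k + 1) → (ZMod q)ˣ))
    (h𝒜 : ∀ n ∈ 𝒢, ∃ a ∈ 𝒜, ∀ i : Fin (k + 1), (s5p (n + i) : ZMod q) = a i) :
    (𝒢.card : ℝ) * (q.totient : ℝ) ^ (k + 1) ≤ 𝒜.card * ((W.totient : ℝ) ^ (k + 1) * Bd) := by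
  classical
  have : NeZero W := ⟨hW0.ne'⟩
  have : NeZero q := ⟨hq.ne'⟩
  have hcop : ∀ n ∈ 𝒢, ∀ i : ℕ, Nat.Coprime (s5p (n + i)) W := by
    intro n hn i
    rw [(s5p_prime _).coprime_iff_not_dvd]
    intro hd
    have h1 := Nat.le_of_dvd hW0 hd
    have h2 := h𝒢 n hn
    have h3 : s5p n ≤ s5p (n + i) := s5p_mono.monotone (by omega)
    omega
  let f : ℕ → Fin (k + 1) → (ZMod W)ˣ := fun n i =>
    if h : Nat.Coprime (s5p (n + i)) W then ZMod.unitOfCoprime _ h else 1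
  have hf : ∀ n ∈ 𝒢, ∀ i, ((f n i : (ZMod W)ˣ) : ZMod W) = s5p (n + i) := by
    intro n hn i
    simp only [f, dif_pos (hcop n hn i), ZMod.coe_unitOfCoprime]
  set ℬ : Finset (Fin (k + 1) → (ZMod W)ˣ) :=
    𝒜.biUnion (fun a => Fintype.piFinset (fun i => univ.filter (fun b : (ZMod W)ˣ => ZMod.unitsMap hqW b = a i)))
    with hℬ
  have hmaps : ∀ n ∈ 𝒢, f n ∈ ℬ := by
    intro n hn
    obtain ⟨a, ha, hai⟩ := h𝒜 n hn
    simp only [hℬ, mem_biUnion, Fintype.mem_piFinset, mem_filter, mem_univ, true_and]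
    refine ⟨a, ha, ?_⟩
    intro i
    apply Units.ext
    rw [ZMod.unitsMap_val, hf n hn i, ← hai i]
    exact ZMod.cast_natCast hqW _
  have h1 : (𝒢.card : ℝ) ≤ ℬ.card * Bd := by
    rw [Finset.card_eq_sum_card_fiberwise (f := f) (t := ℬ) hmaps]
    push_cast
    rw [← nsmul_eq_mul, ← Finset.sum_const]
    apply Finset.sum_le_sum
    intro b _
    refine le_trans ?_ (hfib (fun i => (b i : ZMod W)))
    norm_cast
    apply Finset.card_le_card
    intro n hn
    simp only [mem_filter] at hn ⊢
    refine ⟨hn.1, ?_⟩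
    intro i
    rw [← hn.2, hf n hn.1 i]
  have hBd0 : 0 ≤ Bd := le_trans (by positivity) (hfib 0)
  have h2 : ℬ.card * q.totient ^ (k + 1) ≤ 𝒜.card * W.totient ^ (k + 1) := by
    calc ℬ.card * q.totient ^ (k + 1)
        ≤ (∑ a ∈ 𝒜, (Fintype.piFinset (fun i => univ.filter
            (fun b : (ZMod W)ˣ => ZMod.unitsMap hqW b = a i))).card) * q.totient ^ (k + 1) :=
          Nat.mul_le_mul_right _ Finset.card_biUnion_le
      _ = ∑ a ∈ 𝒜, W.totient ^ (k + 1) := by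
          rw [Finset.sum_mul]
          apply Finset.sum_congr rfl
          intro a _
          rw [Fintype.card_piFinset]
          have : q.totient ^ (k + 1) = ∏ i : Fin (k + 1), q.totient := by simp
          rw [this, ← Finset.prod_mul_distrib]
          simp_rw [s5_units_fibre q W hW0 hqW]
          simp
      _ = _ := by simp
  have h2R : (ℬ.card : ℝ) * (q.totient : ℝ) ^ (k + 1) ≤ 𝒜.card * (W.totient : ℝ) ^ (k + 1) := by
    exact_mod_cast h2
  calc (𝒢.card : ℝ) * (q.totient : ℝ) ^ (k + 1) ≤ (ℬ.card * Bd) * (q.totient : ℝ) ^ (k + 1) := by gcongr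
    _ = (ℬ.card * (q.totient : ℝ) ^ (k + 1)) * Bd := by ring
    _ ≤ (𝒜.card * (W.totient : ℝ) ^ (k + 1)) * Bd := by gcongr
    _ = _ := by ring

lemma s5_good (k J D : ℕ) (hk : 1 ≤ k) (hJ : 1 ≤ J) (hbig : 2 * (J * (k + D + 2)) ≤ 2 ^ J) :
    ∃ 𝒢 : Finset ℕ, (∀ n ∈ 𝒢, D ≤ n ∧ s5p n ≤ 2 ^ J ∧ s5p (n + k) ≤ s5p n + 4 * k * J) ∧
      2 ^ J ≤ 4 * (J * 𝒢.card) := by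
  classical
  set x := 2 ^ J with hx
  have hpi : x ≤ J * Nat.primeCounting x + J + 1 := by
    have h := Chebyshev.pi_ge x
    have hl2 : 0 < Real.log 2 := Real.log_pos (by norm_num)
    have hlx : Real.log (x : ℝ) = J * Real.log 2 := by
      rw [hx]; push_cast; rw [Real.log_pow]
    have hJ' : (1 : ℝ) ≤ J := by exact_mod_cast hJ
    have hlx1 : Real.log ((x : ℝ) + 1) ≤ (J + 1) * Real.log 2 := by
      have : ((J : ℝ) + 1) * Real.log 2 = Real.log ((2 : ℝ) ^ (J + 1)) := by
        rw [Real.log_pow]; push_cast; ring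
      rw [this]
      apply Real.log_le_log (by positivity)
      have : (1 : ℝ) ≤ 2 ^ J := one_le_pow₀ (by norm_num)
      rw [hx, pow_succ]; push_cast; linarith
    rw [hlx, div_le_iff₀ (by positivity)] at h
    have h2 : ((x : ℝ)) * Real.log 2 ≤ (J * Nat.primeCounting x + J + 1) * Real.log 2 := by nlinarith
    have h3 := le_of_mul_le_mul_right h2 hl2
    exact_mod_cast h3
  have hple : ∀ n, n < Nat.primeCounting x → s5p n ≤ x := by
    intro n hn
    by_contra hc
    push Not at hc
    have h1 : Nat.primeCounting' (x + 1) ≤ Nat.primeCounting' (s5p n) := Nat.monotone_primeCounting' hc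
    rw [Nat.primeCounting'_nth_eq] at h1
    rw [Nat.primeCounting_eq_primeCounting'_succ] at hn
    omega
  set N := Nat.primeCounting x - k with hN
  by_cases hkN : Nat.primeCounting x ≤ k + D
  · exfalso
    have : J * Nat.primeCounting x ≤ J * (k + D) := Nat.mul_le_mul_left _ hkN
    nlinarith
  push Not at hkN
  have hNk : N + k = Nat.primeCounting x := by omega
  set bad := (range N).filter (fun n => ¬ s5p (n + k) ≤ s5p n + 4 * k * J) with hbad
  have hbadc : 4 * (J * bad.card) ≤ x := by
    have h1 : ∑ n ∈ range N, s5p n + ∑ n ∈ bad, 4 * k * J ≤ ∑ n ∈ range N, s5p (n + k) := by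
      rw [hbad, Finset.sum_filter, ← Finset.sum_add_distrib]
      apply Finset.sum_le_sum
      intro n hn
      have : s5p n ≤ s5p (n + k) := s5p_mono.monotone (by omega)
      split_ifs with h <;> omega
    have h2 : ∑ n ∈ range N, s5p (n + k) + ∑ i ∈ range k, s5p i
        = ∑ n ∈ range N, s5p n + ∑ i ∈ range k, s5p (N + i) := by
      rw [← Finset.sum_range_add, add_comm N k, Finset.sum_range_add]
      rw [add_comm]
      congr 1
      apply Finset.sum_congr rfl
      intro n _
      rw [add_comm]
    have h3 : ∑ i ∈ range k, s5p (N + i) ≤ ∑ i ∈ range k, x := by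
      apply Finset.sum_le_sum
      intro i hi
      rw [mem_range] at hi
      exact hple _ (by omega)
    rw [Finset.sum_const, smul_eq_mul] at h1
    rw [Finset.sum_const, smul_eq_mul, card_range] at h3
    have h4 : k * (4 * (J * bad.card)) ≤ k * x := by
      have : bad.card * (4 * k * J) = k * (4 * (J * bad.card)) := by ring
      omega
    exact Nat.le_of_mul_le_mul_left h4 hk
  refine ⟨(Ico D N).filter (fun n => s5p (n + k) ≤ s5p n + 4 * k * J), ?_, ?_⟩
  · intro n hn
    rw [mem_filter, mem_Ico] at hn
    exact ⟨hn.1.1, hple n (by omega), hn.2⟩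
  · have h1 : (Ico D N).card ≤ ((Ico D N).filter (fun n => s5p (n + k) ≤ s5p n + 4 * k * J)).card + bad.card := by
      rw [← Finset.card_filter_add_card_filter_not (s := Ico D N) (fun n => s5p (n + k) ≤ s5p n + 4 * k * J)]
      apply Nat.add_le_add_left
      apply Finset.card_le_card
      apply Finset.filter_subset_filter
      intro n hn
      rw [mem_Ico] at hn
      exact mem_range.2 hn.2
    rw [Nat.card_Ico] at h1
    set g := ((Ico D N).filter (fun n => s5p (n + k) ≤ s5p n + 4 * k * J)).card
    have h2 : Nat.primeCounting x ≤ g + bad.card + k + D := by omega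
    have h3 : J * Nat.primeCounting x ≤ J * (g + bad.card + k + D) := Nat.mul_le_mul_left _ h2
    nlinarith

lemma s5_he (k w A : ℕ) (hw : 2 ^ (16 * (k + 1) ^ 3) ≤ w) (hA : A ≤ w) :
    ∀ N : ℕ, w ^ N ≤ (A * 16 ^ w) ^ ((k + 1) * (k + 1)) → (((1 - (1 : ℝ) / w)⁻¹) ^ N) ^ (k + 1) ≤ 2 := by
  intro N hN
  have hw1 : A ≤ 16 ^ w := hA.trans (Nat.lt_pow_self (by norm_num)).le
  have h1 : w ^ N ≤ 2 ^ (8 * w * ((k + 1) * (k + 1))) := by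
    calc w ^ N ≤ (A * 16 ^ w) ^ ((k + 1) * (k + 1)) := hN
      _ ≤ (16 ^ w * 16 ^ w) ^ ((k + 1) * (k + 1)) := by gcongr
      _ = _ := by
        have h16 : (16 : ℕ) ^ w * 16 ^ w = 2 ^ (8 * w) := by
          rw [← mul_pow, pow_mul]; norm_num
        rw [h16, ← pow_mul]
  have h2 : (2 : ℕ) ^ (16 * (k + 1) ^ 3 * N) ≤ 2 ^ (8 * w * ((k + 1) * (k + 1))) := by
    rw [pow_mul]
    exact le_trans (Nat.pow_le_pow_left hw N) h1
  have h3 := (Nat.pow_le_pow_iff_right (by norm_num : 1 < 2)).1 h2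
  have h4 : 2 * (N * (k + 1)) ≤ w := by
    have h5 : (8 * ((k + 1) * (k + 1))) * (2 * (N * (k + 1))) ≤ (8 * ((k + 1) * (k + 1))) * w := by
      nlinarith
    exact Nat.le_of_mul_le_mul_left h5 (by positivity)
  have hw2 : 2 ≤ w := by
    refine le_trans ?_ hw
    calc 2 = 2 ^ 1 := by norm_num
      _ ≤ _ := Nat.pow_le_pow_right (by norm_num) (by nlinarith [Nat.one_le_pow 3 (k + 1) (by omega)])
  have hw' : (2 : ℝ) ≤ w := by exact_mod_cast hw2
  rw [← pow_mul, inv_pow]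
  have h5 : (1 : ℝ) / 2 ≤ (1 - (1 : ℝ) / w) ^ (N * (k + 1)) := by
    have hB := one_add_mul_le_pow (a := -((1 : ℝ) / w)) (by
      have : (1 : ℝ) / w ≤ 1 := by rw [div_le_one (by positivity)]; linarith
      linarith) (N * (k + 1))
    rw [← sub_eq_add_neg] at hB
    refine le_trans ?_ hB
    have h6 : (2 : ℝ) * ((N * (k + 1) : ℕ) : ℝ) ≤ w := by exact_mod_cast h4
    have h7 : ((N * (k + 1) : ℕ) : ℝ) * (1 / w) ≤ 1 / 2 := by
      rw [mul_one_div, div_le_iff₀ (by positivity)]; linarith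
    linarith
  calc ((1 - (1 : ℝ) / w) ^ (N * (k + 1)))⁻¹ ≤ ((1 : ℝ) / 2)⁻¹ := by
        apply inv_anti₀ (by norm_num) h5
    _ = 2 := by norm_num

lemma s5_choose (k H W : ℕ) (hW : 0 < W) (hH : 20 * k * (k + 1) * W ≤ H) :
    ((H / W + 1 + k).choose k : ℝ) * k.factorial ≤ 2 * ((H : ℝ) / W) ^ k := by
  rcases Nat.eq_zero_or_pos k with rfl | hk
  · simp
  have h1 := Nat.choose_le_pow_div (α := ℝ) k (H / W + 1 + k)
  rw [le_div_iff₀ (by positivity)] at h1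
  refine h1.trans ?_
  have hW' : (0 : ℝ) < W := by exact_mod_cast hW
  have hk' : (0 : ℝ) < k := by exact_mod_cast hk
  set h : ℝ := (H : ℝ) / W with hh
  have hle : ((H / W : ℕ) : ℝ) ≤ h := Nat.cast_div_le
  have hhb : 20 * k * (k + 1) ≤ h := by
    rw [hh, le_div_iff₀ hW']; exact_mod_cast hH
  have h2 : ((H / W + 1 + k : ℕ) : ℝ) ≤ h * (1 + 1 / (2 * k)) := by
    push_cast
    have : 1 + (k : ℝ) ≤ h * (1 / (2 * k)) := by
      rw [mul_one_div, le_div_iff₀ (by positivity)]; nlinarith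
    linarith
  have hh0 : 0 ≤ h := by positivity
  calc ((H / W + 1 + k : ℕ) : ℝ) ^ k ≤ (h * (1 + 1 / (2 * k))) ^ k := by gcongr
    _ = (1 + 1 / (2 * (k : ℝ))) ^ k * h ^ k := by rw [mul_pow, mul_comm]
    _ ≤ 2 * h ^ k := by
      apply mul_le_mul_of_nonneg_right _ (by positivity)
      have h3 : (1 + 1 / (2 * (k : ℝ))) ≤ Real.exp (1 / (2 * (k : ℝ))) := by
        have := Real.add_one_le_exp (1 / (2 * (k : ℝ))); linarith
      calc (1 + 1 / (2 * (k : ℝ))) ^ k ≤ Real.exp (1 / (2 * (k : ℝ))) ^ k := by gcongr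
        _ = Real.exp (1 / 2) := by
          rw [← Real.exp_nat_mul]; congr 1; field_simp
        _ ≤ 2 := by
          have h4 : Real.exp (1 / 2) * Real.exp (1 / 2) = Real.exp 1 := by
            rw [← Real.exp_add]; norm_num
          have h5 := Real.exp_one_lt_d9
          nlinarith [Real.exp_pos (1 / 2)]

lemma s5_bound (k W T j x H : ℕ) (L Ch B1 Y4 : ℝ) (hW : 0 < W) (hT : 0 < T) (hTW : T ≤ W)
    (hj : 0 < j) (hL : 2 / 3 * (j : ℝ) ≤ L)
    (hH : H = 20 * k * (k + 1) * j)
    (hCh0 : 0 ≤ Ch) (hCh : Ch * k.factorial ≤ 2 * ((H : ℝ) / W) ^ k)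
    (hB1 : B1 ≤ 2 * x / W) (hY0 : 0 ≤ Y4) (hY4 : Y4 * (W * L ^ (k + 1)) ≤ x) :
    (T : ℝ) ^ (k + 1) * (Ch * (B1 * (2 * (W / (T * L)) ^ (k + 1)) + Y4)) * k.factorial * j
      ≤ 15 * (30 * k * (k + 1)) ^ k * x := by
  have hW' : (0 : ℝ) < W := by exact_mod_cast hW
  have hT' : (0 : ℝ) < T := by exact_mod_cast hT
  have hj' : (0 : ℝ) < j := by exact_mod_cast hj
  have hL0 : 0 < L := by linarith
  have hTW' : (T : ℝ) ≤ W := by exact_mod_cast hTW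
  have e1 : (T : ℝ) ^ (k + 1) * (B1 * (2 * (W / (T * L)) ^ (k + 1)) + Y4) ≤ 5 * (x / W * (W / L) ^ (k + 1)) := by
    have a1 : (T : ℝ) ^ (k + 1) * (B1 * (2 * (W / (T * L)) ^ (k + 1))) ≤ 4 * (x / W * (W / L) ^ (k + 1)) := by
      have : (T : ℝ) ^ (k + 1) * (B1 * (2 * (W / (T * L)) ^ (k + 1))) = B1 * (2 * (W / L) ^ (k + 1)) := by
        have : (T : ℝ) ^ (k + 1) * ((W / (T * L)) ^ (k + 1)) = (W / L) ^ (k + 1) := by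
          rw [← mul_pow]; congr 1; field_simp
        rw [← this]; ring
      rw [this]
      calc B1 * (2 * (W / L) ^ (k + 1)) ≤ (2 * x / W) * (2 * (W / L) ^ (k + 1)) := by gcongr
        _ = _ := by ring
    have a2 : (T : ℝ) ^ (k + 1) * Y4 ≤ x / W * (W / L) ^ (k + 1) := by
      calc (T : ℝ) ^ (k + 1) * Y4 ≤ (W : ℝ) ^ (k + 1) * Y4 := by gcongr
        _ = (Y4 * (W * L ^ (k + 1))) / W * (W / L) ^ (k + 1) := by
          rw [div_pow]; field_simp
        _ ≤ _ := by gcongr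
    rw [mul_add]; linarith
  have e2 : ((H : ℝ) / W) ^ k * (x / W * (W / L) ^ (k + 1)) * j ≤ 3 / 2 * (30 * k * (k + 1)) ^ k * x := by
    have b1 : (W : ℝ) / L ≤ W * (3 / 2) / j := by
      rw [div_le_div_iff₀ hL0 hj']; nlinarith
    calc ((H : ℝ) / W) ^ k * (x / W * (W / L) ^ (k + 1)) * j
        ≤ ((H : ℝ) / W) ^ k * (x / W * (W * (3 / 2) / j) ^ (k + 1)) * j := by gcongr
      _ = (((H : ℝ) / W) * (W * (3 / 2) / j)) ^ k * (x / W * (W * (3 / 2) / j)) * j := by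
        rw [mul_pow]; ring
      _ = (30 * k * (k + 1)) ^ k * (x / W * (W * (3 / 2) / j)) * j := by
        congr 3
        rw [hH]; push_cast; field_simp; ring
      _ = _ := by field_simp
  have hx0 : (0 : ℝ) ≤ x := by positivity
  calc (T : ℝ) ^ (k + 1) * (Ch * (B1 * (2 * (W / (T * L)) ^ (k + 1)) + Y4)) * k.factorial * j
      = (Ch * k.factorial) * ((T : ℝ) ^ (k + 1) * (B1 * (2 * (W / (T * L)) ^ (k + 1)) + Y4)) * j := by ring
    _ ≤ (Ch * k.factorial) * (5 * (x / W * (W / L) ^ (k + 1))) * j := by gcongr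
    _ ≤ (2 * ((H : ℝ) / W) ^ k) * (5 * (x / W * (W / L) ^ (k + 1))) * j := by gcongr
    _ = 10 * (((H : ℝ) / W) ^ k * (x / W * (W / L) ^ (k + 1)) * j) := by ring
    _ ≤ 10 * (3 / 2 * (30 * k * (k + 1)) ^ k * x) := by gcongr
    _ = _ := by ring

lemma s5_main (k q n0 : ℕ) (hk : 1 ≤ k) (hq : 0 < q) (𝒜 : Finset (Fin (k + 1) → (ZMod q)ˣ))
    (h𝒜 : ∀ n, n0 ≤ n → ∃ a ∈ 𝒜, ∀ i : Fin (k + 1), (s5p (n + i) : ZMod q) = a i) :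
    (q.totient : ℝ) ^ (k + 1) * k.factorial ≤ 𝒜.card * (300 * (k + 1) * (30 * k * (k + 1)) ^ k) := by
  classical
  obtain ⟨w, hw1, hw2, hw3, hw4⟩ : ∃ w : ℕ, 2 ^ (16 * (k + 1) ^ 3) ≤ w ∧ 40 * k * (k + 1) ≤ w ∧ q ≤ w ∧ n0 ≤ w :=
    by
    generalize 2 ^ (16 * (k + 1) ^ 3) = a1
    generalize 40 * k * (k + 1) = a2
    exact ⟨a1 + a2 + q + n0, by omega, by omega, by omega, by omega⟩
  have hkk : k + 1 ≤ k * (k + 1) := Nat.le_mul_of_pos_left _ hk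
  obtain ⟨j, hj⟩ : ∃ v : ℕ, v = 16 ^ w := ⟨_, rfl⟩
  have hw40 : 40 * (k + 1) ≤ w := by nlinarith
  have hwj : w < j := hj ▸ Nat.lt_pow_self (by norm_num)
  have hjpos : 0 < j := by omega
  obtain ⟨Y, hY⟩ : ∃ v : ℕ, v = 2 ^ j := ⟨_, rfl⟩
  have hjY : j < Y := hY ▸ Nat.lt_pow_self (by norm_num)
  obtain ⟨J, hJ⟩ : ∃ v : ℕ, v = 5 * (k + 1) * j := ⟨_, rfl⟩
  obtain ⟨x, hx⟩ : ∃ v : ℕ, v = 2 ^ J := ⟨_, rfl⟩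
  have hxY : x = Y ^ (5 * (k + 1)) := by rw [hx, hJ, hY, ← pow_mul, mul_comm]
  obtain ⟨W, hW⟩ : ∃ v : ℕ, v = q * primorial w := ⟨_, rfl⟩
  have hW0 : 0 < W := hW ▸ Nat.mul_pos hq (primorial_pos w)
  have hWj : W ≤ j := by
    have h1 : q ≤ 4 ^ w := hw3.trans (Nat.lt_pow_self (by norm_num)).le
    calc W ≤ 4 ^ w * 4 ^ w := hW ▸ Nat.mul_le_mul h1 (primorial_le_four_pow w)
      _ = j := by rw [← mul_pow, hj]; norm_num
  have hj2 : j ^ 2 ≤ Y := by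
    have : ∀ n : ℕ, 4 ≤ n → n ^ 2 ≤ 2 ^ n := by
      intro n hn
      induction n, hn using Nat.le_induction with
      | base => norm_num
      | succ n hn ih => rw [pow_succ 2 n]; nlinarith
    rw [hY]; exact this j (by omega)
  obtain ⟨H, hH⟩ : ∃ v : ℕ, v = 20 * k * (k + 1) * j := ⟨_, rfl⟩
  have hHJ : H = 4 * k * J := by rw [hH, hJ]; ring
  obtain ⟨D, hD⟩ : ∃ v : ℕ, v = Y + n0 := ⟨_, rfl⟩
  have hYx : Y ≤ x := by rw [hxY]; exact Nat.le_self_pow (by omega) _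
  obtain ⟨𝒢, h𝒢, hcard⟩ := s5_good k J D hk (by rw [hJ]; exact Nat.succ_le_of_lt (by positivity)) (by
    rw [← hx, hxY]
    calc 2 * (J * (k + D + 2)) ≤ 2 * ((5 * (k + 1) * j) * (4 * Y)) := by
          rw [hJ]
          gcongr
          omega
      _ = (40 * (k + 1)) * j * Y := by ring
      _ ≤ Y * Y * Y := by gcongr; omega
      _ = Y ^ 3 := by ring
      _ ≤ _ := Nat.pow_le_pow_right (by omega) (by omega))
  have hDn : ∀ n ∈ 𝒢, Y < s5p n := by
    intro n hn
    have := (h𝒢 n hn).1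
    have h2 := Nat.add_two_le_nth_prime n
    simp only [s5p]
    omega
  have hfib := s5_fibre k W w H hW0 (by omega) (by omega)
    (fun p hp hpw => hW ▸ Dvd.dvd.mul_left (by
      rw [primorial]
      exact Finset.dvd_prod_of_mem _ (by simp [hp]; omega)) q)
    (by rw [hH, hj]; exact s5_he k w (20 * k * (k + 1)) hw1 (by nlinarith)) Y x (by omega) (by rw [hH]; positivity) 𝒢
    (fun n hn => ⟨hDn n hn, by rw [hx]; exact (h𝒢 n hn).2.1, by rw [hHJ]; exact (h𝒢 n hn).2.2⟩)
  have hcomb := s5_combine k q W hW0 hq (Dvd.intro _ hW.symm) 𝒢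
    (fun n hn => by have := hDn n hn; omega) _ hfib 𝒜 (fun n hn => h𝒜 n (by have := (h𝒢 n hn).1; omega))
  have hjR : (0 : ℝ) < j := by exact_mod_cast hjpos
  have hWR : (0 : ℝ) < W := by exact_mod_cast hW0
  have hlog : Real.log (Y : ℝ) = j * Real.log 2 := by rw [hY]; push_cast; rw [Real.log_pow]
  have hl2a := Real.log_two_gt_d9
  have hl2b := Real.log_two_lt_d9
  have hL1 : 2 / 3 * (j : ℝ) ≤ Real.log Y := by rw [hlog]; nlinarith
  have hL2 : Real.log Y ≤ j := by rw [hlog]; nlinarith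
  have hb := s5_bound k W W.totient j x H (Real.log Y) ((H / W + 1 + k).choose k : ℝ) ((x / W + 1 : ℕ) : ℝ)
    (((Y : ℝ) ^ (k + 1)) ^ 4) hW0 (Nat.totient_pos.2 hW0) (Nat.totient_le W) hjpos hL1 hH (by positivity)
    (s5_choose k H W hW0 (by rw [hH]; gcongr))
    (by
      push_cast
      have h1 : ((x / W : ℕ) : ℝ) ≤ (x : ℝ) / W := Nat.cast_div_le
      have h2 : (1 : ℝ) ≤ (x : ℝ) / W := by
        rw [le_div_iff₀ hWR, one_mul]; exact_mod_cast (by omega : W ≤ x)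
      have h3 : 2 * (x : ℝ) / W = x / W + x / W := by ring
      rw [h3]; linarith) (by positivity)
    (by
      have h0 : (0 : ℝ) ≤ Real.log Y := by linarith [hL1, hjR]
      calc ((Y : ℝ) ^ (k + 1)) ^ 4 * (W * Real.log Y ^ (k + 1))
          ≤ ((Y : ℝ) ^ (k + 1)) ^ 4 * (j * (j : ℝ) ^ (k + 1)) := by
            gcongr
        _ ≤ ((Y : ℝ) ^ (k + 1)) ^ 4 * ((j : ℝ) ^ (k + 1) * (j : ℝ) ^ (k + 1)) := by
            gcongr
            exact le_self_pow₀ (by exact_mod_cast hjpos) (by omega)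
        _ = ((Y : ℝ) ^ (k + 1)) ^ 4 * ((j : ℝ) ^ 2) ^ (k + 1) := by ring
        _ ≤ ((Y : ℝ) ^ (k + 1)) ^ 4 * (Y : ℝ) ^ (k + 1) := by
            gcongr
            exact_mod_cast hj2
        _ = (x : ℝ) := by rw [hxY]; push_cast; ring)
  set Bd := (W.totient : ℝ) ^ (k + 1) * (((H / W + 1 + k).choose k : ℝ) *
        ((x / W + 1 : ℕ) * (2 * (W / (W.totient * Real.log Y)) ^ (k + 1)) + ((Y : ℝ) ^ (k + 1)) ^ 4)) with hBd
  have hx0 : (0 : ℝ) < x := by rw [hx]; positivity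
  have hcR : (x : ℝ) ≤ 20 * (k + 1) * j * 𝒢.card := by
    have : (x : ℝ) ≤ 4 * (J * 𝒢.card) := by rw [← hx] at hcard; exact_mod_cast hcard
    rw [hJ] at this; push_cast at this; linarith
  set Q := (q.totient : ℝ) ^ (k + 1) with hQ
  have hQ0 : 0 ≤ Q := by positivity
  have hfin : x * (Q * k.factorial) ≤ x * (𝒜.card * (300 * (k + 1) * (30 * k * (k + 1)) ^ k)) := by
    calc x * (Q * k.factorial) ≤ (20 * (k + 1) * j * 𝒢.card) * (Q * k.factorial) := by gcongr
      _ = (20 * (k + 1) * j * k.factorial) * (𝒢.card * Q) := by ring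
      _ ≤ (20 * (k + 1) * j * k.factorial) * (𝒜.card * Bd) := by gcongr
      _ = (20 * (k + 1) * 𝒜.card) * (Bd * k.factorial * j) := by ring
      _ ≤ (20 * (k + 1) * 𝒜.card) * (15 * (30 * k * (k + 1)) ^ k * x) := by gcongr
      _ = _ := by ring
  exact le_of_mul_le_mul_left hfin hx0

end

section
open Finset

lemma s5_K (m k : ℕ) (c : ℝ) (hk : 1 ≤ k) (hm : 100 * (k + 1) ≤ m) (hc0 : 0 < c) (hc1 : c < 1)
    (hfl : ⌊c * ((m : ℝ) - 1) / (((k + 1 : ℕ) : ℝ) - 1)⌋₊ ≠ 0) :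
    2 * (m : ℝ) * (8 ^ k * (k : ℝ) ^ (3 * k + 2)) ≤ (Kval m (k + 1) c : ℝ) ^ k * (k + 1).factorial := by
  have hk' : (0 : ℝ) < k := by exact_mod_cast hk
  have hm' : (1 : ℝ) < m := by exact_mod_cast (by omega : 1 < m)
  have hr1 : (((k + 1 : ℕ) : ℝ) - 1) = k := by push_cast; ring
  unfold Kval
  set fl := ⌊c * ((m : ℝ) - 1) / (((k + 1 : ℕ) : ℝ) - 1)⌋₊ with hfldef
  have hfl0 : (0 : ℝ) < fl := by exact_mod_cast Nat.pos_of_ne_zero hfl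
  have hflm : (fl : ℝ) ≤ m / k := by
    have h1 : (fl : ℝ) ≤ c * ((m : ℝ) - 1) / (((k + 1 : ℕ) : ℝ) - 1) :=
      Nat.floor_le (by rw [hr1]; apply div_nonneg _ hk'.le; apply mul_nonneg hc0.le; linarith)
    rw [hr1] at h1
    refine h1.trans ?_
    gcongr
    nlinarith
  set K := ⌈(Mval m (k + 1) : ℝ) / (fl : ℝ)⌉₊ with hK
  have h1 : (Mval m (k + 1) : ℝ) / fl ≤ K := Nat.le_ceil _
  set B : ℝ := (2 : ℝ) ^ (3 * (k + 1) - 2) * (((k + 1 : ℕ) : ℝ) - 1) ^ (2 * (k + 1) - 1) / ((k + 1).factorial : ℝ) with hB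
  set E : ℝ := (m : ℝ) * (((k + 1 : ℕ) : ℝ) - 1) + ((k + 1 : ℕ) : ℝ) with hE
  have hM : B ^ ((1 : ℝ) / (((k + 1 : ℕ) : ℝ) - 1)) * (m : ℝ) * E ^ ((1 : ℝ) / (((k + 1 : ℕ) : ℝ) - 1)) ≤ Mval m (k + 1) :=
    Nat.le_ceil _
  rw [hr1] at hM
  have hB' : B * (k + 1).factorial = 2 * 8 ^ k * (k : ℝ) ^ (2 * k + 1) := by
    rw [hB, hr1, div_mul_cancel₀ _ (by positivity)]
    rw [show 3 * (k + 1) - 2 = 3 * k + 1 by omega, show 2 * (k + 1) - 1 = 2 * k + 1 by omega, pow_succ (2 : ℝ), pow_mul]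
    rw [show (2 : ℝ) ^ 3 = 8 by norm_num]
    ring
  have hB0 : 0 ≤ B := by rw [hB, hr1]; positivity
  have hE0 : 0 ≤ E := by rw [hE, hr1]; positivity
  have hEm : m * (k : ℝ) ≤ E := by
    rw [hE, hr1]; linarith [(Nat.cast_nonneg (k + 1) : (0 : ℝ) ≤ ((k + 1 : ℕ) : ℝ))]
  set b := B ^ ((1 : ℝ) / (k : ℝ)) with hb
  set e := E ^ ((1 : ℝ) / (k : ℝ)) with he
  have hbk : b ^ k = B := by
    rw [hb, one_div]; exact Real.rpow_inv_natCast_pow hB0 (by omega)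
  have hek : e ^ k = E := by
    rw [he, one_div]; exact Real.rpow_inv_natCast_pow hE0 (by omega)
  have hb0 : 0 ≤ b := Real.rpow_nonneg hB0 _
  have he0 : 0 ≤ e := Real.rpow_nonneg hE0 _
  have h2 : k * (b * e) ≤ K := by
    refine le_trans ?_ h1
    rw [le_div_iff₀ hfl0]
    refine le_trans ?_ hM
    calc k * (b * e) * fl ≤ k * (b * e) * (m / k) := by gcongr
      _ = b * m * e := by field_simp
  have h3 : (k : ℝ) ^ k * (B * E) ≤ (K : ℝ) ^ k := by
    rw [← hbk, ← hek, ← mul_pow, ← mul_pow]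
    gcongr
  calc 2 * (m : ℝ) * (8 ^ k * (k : ℝ) ^ (3 * k + 2))
      = (k : ℝ) ^ k * (2 * 8 ^ k * (k : ℝ) ^ (2 * k + 1)) * (m * k) := by ring
    _ = (k : ℝ) ^ k * (B * (k + 1).factorial) * (m * k) := by rw [hB']
    _ ≤ (k : ℝ) ^ k * (B * (k + 1).factorial) * E := by gcongr
    _ = ((k : ℝ) ^ k * (B * E)) * (k + 1).factorial := by ring
    _ ≤ _ := by gcongr

lemma s5_fact (k : ℕ) (hk : 1 ≤ k) : (k + 1).factorial ≤ 2 * k ^ k := by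
  obtain ⟨l, rfl⟩ : ∃ l, k = l + 1 := ⟨k - 1, by omega⟩
  have h1 : (l + 1).factorial ≤ (l + 1) ^ l := by
    induction l with
    | zero => simp
    | succ l ih =>
      rw [Nat.factorial_succ (l + 1), pow_succ, mul_comm]
      apply Nat.mul_le_mul_right
      exact (ih (by omega)).trans (Nat.pow_le_pow_left (by omega) _)
  rw [Nat.factorial_succ, pow_succ]
  calc (l + 1 + 1) * (l + 1).factorial ≤ (2 * (l + 1)) * (l + 1) ^ l := Nat.mul_le_mul (by omega) h1
    _ = _ := by ring

lemma s5_small (k : ℕ) (hk : 2 ≤ k) : 8 ^ k ≤ 3 * k ^ (k + 8) := by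
  by_cases h : 8 ≤ k
  · calc 8 ^ k ≤ k ^ k := Nat.pow_le_pow_left h _
      _ ≤ k ^ (k + 8) := Nat.pow_le_pow_right (by omega) (by omega)
      _ ≤ _ := by omega
  · interval_cases k <;> norm_num

lemma s5_num (m k K : ℕ) (hk : 1 ≤ k) (hm : 100 * (k + 1) ≤ m)
    (hK : 2 * m * (8 ^ k * k ^ (3 * k + 2)) ≤ K ^ k * (k + 1).factorial) :
    2 * m * (300 * (k + 1) * (30 * k * (k + 1)) ^ k) ≤ K ^ (k + 4) * k.factorial := by
  have hf := s5_fact k hk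
  have hK1 : m * (8 * k ^ 2) ^ k ≤ K ^ k := by
    have h1 : (2 * k ^ k) * (m * (8 * k ^ 2) ^ k) ≤ (2 * k ^ k) * K ^ k := by
      calc (2 * k ^ k) * (m * (8 * k ^ 2) ^ k) = 2 * m * (8 ^ k * k ^ (3 * k)) := by
            rw [mul_pow, ← pow_mul]; ring
        _ ≤ 2 * m * (8 ^ k * k ^ (3 * k + 2)) := by
            gcongr <;> omega
        _ ≤ K ^ k * (k + 1).factorial := hK
        _ ≤ K ^ k * (2 * k ^ k) := by gcongr
        _ = _ := by ring
    exact Nat.le_of_mul_le_mul_left h1 (by positivity)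
  have hkey : 1200 * 8 ^ k ≤ k ^ k * K ^ 4 := by
    rcases Nat.lt_or_ge k 2 with h | h
    · have : k = 1 := by omega
      subst this
      have h10 : 10 ≤ K := by simp at hK1; omega
      have := Nat.pow_le_pow_left h10 4
      omega
    · have h8 : 8 * k ^ 2 ≤ K := by
        have : (8 * k ^ 2) ^ k ≤ K ^ k := le_trans (Nat.le_mul_of_pos_left _ (by omega)) hK1
        exact (Nat.pow_le_pow_iff_left (by omega)).1 this
      calc 1200 * 8 ^ k ≤ 1200 * (3 * k ^ (k + 8)) := by
            gcongr; exact s5_small k h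
        _ ≤ k ^ k * (8 * k ^ 2) ^ 4 := by
            have : k ^ k * (8 * k ^ 2) ^ 4 = 4096 * k ^ (k + 8) := by ring
            rw [this]; omega
        _ ≤ _ := by gcongr
  have hmain : (k + 1).factorial * (2 * m * (300 * (k + 1) * (30 * k * (k + 1)) ^ k))
      ≤ (k + 1).factorial * (K ^ (k + 4) * k.factorial) := by
    calc (k + 1).factorial * (2 * m * (300 * (k + 1) * (30 * k * (k + 1)) ^ k))
        = 2 * m * k.factorial * (300 * (k + 1) ^ 2 * (30 * k * (k + 1)) ^ k) := by
          rw [Nat.factorial_succ]; ring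
      _ ≤ 2 * m * k.factorial * (300 * (2 * k) ^ 2 * (30 * k * (2 * k)) ^ k) := by
          gcongr <;> omega
      _ = 2 * m * k.factorial * (60 ^ k * 1200 * k ^ (2 * k + 2)) := by
          have : (30 * k * (2 * k)) ^ k = 60 ^ k * k ^ (2 * k) := by
            rw [pow_mul, ← mul_pow]; congr 1; ring
          rw [this]; ring
      _ ≤ 2 * m * k.factorial * ((8 ^ k * (8 ^ k)) * 1200 * k ^ (2 * k + 2)) := by
          gcongr
          rw [← mul_pow]; gcongr; norm_num
      _ = 2 * m * k.factorial * (8 ^ k * k ^ (2 * k + 2)) * (1200 * 8 ^ k) := by ring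
      _ ≤ 2 * m * k.factorial * (8 ^ k * k ^ (2 * k + 2)) * (k ^ k * K ^ 4) := by gcongr
      _ = (2 * m * (8 ^ k * k ^ (3 * k + 2))) * (K ^ 4 * k.factorial) := by ring
      _ ≤ (K ^ k * (k + 1).factorial) * (K ^ 4 * k.factorial) := by gcongr
      _ = _ := by ring
  exact Nat.le_of_mul_le_mul_left hmain (Nat.factorial_pos _)

lemma s5_tendsto (q m : ℕ) (a : Fin m → (ZMod q)ˣ)
    (h : {n : ℕ | ∀ i : Fin m, ((s5p (n + (i : ℕ)) : ℕ) : ZMod q) = (a i : ZMod q)}.Infinite) :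
    Tendsto (consecCount q m a) atTop atTop := by
  have hfin : ∀ x : ℝ, {n : ℕ | (Nat.nth Nat.Prime n : ℝ) ≤ x ∧
    ∀ i : Fin m, ((Nat.nth Nat.Prime (n + (i : ℕ)) : ℕ) : ZMod q) = (a i : ZMod q)}.Finite := by
    intro x
    apply (Set.finite_Iic ⌊x⌋₊).subset
    intro n hn
    have h1 := hn.1
    have h2 := Nat.add_two_le_nth_prime n
    apply Nat.le_floor
    refine le_trans ?_ h1
    exact_mod_cast (by omega : n ≤ Nat.nth Nat.Prime n)
  rw [tendsto_atTop]
  intro N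
  obtain ⟨t, ht, htc⟩ := h.exists_subset_card_eq N
  rw [eventually_atTop]
  refine ⟨((∑ n ∈ t, s5p n : ℕ) : ℝ), ?_⟩
  intro x hx
  unfold consecCount
  rw [← htc, ← Set.ncard_coe_finset]
  apply Set.ncard_le_ncard _ (hfin x)
  intro n hn
  refine ⟨?_, ht hn⟩
  refine le_trans ?_ hx
  exact_mod_cast Finset.single_le_sum (f := s5p) (fun _ _ => Nat.zero_le _) hn

end

lemma s5_recur (q m k : ℕ) (hq : 0 < q) (hkm : k + 1 ≤ m) (hk : 1 ≤ k) :
    (q.totient : ℝ) ^ (k + 1) * k.factorial ≤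
      ({a : Fin m → (ZMod q)ˣ | Tendsto (consecCount q m a) atTop atTop}.ncard : ℝ) *
        (300 * (k + 1) * (30 * k * (k + 1)) ^ k) := by
  classical
  have : NeZero q := ⟨hq.ne'⟩
  set P : (Fin m → (ZMod q)ˣ) → Set ℕ := fun a =>
    {n : ℕ | ∀ i : Fin m, ((s5p (n + (i : ℕ)) : ℕ) : ZMod q) = (a i : ZMod q)} with hP
  set S : Finset (Fin m → (ZMod q)ˣ) := Finset.univ.filter (fun a => (P a).Infinite) with hS
  have hfin : (⋃ a ∈ {a | ¬ (P a).Infinite}, P a).Finite := by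
    apply Set.Finite.biUnion (Set.toFinite _)
    intro a ha
    exact Set.not_infinite.1 ha
  obtain ⟨n1, hn1⟩ := hfin.bddAbove
  have hrec : ∀ n, n1 + 1 + q ≤ n → ∃ a ∈ S, ∀ i : Fin m, ((s5p (n + (i : ℕ)) : ℕ) : ZMod q) = (a i : ZMod q) := by
    intro n hn
    have hcop : ∀ i : ℕ, Nat.Coprime (s5p (n + i)) q := by
      intro i
      rw [(s5p_prime _).coprime_iff_not_dvd]
      intro hd
      have h1 := Nat.le_of_dvd hq hd
      have h2 : n + i + 2 ≤ s5p (n + i) := Nat.add_two_le_nth_prime (n + i)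
      omega
    have hmem : n ∈ P (fun i => ZMod.unitOfCoprime _ (hcop i)) := by
      intro i
      simp
    refine ⟨fun i => ZMod.unitOfCoprime _ (hcop i), ?_, hmem⟩
    rw [hS, Finset.mem_filter]
    refine ⟨Finset.mem_univ _, ?_⟩
    by_contra hni
    have : n ≤ n1 := hn1 (Set.mem_biUnion (s := {a | ¬ (P a).Infinite}) hni hmem)
    omega
  have hmain := s5_main k q (n1 + 1 + q) hk hq
    (S.image (fun a => fun i : Fin (k + 1) => a (Fin.castLE hkm i))) (by
      intro n hn
      obtain ⟨a, ha, hai⟩ := hrec n hn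
      exact ⟨_, Finset.mem_image_of_mem _ ha, fun i => hai (Fin.castLE hkm i)⟩)
  refine hmain.trans ?_
  apply mul_le_mul_of_nonneg_right _ (by positivity)
  norm_cast
  refine Finset.card_image_le.trans ?_
  rw [← Set.ncard_coe_finset]
  apply Set.ncard_le_ncard _ (Set.toFinite _)
  intro a ha
  apply s5_tendsto
  exact (Finset.mem_filter.1 (Finset.mem_coe.1 ha)).2

theorem stmt5 (m r : ℕ) (hr : 2 ≤ r) (hrm : 100 * r ≤ m) (c : ℝ) (hc0 : 0 < c) (hc1 : c < 1)
    (q : ℕ) (hq : 0 < q) (hsq : Squarefree q) (hφ : Kval m r c ≤ q.totient) :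
    2 * (1 - c) * (m : ℝ) * ((Kval m r c : ℝ) ^ 5)⁻¹ *
        ((q.totient : ℝ) * ((q.totient : ℝ) - 1)) ≤
      ({a : Fin m → (ZMod q)ˣ | Tendsto (consecCount q m a) atTop atTop}.ncard : ℝ) := by
  obtain ⟨k, rfl⟩ : ∃ k, r = k + 1 := ⟨r - 1, by omega⟩
  have hk : 1 ≤ k := by omega
  by_cases hfl : ⌊c * ((m : ℝ) - 1) / (((k + 1 : ℕ) : ℝ) - 1)⌋₊ = 0
  · have hK0 : Kval m (k + 1) c = 0 := by
      unfold Kval; rw [hfl]; simp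
    rw [hK0]; simp
  have hK := s5_K m k c hk hrm hc0 hc1 hfl
  set K := Kval m (k + 1) c with hKdef
  have hnum := s5_num m k K hk hrm (by exact_mod_cast hK)
  have hrec := s5_recur q m k hq (by omega) hk
  set n := ({a : Fin m → (ZMod q)ˣ | Tendsto (consecCount q m a) atTop atTop}.ncard : ℝ) with hn
  have hn0 : 0 ≤ n := by positivity
  rcases Nat.eq_zero_or_pos K with hK0 | hKpos
  · rw [hK0]; simpa using hn0
  have hKR : (0 : ℝ) < K := by exact_mod_cast hKpos
  have hφ' : (K : ℝ) ≤ q.totient := by exact_mod_cast hφ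
  have hφ1 : (1 : ℝ) ≤ q.totient := by exact_mod_cast Nat.totient_pos.2 hq
  set F : ℝ := (q.totient : ℝ) with hF
  have hnumR : 2 * (m : ℝ) * (300 * (k + 1) * (30 * k * (k + 1)) ^ k) ≤ (K : ℝ) ^ (k + 4) * k.factorial := by
    exact_mod_cast hnum
  have hk' : (0 : ℝ) < k := by exact_mod_cast hk
  set C : ℝ := 300 * (k + 1) * (30 * k * (k + 1)) ^ k with hC
  have hC0 : 0 < C := by positivity
  have h1 : C * (2 * m * F ^ 2) ≤ C * ((K : ℝ) ^ 5 * n) := by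
    calc C * (2 * m * F ^ 2) = (2 * m * C) * F ^ 2 := by ring
      _ ≤ ((K : ℝ) ^ (k + 4) * k.factorial) * F ^ 2 := by gcongr
      _ = (K : ℝ) ^ 5 * (K : ℝ) ^ (k - 1) * k.factorial * F ^ 2 := by
          rw [← pow_add, show 5 + (k - 1) = k + 4 by omega]
      _ ≤ (K : ℝ) ^ 5 * F ^ (k - 1) * k.factorial * F ^ 2 := by gcongr
      _ = (K : ℝ) ^ 5 * (F ^ (k + 1) * k.factorial) := by
          rw [show F ^ (k + 1) = F ^ (k - 1) * F ^ 2 by rw [← pow_add]; congr 1; omega]; ring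
      _ ≤ (K : ℝ) ^ 5 * (n * C) := by gcongr
      _ = _ := by ring
  have h2 := le_of_mul_le_mul_left h1 hC0
  have h3 : 2 * (1 - c) * m * (F * (F - 1)) ≤ 2 * m * F ^ 2 := by
    have a1 : 0 ≤ F * (F - 1) := mul_nonneg (by linarith) (by linarith)
    have a2 : 2 * (1 - c) * m ≤ 2 * (m : ℝ) := by nlinarith [(Nat.cast_nonneg m : (0 : ℝ) ≤ m)]
    calc 2 * (1 - c) * m * (F * (F - 1)) ≤ 2 * m * (F * (F - 1)) := by gcongr
      _ ≤ 2 * m * F ^ 2 := by gcongr; nlinarith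
  calc 2 * (1 - c) * (m : ℝ) * ((K : ℝ) ^ 5)⁻¹ * (F * (F - 1))
      = (2 * (1 - c) * m * (F * (F - 1))) / (K : ℝ) ^ 5 := by rw [div_eq_mul_inv]; ring
    _ ≤ n := by
      rw [div_le_iff₀ (by positivity)]; linarith
end

section
/- There exists a constant C > 0 such that the following holds: if q is a squarefree positive integer with φ(q) > 8e² m log m, then for m sufficiently large, the number of m-tuples a ∈ ((ℤ/qℤ)^×)^m with π(x;q,a) → ∞ as x → ∞ is at least e^{-C m (log log m)/(log m)} · φ(q)^{m/log m}. -/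
open Filter

def Equi (X : ℕ) (g : ℕ → ℝ) (P : Finset ℕ) (A E : ℝ) : Prop :=
  ∀ M r : ℕ, 0 < M → (∀ p ∈ P, Nat.Coprime M p) →
    |∑ n ∈ Finset.range X with n ≡ r [MOD M], g n - A / M| ≤ E

noncomputable def trunc (P : Finset ℕ) (f : ℕ → ℝ) (b : ℕ) : ℝ :=
  ∑ D ∈ P.powerset with D.card ≤ b, ∏ p ∈ D, f p

lemma equi_one (X : ℕ) : Equi X (fun _ => 1) ∅ X 1 := by
  intro M r hM _
  have h := Nat.count_modEq_card X hM r
  rw [Nat.count_eq_card_filter_range] at h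
  rw [Finset.sum_const, nsmul_eq_mul, mul_one, h]
  have h1 : (X : ℝ) = M * (X / M : ℕ) + (X % M : ℕ) := by
    exact_mod_cast (Nat.div_add_mod X M).symm
  have hM' : (0:ℝ) < M := by exact_mod_cast hM
  have h2 : (X : ℝ) / M = (X / M : ℕ) + (X % M : ℕ) / M := by
    rw [eq_comm, eq_div_iff hM'.ne', add_mul, div_mul_cancel₀ _ hM'.ne']
    linarith
  have h3 : ((X % M : ℕ) : ℝ) / M ≤ 1 := by
    rw [div_le_one hM']; exact_mod_cast (Nat.mod_lt _ hM).le
  have h4 : 0 ≤ ((X % M : ℕ) : ℝ) / M := by positivity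
  rw [h2, abs_le]
  push_cast
  split_ifs <;> constructor <;> push_cast <;> linarith

lemma equi_mono {X : ℕ} {g : ℕ → ℝ} {P P' : Finset ℕ} {A E : ℝ} (h : Equi X g P A E)
    (hP : P ⊆ P') : Equi X g P' A E :=
  fun M r hM hc => h M r hM fun p hp => hc p (hP hp)

lemma equi_sum {X : ℕ} {ι : Type*} (s : Finset ι) (g : ι → ℕ → ℝ) (P : Finset ℕ) (A E : ι → ℝ)
    (h : ∀ i ∈ s, Equi X (g i) P (A i) (E i)) :
    Equi X (fun n => ∑ i ∈ s, g i n) P (∑ i ∈ s, A i) (∑ i ∈ s, E i) := by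
  intro M r hM hc
  rw [Finset.sum_comm, Finset.sum_div, ← Finset.sum_sub_distrib]
  exact (Finset.abs_sum_le_sum_abs _ _).trans (Finset.sum_le_sum fun i hi => h i hi M r hM hc)

lemma equi_const_mul {X : ℕ} {g : ℕ → ℝ} {P : Finset ℕ} {A E : ℝ} (h : Equi X g P A E)
    (c : ℝ) : Equi X (fun n => c * g n) P (c * A) (|c| * E) := by
  intro M r hM hc
  rw [← Finset.mul_sum, mul_div_assoc, ← mul_sub, abs_mul]
  exact mul_le_mul_of_nonneg_left (h M r hM hc) (abs_nonneg _)

lemma equi_prime {X : ℕ} {g : ℕ → ℝ} {P : Finset ℕ} {A E : ℝ} (h : Equi X g P A E)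
    {p : ℕ} (hp : p.Prime) (hpP : ∀ p' ∈ P, Nat.Coprime p p') (R : Finset ℕ)
    (hR : ∀ a ∈ R, a < p) :
    Equi X (fun n => g n * (if n % p ∈ R then 1 else 0)) (insert p P)
      (A * (R.card / p)) (E * R.card) := by
  intro M r hM hc
  have hMp : Nat.Coprime M p := hc p (Finset.mem_insert_self _ _)
  have key : ∀ a ∈ R, |∑ n ∈ Finset.range X with n ≡ r [MOD M], (if n % p = a then g n else 0)
      - A / (M * p : ℕ)| ≤ E := by
    intro a ha
    have := h (M * p) (Nat.chineseRemainder hMp r a) (Nat.mul_pos hM hp.pos) (by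
      intro p' hp'
      exact Nat.Coprime.mul_left (hc p' (Finset.mem_insert_of_mem hp')) (hpP p' hp'))
    rw [← Finset.sum_filter, Finset.filter_filter]
    convert this using 4
    refine Finset.filter_congr fun n _ => ?_
    have hcr := (Nat.chineseRemainder hMp r a).2
    constructor
    · rintro ⟨h1, h2⟩
      have h3 : n ≡ a [MOD p] := by
        rw [← h2]; exact (Nat.mod_modEq n p).symm
      exact (Nat.modEq_and_modEq_iff_modEq_mul hMp).1
        ⟨h1.trans hcr.1.symm, h3.trans hcr.2.symm⟩
    · intro h1
      obtain ⟨h2, h3⟩ := (Nat.modEq_and_modEq_iff_modEq_mul hMp).2 h1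
      refine ⟨h2.trans hcr.1, ?_⟩
      have h4 := h3.trans hcr.2
      rw [Nat.ModEq, Nat.mod_eq_of_lt (hR a ha)] at h4
      exact h4
  have e1 : ∑ n ∈ Finset.range X with n ≡ r [MOD M], g n * (if n % p ∈ R then (1:ℝ) else 0)
      = ∑ a ∈ R, ∑ n ∈ Finset.range X with n ≡ r [MOD M], (if n % p = a then g n else 0) := by
    rw [Finset.sum_comm]
    refine Finset.sum_congr rfl fun n _ => ?_
    rw [Finset.sum_ite_eq]; split_ifs <;> simp
  have e2 : A * (R.card / p) / M = ∑ a ∈ R, A / (M * p : ℕ) := by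
    rw [Finset.sum_const, nsmul_eq_mul]; push_cast
    have : (M:ℝ) ≠ 0 := by exact_mod_cast hM.ne'
    have : (p:ℝ) ≠ 0 := by exact_mod_cast hp.ne_zero
    field_simp
  rw [e1, e2, ← Finset.sum_sub_distrib]
  refine (Finset.abs_sum_le_sum_abs _ _).trans ((Finset.sum_le_sum key).trans ?_)
  rw [Finset.sum_const, nsmul_eq_mul, mul_comm]

lemma equi_set {X : ℕ} {g : ℕ → ℝ} {P : Finset ℕ} {A E : ℝ} (h : Equi X g P A E)
    (m : ℕ) (R : ℕ → Finset ℕ) (D : Finset ℕ) (hD : ∀ p ∈ D, p.Prime) (hP : ∀ p ∈ P, p.Prime)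
    (hDP : Disjoint D P) (hR : ∀ p ∈ D, ∀ a ∈ R p, a < p) (hRc : ∀ p ∈ D, (R p).card = m) :
    Equi X (fun n => g n * ∏ p ∈ D, (if n % p ∈ R p then 1 else 0)) (D ∪ P)
      (A * ∏ p ∈ D, ((m:ℝ) / p)) (E * ∏ p ∈ D, (m:ℝ)) := by
  classical
  induction D using Finset.induction_on with
  | empty => simpa using h
  | insert p D hpD ih =>
    rw [Finset.disjoint_insert_left] at hDP
    have ih' := ih (fun x hx => hD x (Finset.mem_insert_of_mem hx)) hDP.2
      (fun x hx => hR x (Finset.mem_insert_of_mem hx))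
      (fun x hx => hRc x (Finset.mem_insert_of_mem hx))
    have hpp := hD p (Finset.mem_insert_self _ _)
    have := equi_prime ih' hpp (by
      intro p' hp'
      rw [Nat.coprime_primes hpp]
      · rintro rfl
        rcases Finset.mem_union.1 hp' with h1 | h1
        · exact hpD h1
        · exact hDP.1 h1
      · rcases Finset.mem_union.1 hp' with h1 | h1
        · exact hD _ (Finset.mem_insert_of_mem h1)
        · exact hP _ h1) (R p) (hR p (Finset.mem_insert_self _ _))
    rw [hRc p (Finset.mem_insert_self _ _)] at this
    rw [Finset.insert_union]
    convert this using 1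
    · funext n; rw [Finset.prod_insert hpD]; ring
    · rw [Finset.prod_insert hpD]; ring
    · rw [Finset.prod_insert hpD]; ring

lemma equi_block {X : ℕ} {g : ℕ → ℝ} {P : Finset ℕ} {A E : ℝ} (h : Equi X g P A E)
    (m : ℕ) (R : ℕ → Finset ℕ) (D : Finset ℕ) (hD : ∀ p ∈ D, p.Prime) (hP : ∀ p ∈ P, p.Prime)
    (hDP : Disjoint D P) (hR : ∀ p ∈ D, ∀ a ∈ R p, a < p) (hRc : ∀ p ∈ D, (R p).card = m)
    (b : ℕ) :
    Equi X (fun n => g n * trunc D (fun p => -(if n % p ∈ R p then 1 else 0)) b) (D ∪ P)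
      (A * trunc D (fun p => -((m:ℝ) / p)) b) (E * trunc D (fun _ => (m:ℝ)) b) := by
  classical
  have := equi_sum (X := X) (D.powerset.filter (fun D' => D'.card ≤ b))
    (fun D' n => (-1) ^ D'.card * (g n * ∏ p ∈ D', (if n % p ∈ R p then 1 else 0))) (D ∪ P)
    (fun D' => (-1) ^ D'.card * (A * ∏ p ∈ D', ((m:ℝ) / p)))
    (fun D' => |(-1) ^ D'.card| * (E * ∏ p ∈ D', (m:ℝ))) (by
      intro D' hD'
      have hs : D' ⊆ D := Finset.mem_powerset.1 (Finset.mem_filter.1 hD').1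
      refine equi_const_mul ?_ _
      exact equi_mono (equi_set h m R D' (fun x hx => hD x (hs hx)) hP
        (Finset.disjoint_of_subset_left hs hDP) (fun x hx => hR x (hs hx))
        (fun x hx => hRc x (hs hx))) (Finset.union_subset_union_left hs))
  convert this using 1
  · funext n
    rw [trunc, Finset.mul_sum]
    refine Finset.sum_congr rfl fun D' _ => ?_
    rw [Finset.prod_neg]; ring
  · rw [trunc, Finset.mul_sum]
    refine Finset.sum_congr rfl fun D' _ => ?_
    rw [Finset.prod_neg]; ring
  · rw [trunc, Finset.mul_sum]
    refine Finset.sum_congr rfl fun D' _ => ?_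
    simp

lemma equi_levels (X : ℕ) (m : ℕ) (R : ℕ → Finset ℕ) (L : ℕ → Finset ℕ) (b : ℕ → ℕ) (J : ℕ)
    (hL : ∀ j, ∀ p ∈ L j, p.Prime) (hd : ∀ i j, i ≠ j → Disjoint (L i) (L j))
    (hR : ∀ j, ∀ p ∈ L j, ∀ a ∈ R p, a < p) (hRc : ∀ j, ∀ p ∈ L j, (R p).card = m) :
    Equi X (fun n => ∏ j ∈ Finset.range J, trunc (L j) (fun p => -(if n % p ∈ R p then 1 else 0)) (b j))
      ((Finset.range J).biUnion L)
      (X * ∏ j ∈ Finset.range J, trunc (L j) (fun p => -((m:ℝ) / p)) (b j))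
      (∏ j ∈ Finset.range J, trunc (L j) (fun _ => (m:ℝ)) (b j)) := by
  induction J with
  | zero => simpa using equi_one X
  | succ J ih =>
    have := equi_block ih m R (L J) (hL J) (by
      intro p hp
      obtain ⟨j, _, hj⟩ := Finset.mem_biUnion.1 hp
      exact hL j p hj) (by
      rw [Finset.disjoint_biUnion_right]
      intro i hi
      exact hd _ _ (by have := Finset.mem_range.1 hi; omega)) (hR J) (hRc J) (b J)
    simp only [Finset.prod_range_succ]
    rw [Finset.range_add_one, Finset.biUnion_insert]
    convert this using 1
    ring

lemma trunc_bonf (P : Finset ℕ) (S : ℕ → Prop) [DecidablePred S] (b : ℕ) :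
    (if ∀ p ∈ P, ¬ S p then (1:ℝ) else 0) ≤ trunc P (fun p => -(if S p then 1 else 0)) (2 * b) := by
  classical
  set Q := P.filter S with hQ
  have e : trunc P (fun p => -(if S p then (1:ℝ) else 0)) (2 * b) =
      ((∑ i ∈ Finset.range (2 * b + 1), ((-1) ^ i * (Q.card.choose i : ℤ)) : ℤ) : ℝ) := by
    have e1 : trunc P (fun p => -(if S p then (1:ℝ) else 0)) (2 * b) =
      ∑ D ∈ Q.powerset with D.card ≤ 2 * b, (-1:ℝ) ^ D.card := by
      unfold trunc
      symm
      have hsub : (Q.powerset.filter fun D => D.card ≤ 2 * b) ⊆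
          (P.powerset.filter fun D => D.card ≤ 2 * b) :=
        Finset.filter_subset_filter _ (Finset.powerset_mono.2 (Finset.filter_subset _ _))
      rw [← Finset.sum_subset hsub]
      · refine Finset.sum_congr rfl fun D hD => ?_
        rw [Finset.prod_neg, Finset.prod_eq_one, mul_one]
        intro p hp
        have := Finset.mem_powerset.1 (Finset.mem_filter.1 hD).1 hp
        rw [if_pos (Finset.mem_filter.1 this).2]
      · intro D hD hD'
        rw [Finset.mem_filter, Finset.mem_powerset] at hD hD'
        have : ¬ D ⊆ Q := fun h => hD' ⟨h, hD.2⟩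
        obtain ⟨p, hp, hpQ⟩ := Finset.not_subset.1 this
        apply Finset.prod_eq_zero hp
        rw [if_neg, neg_zero]
        intro hS
        exact hpQ (Finset.mem_filter.2 ⟨hD.1 hp, hS⟩)
    rw [e1]
    push_cast
    rw [← Finset.sum_fiberwise_of_maps_to (g := Finset.card) (t := Finset.range (2 * b + 1))]
    · refine Finset.sum_congr rfl fun i hi => ?_
      have : (Q.powerset.filter fun D => D.card ≤ 2 * b).filter (fun D => D.card = i) =
          Q.powersetCard i := by
        ext D
        have := Finset.mem_range.1 hi
        simp only [Finset.mem_filter, Finset.mem_powerset, Finset.mem_powersetCard]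
        constructor
        · rintro ⟨⟨h1, h2⟩, h3⟩; exact ⟨h1, h3⟩
        · rintro ⟨h1, h3⟩; exact ⟨⟨h1, by omega⟩, h3⟩
      rw [this, Finset.sum_congr rfl (g := fun _ => (-1:ℝ) ^ i), Finset.sum_const,
        Finset.card_powersetCard, nsmul_eq_mul, mul_comm]
      intro D hD
      rw [(Finset.mem_powersetCard.1 hD).2]
    · intro D hD
      have := (Finset.mem_filter.1 hD).2
      exact Finset.mem_range.2 (by omega)
  rw [e]
  rcases Nat.eq_zero_or_pos Q.card with h0 | h0
  · rw [h0, Finset.sum_range_succ']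
    simp only [Nat.choose_zero_succ]
    simp
    split_ifs <;> norm_num
  · obtain ⟨k, hk⟩ : ∃ k, Q.card = k + 1 := ⟨Q.card - 1, by omega⟩
    rw [hk, Int.alternating_sum_range_choose_eq_choose, if_neg]
    · rw [pow_mul]; norm_num
    · obtain ⟨p, hp⟩ := Finset.card_pos.1 h0
      intro h
      exact h p (Finset.mem_filter.1 hp).1 (Finset.mem_filter.1 hp).2

lemma sieve_abstract (X : ℕ) (m : ℕ) (R : ℕ → Finset ℕ) (L : ℕ → Finset ℕ) (b : ℕ → ℕ) (J : ℕ)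
    (hL : ∀ j, ∀ p ∈ L j, p.Prime) (hd : ∀ i j, i ≠ j → Disjoint (L i) (L j))
    (hR : ∀ j, ∀ p ∈ L j, ∀ a ∈ R p, a < p) (hRc : ∀ j, ∀ p ∈ L j, (R p).card = m)
    (M r : ℕ) (hM : 0 < M) (hMc : ∀ j, ∀ p ∈ L j, Nat.Coprime M p) (G : Finset ℕ)
    (hG : ∀ n ∈ G, n < X ∧ n ≡ r [MOD M] ∧ ∀ j < J, ∀ p ∈ L j, n % p ∉ R p) :
    (G.card : ℝ) ≤ X / M * ∏ j ∈ Finset.range J, trunc (L j) (fun p => -((m:ℝ) / p)) (2 * b j) +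
      ∏ j ∈ Finset.range J, trunc (L j) (fun _ => (m:ℝ)) (2 * b j) := by
  classical
  have h := equi_levels X m R L (fun j => 2 * b j) J hL hd hR hRc M r hM (by
      intro p hp
      obtain ⟨j, _, hj⟩ := Finset.mem_biUnion.1 hp
      exact hMc j p hj)
  have h1 := (abs_le.1 h).2
  have nonneg : ∀ n j, 0 ≤ trunc (L j) (fun p => -(if n % p ∈ R p then (1:ℝ) else 0)) (2 * b j) := by
    intro n j
    refine le_trans ?_ (trunc_bonf (L j) (fun p => n % p ∈ R p) (b j))
    split_ifs <;> norm_num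
  have h2 : (G.card : ℝ) ≤ ∑ n ∈ Finset.range X with n ≡ r [MOD M],
      ∏ j ∈ Finset.range J, trunc (L j) (fun p => -(if n % p ∈ R p then (1:ℝ) else 0)) (2 * b j) := by
    have hsub : G ⊆ (Finset.range X).filter (fun n => n ≡ r [MOD M]) := by
      intro n hn
      exact Finset.mem_filter.2 ⟨Finset.mem_range.2 (hG n hn).1, (hG n hn).2.1⟩
    refine le_trans ?_ (Finset.sum_le_sum_of_subset_of_nonneg hsub
      (fun n _ _ => Finset.prod_nonneg fun j _ => nonneg n j))
    rw [Finset.card_eq_sum_ones]; push_cast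
    refine Finset.sum_le_sum fun n hn => ?_
    refine Finset.one_le_prod ?_
    intro j hj
    have := trunc_bonf (L j) (fun p => n % p ∈ R p) (b j)
    rwa [if_pos ((hG n hn).2.2 j (Finset.mem_range.1 hj))] at this
  have e : (X:ℝ) * (∏ j ∈ Finset.range J, trunc (L j) (fun p => -((m:ℝ) / p)) (2 * b j)) / M =
    X / M * ∏ j ∈ Finset.range J, trunc (L j) (fun p => -((m:ℝ) / p)) (2 * b j) := by ring
  rw [e] at h1
  linarith

lemma exp_neg_le_one_sub {g : ℝ} (h0 : 0 ≤ g) (h1 : g ≤ 1 / 2) : Real.exp (-(2 * g)) ≤ 1 - g := by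
  rw [Real.exp_neg]
  have h2 : 1 + 2 * g ≤ Real.exp (2 * g) := by linarith [Real.add_one_le_exp (2 * g)]
  have h3 : (Real.exp (2 * g))⁻¹ ≤ (1 + 2 * g)⁻¹ := inv_anti₀ (by linarith) h2
  refine h3.trans ?_
  rw [inv_le_iff_one_le_mul₀ (by linarith)]
  nlinarith

lemma trunc_main (P : Finset ℕ) (m : ℕ) (hm : 1 ≤ m) (hP : ∀ p ∈ P, 2 * m ≤ p) (s : ℝ)
    (hs : ∑ p ∈ P, (m:ℝ) / p ≤ s) (b : ℕ) :
    |trunc P (fun p => -((m:ℝ) / p)) b| ≤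
      (1 + Real.exp (4 * s) / 2 ^ b) * ∏ p ∈ P, (1 - (m:ℝ) / p) := by
  classical
  have hg0 : ∀ p ∈ P, 0 ≤ (m:ℝ) / p := fun p _ => by positivity
  have hg1 : ∀ p ∈ P, (m:ℝ) / p ≤ 1 / 2 := by
    intro p hp
    have h2 : (2:ℝ) * m ≤ p := by exact_mod_cast hP p hp
    have hm' : (1:ℝ) ≤ m := by exact_mod_cast hm
    rw [div_le_div_iff₀ (by linarith) (by norm_num)]
    linarith
  have full : ∏ p ∈ P, (1 - (m:ℝ) / p) = ∑ D ∈ P.powerset, ∏ p ∈ D, -((m:ℝ) / p) := by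
    simp only [sub_eq_add_neg]
    rw [Finset.prod_one_add]
  have split : ∑ D ∈ P.powerset, ∏ p ∈ D, -((m:ℝ) / p) = trunc P (fun p => -((m:ℝ) / p)) b +
      ∑ D ∈ P.powerset with ¬ D.card ≤ b, ∏ p ∈ D, -((m:ℝ) / p) := by
    unfold trunc
    rw [Finset.sum_filter_add_sum_filter_not]
  have tail : |∑ D ∈ P.powerset with ¬ D.card ≤ b, ∏ p ∈ D, -((m:ℝ) / p)| ≤
      Real.exp (2 * s) / 2 ^ b := by
    refine (Finset.abs_sum_le_sum_abs _ _).trans ?_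
    have t1 : ∀ D ∈ P.powerset, 0 ≤ (∏ p ∈ D, (2 * ((m:ℝ) / p))) / 2 ^ b := by
      intro D hD
      exact div_nonneg (Finset.prod_nonneg fun p hp => by positivity) (by positivity)
    calc _ ≤ ∑ D ∈ P.powerset with ¬ D.card ≤ b, (∏ p ∈ D, (2 * ((m:ℝ) / p))) / 2 ^ b := by
          refine Finset.sum_le_sum fun D hD => ?_
          rw [Finset.mem_filter] at hD
          rw [Finset.prod_mul_distrib, Finset.prod_const, Finset.prod_neg]
          have hx : 0 ≤ ∏ p ∈ D, ((m:ℝ) / p) := Finset.prod_nonneg fun p hp => by positivity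
          have hy : (1:ℝ) ≤ 2 ^ D.card / 2 ^ b := by
            rw [one_le_div (by positivity)]
            exact pow_le_pow_right₀ (by norm_num) (by omega)
          have hz : |(-1:ℝ) ^ D.card * ∏ p ∈ D, ((m:ℝ) / p)| ≤ ∏ p ∈ D, ((m:ℝ) / p) := by
            rw [abs_mul, abs_pow, abs_neg, abs_one, one_pow, one_mul, abs_of_nonneg hx]
          calc _ ≤ _ := hz
            _ ≤ (2 ^ D.card / 2 ^ b) * ∏ p ∈ D, ((m:ℝ) / p) := le_mul_of_one_le_left hx hy
            _ = _ := by ring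
      _ ≤ ∑ D ∈ P.powerset, (∏ p ∈ D, (2 * ((m:ℝ) / p))) / 2 ^ b :=
          Finset.sum_le_sum_of_subset_of_nonneg (Finset.filter_subset _ _)
            (fun D hD _ => t1 D hD)
      _ = (∏ p ∈ P, (1 + 2 * ((m:ℝ) / p))) / 2 ^ b := by
          rw [← Finset.sum_div, Finset.prod_one_add]
      _ ≤ _ := by
          gcongr
          calc ∏ p ∈ P, (1 + 2 * ((m:ℝ) / p)) ≤ ∏ p ∈ P, Real.exp (2 * ((m:ℝ) / p)) :=
                Finset.prod_le_prod (fun p hp => by positivity)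
                  (fun p hp => by linarith [Real.add_one_le_exp (2 * ((m:ℝ) / p))])
            _ = Real.exp (2 * ∑ p ∈ P, ((m:ℝ) / p)) := by
                rw [← Real.exp_sum, Finset.mul_sum]
            _ ≤ _ := Real.exp_le_exp.2 (by linarith)
  have lower : Real.exp (-(2 * s)) ≤ ∏ p ∈ P, (1 - (m:ℝ) / p) := by
    calc Real.exp (-(2 * s)) ≤ Real.exp (∑ p ∈ P, -(2 * ((m:ℝ) / p))) := by
          apply Real.exp_le_exp.2
          rw [Finset.sum_neg_distrib, ← Finset.mul_sum]; linarith
      _ = ∏ p ∈ P, Real.exp (-(2 * ((m:ℝ) / p))) := Real.exp_sum _ _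
      _ ≤ _ := Finset.prod_le_prod (fun p hp => (Real.exp_pos _).le)
          (fun p hp => exp_neg_le_one_sub (hg0 p hp) (hg1 p hp))
  have fin : Real.exp (2 * s) / 2 ^ b ≤
      Real.exp (4 * s) / 2 ^ b * ∏ p ∈ P, (1 - (m:ℝ) / p) := by
    calc Real.exp (2 * s) / 2 ^ b = Real.exp (4 * s) / 2 ^ b * Real.exp (-(2 * s)) := by
          rw [div_mul_eq_mul_div, ← Real.exp_add]; ring_nf
      _ ≤ _ := by gcongr
  rw [add_mul, one_mul]
  have hV := (Real.exp_pos (-(2 * s))).le.trans lower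
  rw [abs_le] at tail ⊢
  constructor <;> linarith [tail.1, tail.2]

lemma trunc_err (P : Finset ℕ) (m : ℕ) (b : ℕ) :
    trunc P (fun _ => (m:ℝ)) b ≤ (1 + m * P.card : ℝ) ^ b := by
  classical
  unfold trunc
  rw [← Finset.sum_fiberwise_of_maps_to (g := Finset.card) (t := Finset.range (b + 1))]
  · rw [add_comm (1:ℝ), add_pow]
    refine Finset.sum_le_sum fun i hi => ?_
    have hi' := Finset.mem_range.1 hi
    have : (P.powerset.filter fun D => D.card ≤ b).filter (fun D => D.card = i) =
        P.powersetCard i := by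
      ext D
      simp only [Finset.mem_filter, Finset.mem_powerset, Finset.mem_powersetCard]
      constructor
      · rintro ⟨⟨h1, h2⟩, h3⟩; exact ⟨h1, h3⟩
      · rintro ⟨h1, h3⟩; exact ⟨⟨h1, by omega⟩, h3⟩
    rw [this, Finset.sum_congr rfl (g := fun _ => (m:ℝ) ^ i), Finset.sum_const,
      Finset.card_powersetCard, nsmul_eq_mul, one_pow, mul_one, mul_pow]
    · have h1 : (P.card.choose i : ℝ) ≤ (P.card : ℝ) ^ i := by
        exact_mod_cast Nat.choose_le_pow P.card i
      have h2 : (1:ℝ) ≤ b.choose i := by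
        exact_mod_cast Nat.choose_pos (by omega)
      calc (P.card.choose i : ℝ) * (m:ℝ) ^ i ≤ (P.card : ℝ) ^ i * (m:ℝ) ^ i := by gcongr
        _ = (m:ℝ) ^ i * (P.card : ℝ) ^ i := by ring
        _ ≤ _ := le_mul_of_one_le_right (by positivity) h2
    · intro D hD
      rw [Finset.prod_const, (Finset.mem_powersetCard.1 hD).2]
  · intro D hD
    have := (Finset.mem_filter.1 hD).2
    exact Finset.mem_range.2 (by omega)

lemma dyadic_sum (i : ℕ) (hi : 1 ≤ i) :
    ∑ p ∈ (Finset.Ioc (2 ^ i) (2 ^ (i + 1))).filter Nat.Prime, (1:ℝ) / p ≤ 4 / i := by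
  set P := (Finset.Ioc (2 ^ i) (2 ^ (i + 1))).filter Nat.Prime with hP
  have h1 : (2 ^ i) ^ P.card ≤ 4 ^ (2 ^ (i + 1)) := by
    calc (2 ^ i) ^ P.card ≤ ∏ p ∈ P, p := by
          rw [← Finset.prod_const]
          refine Finset.prod_le_prod' fun p hp => ?_
          have := (Finset.mem_Ioc.1 (Finset.mem_filter.1 hp).1).1
          omega
      _ ≤ primorial (2 ^ (i + 1)) := by
          unfold primorial
          refine Finset.prod_le_prod_of_subset_of_one_le' ?_ ?_
          · intro p hp
            rw [hP, Finset.mem_filter, Finset.mem_Ioc] at hp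
            rw [Finset.mem_filter, Finset.mem_range]
            exact ⟨by omega, hp.2⟩
          · intro p hp _
            exact (Finset.mem_filter.1 hp).2.one_lt.le
      _ ≤ _ := primorial_le_four_pow _
  have h2 : i * P.card ≤ 2 * 2 ^ (i + 1) := by
    rw [← pow_mul, show (4:ℕ) = 2 ^ 2 by norm_num, ← pow_mul] at h1
    exact (Nat.pow_le_pow_iff_right (by norm_num)).1 h1
  have h3 : (i:ℝ) * P.card ≤ 4 * 2 ^ i := by
    have : (i:ℝ) * P.card ≤ 2 * 2 ^ (i + 1) := by exact_mod_cast h2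
    rw [pow_succ] at this; linarith
  calc ∑ p ∈ P, (1:ℝ) / p ≤ ∑ p ∈ P, (1:ℝ) / 2 ^ i := by
        refine Finset.sum_le_sum fun p hp => ?_
        have := (Finset.mem_Ioc.1 (Finset.mem_filter.1 hp).1).1
        have : (2:ℝ) ^ i ≤ p := by exact_mod_cast this.le
        gcongr
    _ = P.card / 2 ^ i := by rw [Finset.sum_const, nsmul_eq_mul]; ring
    _ ≤ 4 / i := by
        have : (0:ℝ) < i := by exact_mod_cast hi
        rw [div_le_div_iff₀ (by positivity) this]
        linarith

lemma level_sum_aux (K : ℕ) (hK : 1 ≤ K) (n : ℕ) :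
    ∑ p ∈ (Finset.Ioc (2 ^ K) (2 ^ (K + n))).filter Nat.Prime, (1:ℝ) / p ≤ n * (4 / K) := by
  induction n with
  | zero => simp
  | succ n ih =>
    have hsplit : (Finset.Ioc (2 ^ K) (2 ^ (K + (n + 1)))).filter Nat.Prime ⊆
        (Finset.Ioc (2 ^ K) (2 ^ (K + n))).filter Nat.Prime ∪
        (Finset.Ioc (2 ^ (K + n)) (2 ^ (K + n + 1))).filter Nat.Prime := by
      intro p hp
      simp only [Finset.mem_union, Finset.mem_filter, Finset.mem_Ioc] at hp ⊢
      have : K + (n + 1) = K + n + 1 := by ring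
      rw [this] at hp
      by_cases h : p ≤ 2 ^ (K + n)
      · exact Or.inl ⟨⟨hp.1.1, h⟩, hp.2⟩
      · exact Or.inr ⟨⟨by omega, hp.1.2⟩, hp.2⟩
    have h1 := dyadic_sum (K + n) (by omega)
    have h2 : (4:ℝ) / (K + n : ℕ) ≤ 4 / K := by
      have : (0:ℝ) < K := by exact_mod_cast hK
      gcongr; linarith
    calc _ ≤ ∑ p ∈ (Finset.Ioc (2 ^ K) (2 ^ (K + n))).filter Nat.Prime ∪
        (Finset.Ioc (2 ^ (K + n)) (2 ^ (K + n + 1))).filter Nat.Prime, (1:ℝ) / p :=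
          Finset.sum_le_sum_of_subset_of_nonneg hsplit (fun p _ _ => by positivity)
      _ ≤ (∑ p ∈ (Finset.Ioc (2 ^ K) (2 ^ (K + n))).filter Nat.Prime, (1:ℝ) / p) +
          ∑ p ∈ (Finset.Ioc (2 ^ (K + n)) (2 ^ (K + n + 1))).filter Nat.Prime, (1:ℝ) / p := by
        rw [← Finset.sum_union_inter]
        exact le_add_of_nonneg_right (Finset.sum_nonneg fun p _ => by positivity)
      _ ≤ _ := by push_cast at *; linarith

lemma level_sum (j : ℕ) (P : Finset ℕ)
    (hP : ∀ p ∈ P, p.Prime ∧ 2 ^ 2 ^ j < p ∧ p ≤ 2 ^ 2 ^ (j + 1)) :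
    ∑ p ∈ P, (1:ℝ) / p ≤ 4 := by
  have h := level_sum_aux (2 ^ j) Nat.one_le_two_pow (2 ^ j)
  have h0 : (0:ℝ) < (2 ^ j : ℕ) := by positivity
  rw [mul_div_cancel₀ _ h0.ne', ← two_mul, ← pow_succ'] at h
  refine le_trans (Finset.sum_le_sum_of_subset_of_nonneg ?_ (fun p _ _ => by positivity)) h
  intro p hp
  obtain ⟨h1, h2, h3⟩ := hP p hp
  exact Finset.mem_filter.2 ⟨Finset.mem_Ioc.2 ⟨h2, h3⟩, h1⟩

lemma mertens_lower (z : ℕ) (hz : 2 ≤ z) :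
    ∏ p ∈ Nat.primesLE z, (1 - 1 / (p:ℝ)) ≤ 1 / Real.log z := by
  let f : ℕ →* ℝ :=
    { toFun := fun n => ((n:ℝ))⁻¹
      map_one' := by simp
      map_mul' := by intro a b; push_cast; rw [mul_inv] }
  have hf : ∀ n, f n = ((n:ℝ))⁻¹ := fun n => rfl
  have h := EulerProduct.summable_and_hasSum_smoothNumbers_prod_primesBelow_geometric (f := f)
    (by
      intro p hp
      rw [hf, Real.norm_of_nonneg (by positivity)]
      exact inv_lt_one_of_one_lt₀ (by exact_mod_cast hp.one_lt)) (z + 1)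
  have h1 : ∑ n ∈ Finset.range z, ((n + 1 : ℕ) : ℝ)⁻¹ ≤
      ∏ p ∈ (z + 1).primesBelow, (1 - f p)⁻¹ := by
    let e : ℕ → ℕ := fun n => n + 1
    let s : Finset ((z + 1).smoothNumbers) := (Finset.range z).attach.image
      (fun n => ⟨n.1 + 1, Nat.mem_smoothNumbers_of_lt (by omega)
        (by have := Finset.mem_range.1 n.2; omega)⟩)
    have := sum_le_hasSum s (fun i _ => by rw [hf]; positivity) h.2
    refine le_trans (le_of_eq ?_) this
    rw [Finset.sum_image]
    · rw [← Finset.sum_attach]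
      rfl
    · intro a _ b _ hab
      have := congrArg Subtype.val hab
      simp only at this
      exact Subtype.ext (by omega)
  have h2 := log_add_one_le_harmonic z
  have h3 : ((harmonic z : ℚ) : ℝ) = ∑ n ∈ Finset.range z, ((n + 1 : ℕ) : ℝ)⁻¹ := by
    unfold harmonic; push_cast; rfl
  have hlog : 0 < Real.log z := Real.log_pos (by exact_mod_cast (by omega : 1 < z))
  have h4 : Real.log z ≤ Real.log (z + 1 : ℕ) :=
    Real.log_le_log (by exact_mod_cast (by omega : 0 < z)) (by push_cast; linarith)
  have h5 : Real.log z ≤ ∏ p ∈ (z + 1).primesBelow, (1 - f p)⁻¹ := by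
    rw [h3] at h2; push_cast at *; linarith
  rw [Finset.prod_inv_distrib] at h5
  have h6 : ∏ p ∈ Nat.primesLE z, (1 - 1 / (p:ℝ)) = ∏ p ∈ (z + 1).primesBelow, (1 - f p) := by
    refine Finset.prod_congr rfl fun p _ => ?_
    rw [hf, one_div]
  rw [h6, one_div]
  have := inv_anti₀ hlog h5
  rwa [inv_inv] at this

def lev (m w : ℕ) (h : Fin m → ℕ) (j : ℕ) : Finset ℕ :=
  open Classical in
  (Finset.Ioc (2 ^ 2 ^ j) (2 ^ 2 ^ (j + 1))).filter
    (fun p => p.Prime ∧ w < p ∧ ∀ i i', h i ≡ h i' [MOD p] → i = i')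

lemma mem_lev {m w : ℕ} {h : Fin m → ℕ} {j p : ℕ} : p ∈ lev m w h j ↔
    (2 ^ 2 ^ j < p ∧ p ≤ 2 ^ 2 ^ (j + 1)) ∧ p.Prime ∧ w < p ∧
      ∀ i i', h i ≡ h i' [MOD p] → i = i' := by
  unfold lev
  rw [Finset.mem_filter, Finset.mem_Ioc]

lemma lev_disj {m w : ℕ} {h : Fin m → ℕ} (i j : ℕ) (hij : i ≠ j) :
    Disjoint (lev m w h i) (lev m w h j) := by
  have key : ∀ i j, i < j → ∀ p, p ∈ lev m w h i → p ∈ lev m w h j → False := by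
    intro i j hij p h1 h2
    have h1 := (mem_lev.1 h1).1.2
    have h2 := (mem_lev.1 h2).1.1
    have : 2 ^ 2 ^ (i + 1) ≤ 2 ^ 2 ^ j :=
      Nat.pow_le_pow_right (by norm_num) (Nat.pow_le_pow_right (by norm_num) hij)
    omega
  rw [Finset.disjoint_left]
  intro p h1 h2
  rcases lt_or_gt_of_ne hij with h | h
  · exact key i j h p h1 h2
  · exact key j i h p h2 h1

lemma sum_quarter (J : ℕ) : ∑ j ∈ Finset.range J, (1 / 4 : ℝ) ^ (J - j) ≤ 1 := by
  induction J with
  | zero => simp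
  | succ J ih =>
    rw [Finset.sum_range_succ]
    have : ∑ j ∈ Finset.range J, (1 / 4 : ℝ) ^ (J + 1 - j) =
        (∑ j ∈ Finset.range J, (1 / 4 : ℝ) ^ (J - j)) * (1 / 4) := by
      rw [Finset.sum_mul]
      refine Finset.sum_congr rfl fun j hj => ?_
      have := Finset.mem_range.1 hj
      rw [← pow_succ]; congr 1; omega
    rw [this, Nat.add_sub_cancel_left]
    linarith

lemma sum_expo (J : ℕ) : ∀ c : ℕ, ∑ j ∈ Finset.range J, 2 ^ (j + 3) * (c + (J - j)) +
    8 * (c + J + 2) = 2 ^ J * (8 * (c + 2)) := by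
  induction J with
  | zero => intro c; simp
  | succ J ih =>
    intro c
    rw [Finset.sum_range_succ]
    have : ∑ j ∈ Finset.range J, 2 ^ (j + 3) * (c + (J + 1 - j)) =
        ∑ j ∈ Finset.range J, 2 ^ (j + 3) * ((c + 1) + (J - j)) := by
      refine Finset.sum_congr rfl fun j hj => ?_
      have := Finset.mem_range.1 hj
      congr 1; omega
    rw [this, Nat.add_sub_cancel_left]
    have := ih (c + 1)
    rw [pow_succ 2 J, pow_add 2 J 3]
    linarith

lemma sieve_tuple (m J w X r : ℕ) (hm : 1 ≤ m) (hw : 2 * m ≤ w) (h : Fin m → ℕ)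
    (G : Finset ℕ)
    (hG : ∀ n ∈ G, n < X ∧ n ≡ r [MOD primorial w] ∧
      ∀ p, p.Prime → w < p → p ≤ 2 ^ 2 ^ J → ∀ i, ¬ p ∣ n + h i) :
    (G.card : ℝ) ≤ X / primorial w *
      (3 * (∏ p ∈ (Finset.range J).biUnion (lev m w h), (1 - 1 / (p:ℝ))) ^ m) +
      2 ^ (2 ^ J * (128 * m + 16)) := by
  classical
  let R : ℕ → Finset ℕ := fun p => Finset.univ.image (fun i : Fin m => (p - h i % p) % p)
  have hmodR : ∀ p, 0 < p → ∀ n i, n % p = (p - h i % p) % p → p ∣ n + h i := by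
    intro p hp n i hn
    have h1 : n ≡ p - h i % p [MOD p] := hn
    have h2 : n + h i % p ≡ p - h i % p + h i % p [MOD p] := h1.add_right _
    rw [Nat.sub_add_cancel (Nat.mod_lt _ hp).le] at h2
    have h3 : n + h i ≡ n + h i % p [MOD p] := (Nat.mod_modEq (h i) p).symm.add_left n
    have h4 := h3.trans h2
    exact (Nat.modEq_zero_iff_dvd).1 (h4.trans (by simp [Nat.ModEq]))
  have hR : ∀ j, ∀ p ∈ lev m w h j, ∀ a ∈ R p, a < p := by
    intro j p hp a ha
    obtain ⟨i, _, rfl⟩ := Finset.mem_image.1 ha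
    exact Nat.mod_lt _ (mem_lev.1 hp).2.1.pos
  have hRc : ∀ j, ∀ p ∈ lev m w h j, (R p).card = m := by
    intro j p hp
    have hp' := mem_lev.1 hp
    rw [Finset.card_image_of_injective, Finset.card_univ, Fintype.card_fin]
    intro i i' hii
    apply hp'.2.2.2
    have hpos := hp'.2.1.pos
    have h1 := hmodR p hpos (p - h i % p) i (by simp)
    have h2 := hmodR p hpos (p - h i % p) i' hii
    have h3 : p - h i % p + h i ≡ p - h i % p + h i' [MOD p] :=
      ((Nat.modEq_zero_iff_dvd).2 h1).trans ((Nat.modEq_zero_iff_dvd).2 h2).symm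
    exact Nat.ModEq.add_left_cancel' _ h3
  have main := sieve_abstract X m R (lev m w h) (fun j => 16 * m + (J - j)) J
    (fun j p hp => (mem_lev.1 hp).2.1) lev_disj hR hRc (primorial w) r (primorial_pos w)
    (by
      intro j p hp
      have hp' := mem_lev.1 hp
      rw [Nat.coprime_comm, Nat.Prime.coprime_iff_not_dvd hp'.2.1]
      intro hd
      have : p ∈ (primorial w).primeFactors :=
        Nat.mem_primeFactors.2 ⟨hp'.2.1, hd, primorial_ne_zero w⟩
      rw [primeFactors_primorial, Nat.mem_primesLE] at this
      omega) G
    (by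
      intro n hn
      obtain ⟨h1, h2, h3⟩ := hG n hn
      refine ⟨h1, h2, fun j hj p hp hmem => ?_⟩
      have hp' := mem_lev.1 hp
      obtain ⟨i, _, hi⟩ := Finset.mem_image.1 hmem
      refine h3 p hp'.2.1 hp'.2.2.1 (hp'.1.2.trans ?_) i (hmodR p hp'.2.1.pos n i hi.symm)
      exact Nat.pow_le_pow_right (by norm_num) (Nat.pow_le_pow_right (by norm_num) hj))
  have hp2 : ∀ j, ∀ p ∈ lev m w h j, 2 * m ≤ p := by
    intro j p hp
    have := (mem_lev.1 hp).2.2.1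
    omega
  have hfac0 : ∀ j, ∀ p ∈ lev m w h j, 0 ≤ 1 - (m:ℝ) / p := by
    intro j p hp
    have h1 : (2:ℝ) * m ≤ p := by exact_mod_cast hp2 j p hp
    have hm' : (1:ℝ) ≤ m := by exact_mod_cast hm
    rw [sub_nonneg, div_le_one (by linarith)]
    linarith
  have b1 : ∀ j ∈ Finset.range J,
      |trunc (lev m w h j) (fun p => -((m:ℝ) / p)) (2 * (16 * m + (J - j)))| ≤
      (1 + (1 / 4 : ℝ) ^ (J - j)) * (∏ p ∈ lev m w h j, (1 - 1 / (p:ℝ))) ^ m := by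
    intro j hj
    have t := trunc_main (lev m w h j) m hm (hp2 j) (4 * m) (by
      have := level_sum j (lev m w h j) (fun p hp => ⟨(mem_lev.1 hp).2.1, (mem_lev.1 hp).1⟩)
      calc ∑ p ∈ lev m w h j, (m:ℝ) / p = m * ∑ p ∈ lev m w h j, (1:ℝ) / p := by
            rw [Finset.mul_sum]; exact Finset.sum_congr rfl fun p _ => by ring
        _ ≤ m * 4 := by gcongr
        _ = _ := by ring) (2 * (16 * m + (J - j)))
    refine t.trans ?_
    have e1 : Real.exp (4 * (4 * m)) / 2 ^ (2 * (16 * m + (J - j))) ≤ (1 / 4 : ℝ) ^ (J - j) := by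
      rw [pow_mul, pow_add, one_div, inv_pow, div_le_iff₀ (by positivity)]
      have : Real.exp (4 * (4 * m)) ≤ (2 ^ 2 : ℝ) ^ (16 * m) := by
        have : (4 * (4 * m) : ℝ) = ((16 * m : ℕ) : ℝ) * 1 := by push_cast; ring
        rw [this, Real.exp_nat_mul]
        gcongr
        have := Real.exp_one_lt_d9
        linarith
      have h4 : (2 ^ 2 : ℝ) = 4 := by norm_num
      rw [h4] at this ⊢
      have h5 : ((4:ℝ) ^ (J - j))⁻¹ * (4 ^ (16 * m) * 4 ^ (J - j)) = 4 ^ (16 * m) := by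
        field_simp
      rw [h5]; exact this
    have e2 : ∏ p ∈ lev m w h j, (1 - (m:ℝ) / p) ≤ (∏ p ∈ lev m w h j, (1 - 1 / (p:ℝ))) ^ m := by
      rw [← Finset.prod_pow]
      refine Finset.prod_le_prod (hfac0 j) fun p hp => ?_
      have hp1 : (1:ℝ) ≤ p := by exact_mod_cast (mem_lev.1 hp).2.1.one_lt.le
      have := one_add_mul_le_pow (a := -(1 / (p:ℝ))) (by
        have : 1 / (p:ℝ) ≤ 1 := by rw [div_le_one (by linarith)]; exact hp1
        linarith) m
      calc 1 - (m:ℝ) / p = 1 + m * -(1 / (p:ℝ)) := by ring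
        _ ≤ _ := this
        _ = _ := by ring
    have e3 : 0 ≤ ∏ p ∈ lev m w h j, (1 - (m:ℝ) / p) := Finset.prod_nonneg (hfac0 j)
    gcongr
  have c1 : ∏ j ∈ Finset.range J, trunc (lev m w h j) (fun p => -((m:ℝ) / p))
      (2 * (16 * m + (J - j))) ≤
      3 * (∏ p ∈ (Finset.range J).biUnion (lev m w h), (1 - 1 / (p:ℝ))) ^ m := by
    calc _ ≤ ∏ j ∈ Finset.range J, ((1 + (1 / 4 : ℝ) ^ (J - j)) *
            (∏ p ∈ lev m w h j, (1 - 1 / (p:ℝ))) ^ m) := by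
          refine (le_abs_self _).trans ?_
          rw [Finset.abs_prod]
          exact Finset.prod_le_prod (fun j hj => abs_nonneg _) b1
      _ = (∏ j ∈ Finset.range J, (1 + (1 / 4 : ℝ) ^ (J - j))) *
            (∏ p ∈ (Finset.range J).biUnion (lev m w h), (1 - 1 / (p:ℝ))) ^ m := by
          rw [Finset.prod_mul_distrib, Finset.prod_pow, Finset.prod_biUnion]
          intro i _ j _ hij
          exact lev_disj i j hij
      _ ≤ _ := by
          have hx : 0 ≤ ∏ p ∈ (Finset.range J).biUnion (lev m w h), (1 - 1 / (p:ℝ)) := by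
            refine Finset.prod_nonneg fun p hp => ?_
            obtain ⟨j, _, hj⟩ := Finset.mem_biUnion.1 hp
            have hp1 : (1:ℝ) ≤ p := by exact_mod_cast (mem_lev.1 hj).2.1.one_lt.le
            rw [sub_nonneg, div_le_one (by linarith)]; exact hp1
          gcongr
          calc _ ≤ Real.exp (∑ j ∈ Finset.range J, (1 / 4 : ℝ) ^ (J - j)) :=
                Real.prod_one_add_le_exp_sum _ (fun j => by positivity)
            _ ≤ Real.exp 1 := Real.exp_le_exp.2 (sum_quarter J)
            _ ≤ 3 := by have := Real.exp_one_lt_d9; linarith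
  have c2 : ∏ j ∈ Finset.range J, trunc (lev m w h j) (fun _ => (m:ℝ))
      (2 * (16 * m + (J - j))) ≤ 2 ^ (2 ^ J * (128 * m + 16)) := by
    calc _ ≤ ∏ j ∈ Finset.range J, (2:ℝ) ^ (2 ^ (j + 3) * (16 * m + (J - j))) := by
          refine Finset.prod_le_prod (fun j hj => ?_) fun j hj => ?_
          · exact Finset.sum_nonneg fun D _ => Finset.prod_nonneg fun p _ => by positivity
          · refine (trunc_err _ _ _).trans ?_
            have hb : (1 + m * (lev m w h j).card : ℝ) ≤ 2 ^ (2 ^ (j + 2)) := by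
              rcases Finset.eq_empty_or_nonempty (lev m w h j) with he | ⟨p, hp⟩
              · rw [he]; simp; exact one_le_pow₀ (by norm_num)
              · have hp' := mem_lev.1 hp
                have hcard : (lev m w h j).card ≤ 2 ^ 2 ^ (j + 1) - 1 := by
                  calc _ ≤ (Finset.Ioc (2 ^ 2 ^ j) (2 ^ 2 ^ (j + 1))).card :=
                        Finset.card_filter_le _ _
                    _ ≤ _ := by
                        rw [Nat.card_Ioc]
                        exact Nat.sub_le_sub_left Nat.one_le_two_pow _
                have hmz : m ≤ 2 ^ 2 ^ (j + 1) := by omega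
                have hz : 1 ≤ 2 ^ 2 ^ (j + 1) := Nat.one_le_two_pow
                have : 1 + m * (lev m w h j).card ≤ 2 ^ (2 ^ (j + 2)) := by
                  have e : 2 ^ (2 ^ (j + 2)) = 2 ^ 2 ^ (j + 1) * 2 ^ 2 ^ (j + 1) := by
                    rw [← pow_add]; congr 1; ring
                  rw [e]
                  generalize 2 ^ 2 ^ (j + 1) = z at *
                  calc 1 + m * (lev m w h j).card ≤ 1 + z * (z - 1) := by gcongr
                    _ ≤ z + z * (z - 1) := by omega
                    _ = z * z := by
                      obtain ⟨y, rfl⟩ : ∃ y, z = y + 1 := ⟨z - 1, by omega⟩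
                      simp; ring
                exact_mod_cast this
            calc _ ≤ ((2:ℝ) ^ (2 ^ (j + 2))) ^ (2 * (16 * m + (J - j))) := by gcongr
              _ = _ := by rw [← pow_mul]; congr 1; ring
      _ = (2:ℝ) ^ (∑ j ∈ Finset.range J, 2 ^ (j + 3) * (16 * m + (J - j))) := by
          rw [Finset.prod_pow_eq_pow_sum]
      _ ≤ _ := by
          refine pow_le_pow_right₀ (by norm_num) ?_
          have := sum_expo J (16 * m)
          have e : 2 ^ J * (8 * (16 * m + 2)) = 2 ^ J * (128 * m + 16) := by ring
          omega
  have : (0:ℝ) ≤ X / primorial w := by positivity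
  exact main.trans (add_le_add (mul_le_mul_of_nonneg_left c1 this) c2)

lemma few_primes (w t Y d : ℕ) (hw : 2 ≤ w) (hY : Y < w ^ (t + 1)) (hd : 0 < d) (hdY : d ≤ Y) :
    (d.primeFactors.filter (fun p => w < p)).card ≤ t := by
  by_contra hc
  push Not at hc
  have h1 : w ^ (t + 1) ≤ ∏ p ∈ d.primeFactors.filter (fun p => w < p), p := by
    calc w ^ (t + 1) ≤ w ^ (d.primeFactors.filter (fun p => w < p)).card :=
          Nat.pow_le_pow_right (by omega) hc
      _ ≤ _ := by
          rw [← Finset.prod_const]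
          exact Finset.prod_le_prod' fun p hp => (Finset.mem_filter.1 hp).2.le
  have h2 : ∏ p ∈ d.primeFactors.filter (fun p => w < p), p ≤ d := by
    calc _ ≤ ∏ p ∈ d.primeFactors, p :=
          Finset.prod_le_prod_of_subset_of_one_le' (Finset.filter_subset _ _)
            fun p hp _ => (Nat.prime_of_mem_primeFactors hp).one_lt.le
      _ ≤ d := Nat.le_of_dvd hd (Nat.prod_primeFactors_dvd d)
  omega

lemma prod_lev_bound (m J w Y t : ℕ) (hm : 1 ≤ m) (hw : 2 ≤ w) (hwz : w ≤ 2 ^ 2 ^ J)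
    (h : Fin m → ℕ) (hinj : Function.Injective h) (hhY : ∀ i, h i ≤ Y)
    (hY : Y < w ^ (t + 1)) (ht : 2 * m ^ 3 * t ≤ w) :
    ((primorial w).totient / (primorial w : ℝ) *
      ∏ p ∈ (Finset.range J).biUnion (lev m w h), (1 - 1 / (p:ℝ))) ^ m ≤
      2 * (1 / Real.log ((2 ^ 2 ^ J : ℕ) : ℝ)) ^ m := by
  classical
  set z := 2 ^ 2 ^ J with hz
  set P := (Finset.range J).biUnion (lev m w h) with hP
  set B := (Nat.primesLE z).filter (fun p => w < p ∧ ¬ ∀ i i', h i ≡ h i' [MOD p] → i = i') with hB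
  have f0 : ∀ p : ℕ, p.Prime → 0 < 1 - 1 / (p:ℝ) := by
    intro p hp
    have : (1:ℝ) < p := by exact_mod_cast hp.one_lt
    rw [sub_pos, div_lt_one (by linarith)]; exact this
  have memP : ∀ p, p ∈ P ↔ p ≤ z ∧ p.Prime ∧ w < p ∧ ∀ i i', h i ≡ h i' [MOD p] → i = i' := by
    intro p
    rw [hP, Finset.mem_biUnion]
    constructor
    · rintro ⟨j, hj, hp⟩
      have hp' := mem_lev.1 hp
      refine ⟨hp'.1.2.trans ?_, hp'.2⟩
      exact Nat.pow_le_pow_right (by norm_num)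
        (Nat.pow_le_pow_right (by norm_num) (Finset.mem_range.1 hj))
    · rintro ⟨h1, h2⟩
      have hex : ∃ j, p ≤ 2 ^ 2 ^ j := ⟨J, h1⟩
      have hsp := Nat.find_spec hex
      have hle : Nat.find hex ≤ J := Nat.find_min' hex h1
      have hpos : Nat.find hex ≠ 0 := by
        intro h0
        rw [h0] at hsp
        have := h2.2.1
        norm_num at hsp
        omega
      obtain ⟨j, hj⟩ := Nat.exists_eq_succ_of_ne_zero hpos
      have hlt := Nat.find_min hex (m := j) (by omega)
      rw [hj] at hsp
      exact ⟨j, Finset.mem_range.2 (by omega), mem_lev.2 ⟨⟨by omega, hsp⟩, h2⟩⟩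
  have hsplit : Nat.primesLE z = (Nat.primesLE w ∪ P) ∪ B := by
    ext p
    simp only [Finset.mem_union, hB, Finset.mem_filter, memP, Nat.mem_primesLE]
    constructor
    · rintro ⟨h1, h2⟩
      by_cases h3 : p ≤ w
      · exact Or.inl (Or.inl ⟨h3, h2⟩)
      · by_cases h4 : ∀ i i', h i ≡ h i' [MOD p] → i = i'
        · exact Or.inl (Or.inr ⟨h1, h2, by omega, h4⟩)
        · exact Or.inr ⟨⟨h1, h2⟩, by omega, h4⟩
    · rintro ((⟨h1, h2⟩ | ⟨h1, h2, _⟩) | ⟨h1, _⟩)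
      · exact ⟨h1.trans hwz, h2⟩
      · exact ⟨h1, h2⟩
      · exact h1
  have hprod : ∏ p ∈ Nat.primesLE z, (1 - 1 / (p:ℝ)) =
      (∏ p ∈ Nat.primesLE w, (1 - 1 / (p:ℝ))) * (∏ p ∈ P, (1 - 1 / (p:ℝ))) *
        ∏ p ∈ B, (1 - 1 / (p:ℝ)) := by
    rw [hsplit, Finset.prod_union, Finset.prod_union]
    · rw [Finset.disjoint_left]
      intro p h1 h2
      rw [memP] at h2
      rw [Nat.mem_primesLE] at h1
      omega
    · rw [Finset.disjoint_left]
      intro p h1 h2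
      rw [hB, Finset.mem_filter] at h2
      rcases Finset.mem_union.1 h1 with h1 | h1
      · rw [Nat.mem_primesLE] at h1
        omega
      · rw [memP] at h1
        exact h2.2.2 h1.2.2.2
  have htot : (primorial w).totient / (primorial w : ℝ) =
      ∏ p ∈ Nat.primesLE w, (1 - 1 / (p:ℝ)) := by
    have := Nat.totient_eq_mul_prod_factors (primorial w)
    rw [primeFactors_primorial] at this
    have h2 : ((primorial w).totient : ℝ) = primorial w * ∏ p ∈ Nat.primesLE w, (1 - (p:ℝ)⁻¹) := by
      have h5 := congrArg (fun x : ℚ => (x:ℝ)) this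
      push_cast at h5
      exact h5
    have h3 : (primorial w : ℝ) ≠ 0 := by exact_mod_cast primorial_ne_zero w
    rw [h2, mul_div_cancel_left₀ _ h3]
    simp only [one_div]
  have hBcard : B.card ≤ m ^ 2 * t := by
    have hsub : B ⊆ (Finset.univ : Finset (Fin m × Fin m)).biUnion (fun ij =>
        if h ij.1 < h ij.2 then
          (h ij.2 - h ij.1).primeFactors.filter (fun p => w < p) else ∅) := by
      intro p hp
      rw [hB, Finset.mem_filter, Nat.mem_primesLE] at hp
      obtain ⟨⟨h1, h2⟩, h3, h4⟩ := hp
      push Not at h4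
      obtain ⟨i, i', h5, h6⟩ := h4
      have hne : h i ≠ h i' := fun e => h6 (hinj e)
      rw [Finset.mem_biUnion]
      rcases lt_or_gt_of_ne hne with hlt | hlt
      · refine ⟨(i, i'), Finset.mem_univ _, ?_⟩
        simp only [hlt, if_true, Finset.mem_filter, Nat.mem_primeFactors]
        exact ⟨⟨h2, (Nat.modEq_iff_dvd' hlt.le).1 h5, by omega⟩, h3⟩
      · refine ⟨(i', i), Finset.mem_univ _, ?_⟩
        simp only [hlt, if_true, Finset.mem_filter, Nat.mem_primeFactors]
        exact ⟨⟨h2, (Nat.modEq_iff_dvd' hlt.le).1 h5.symm, by omega⟩, h3⟩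
    refine (Finset.card_le_card hsub).trans (Finset.card_biUnion_le.trans ?_)
    calc _ ≤ ∑ ij : Fin m × Fin m, t := by
          refine Finset.sum_le_sum fun ij _ => ?_
          split_ifs with hlt
          · exact few_primes w t Y _ hw hY (by omega) (by have := hhY ij.2; omega)
          · simp
      _ = _ := by
          rw [Finset.sum_const, Finset.card_univ, Fintype.card_prod, Fintype.card_fin,
            smul_eq_mul]
          ring
  have hBprod : (1 / 2 : ℝ) ≤ (∏ p ∈ B, (1 - 1 / (p:ℝ))) ^ m := by
    have hw' : (2:ℝ) ≤ w := by exact_mod_cast hw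
    have hwinv : 1 / (w:ℝ) ≤ 1 := by rw [div_le_one (by linarith)]; linarith
    have s1 : (1 - 1 / (w:ℝ)) ^ B.card ≤ ∏ p ∈ B, (1 - 1 / (p:ℝ)) := by
      rw [← Finset.prod_const]
      refine Finset.prod_le_prod (fun p _ => by linarith) fun p hp => ?_
      have : (w:ℝ) ≤ p := by exact_mod_cast (Finset.mem_filter.1 hp).2.1.le
      have : 1 / (p:ℝ) ≤ 1 / w := by gcongr
      linarith
    have s2 : (1 / 2 : ℝ) ≤ (1 - 1 / (w:ℝ)) ^ (B.card * m) := by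
      have := one_add_mul_le_pow (a := -(1 / (w:ℝ))) (by linarith) (B.card * m)
      have hc : 2 * (B.card * m) ≤ w := by
        calc 2 * (B.card * m) ≤ 2 * (m ^ 2 * t * m) := by gcongr
          _ = 2 * m ^ 3 * t := by ring
          _ ≤ w := ht
      have hc' : (2:ℝ) * (B.card * m : ℕ) ≤ w := by exact_mod_cast hc
      have hq : ((B.card * m : ℕ) : ℝ) * (1 / w) ≤ 1 / 2 := by
        rw [mul_one_div, div_le_div_iff₀ (by linarith) (by norm_num)]; linarith
      rw [← sub_eq_add_neg] at this
      linarith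
    calc _ ≤ _ := s2
      _ = ((1 - 1 / (w:ℝ)) ^ B.card) ^ m := by rw [pow_mul]
      _ ≤ _ := by
        have : 0 ≤ 1 - 1 / (w:ℝ) := by linarith
        gcongr
  have hmert := mertens_lower z (by omega)
  rw [hprod] at hmert
  rw [htot]
  have n1 : 0 ≤ ∏ p ∈ Nat.primesLE w, (1 - 1 / (p:ℝ)) :=
    Finset.prod_nonneg fun p hp => (f0 p (Nat.mem_primesLE.1 hp).2).le
  have n2 : 0 ≤ ∏ p ∈ P, (1 - 1 / (p:ℝ)) :=
    Finset.prod_nonneg fun p hp => (f0 p ((memP p).1 hp).2.1).le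
  have n3 : 0 ≤ ∏ p ∈ B, (1 - 1 / (p:ℝ)) :=
    Finset.prod_nonneg fun p hp => (f0 p (Nat.mem_primesLE.1 (Finset.mem_filter.1 hp).1).2).le
  have hpw := pow_le_pow_left₀ (mul_nonneg (mul_nonneg n1 n2) n3) hmert m
  rw [mul_pow] at hpw
  have n4 := pow_nonneg (mul_nonneg n1 n2) m
  nlinarith

lemma sieve_final (m J w X r Y t : ℕ) (hm : 1 ≤ m) (hw : 2 * m ≤ w) (hwz : w ≤ 2 ^ 2 ^ J)
    (h : Fin m → ℕ) (hinj : Function.Injective h) (hhY : ∀ i, h i ≤ Y)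
    (hY : Y < w ^ (t + 1)) (ht : 2 * m ^ 3 * t ≤ w)
    (G : Finset ℕ)
    (hG : ∀ n ∈ G, n < X ∧ n ≡ r [MOD primorial w] ∧
      ∀ p, p.Prime → w < p → p ≤ 2 ^ 2 ^ J → ∀ i, ¬ p ∣ n + h i) :
    (G.card : ℝ) ≤ X / primorial w * (6 * (primorial w / ((primorial w).totient *
      Real.log ((2 ^ 2 ^ J : ℕ) : ℝ))) ^ m) + 2 ^ (2 ^ J * (128 * m + 16)) := by
  refine (sieve_tuple m J w X r hm hw h G hG).trans ?_
  have hb := prod_lev_bound m J w Y t hm (by omega) hwz h hinj hhY hY ht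
  have hM : (0:ℝ) < primorial w := by exact_mod_cast primorial_pos w
  have hT : (0:ℝ) < (primorial w).totient := by
    exact_mod_cast Nat.totient_pos.2 (primorial_pos w)
  have : 3 * (∏ p ∈ (Finset.range J).biUnion (lev m w h), (1 - 1 / (p:ℝ))) ^ m ≤
      6 * (primorial w / ((primorial w).totient * Real.log ((2 ^ 2 ^ J : ℕ) : ℝ))) ^ m := by
    set V := ∏ p ∈ (Finset.range J).biUnion (lev m w h), (1 - 1 / (p:ℝ))
    have e : V ^ m = ((primorial w : ℝ) / (primorial w).totient) ^ m *
        ((primorial w).totient / (primorial w : ℝ) * V) ^ m := by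
      rw [← mul_pow]
      congr 1
      field_simp
    have e2 : ((primorial w : ℝ) / ((primorial w).totient * Real.log ((2 ^ 2 ^ J : ℕ) : ℝ))) =
      ((primorial w : ℝ) / (primorial w).totient) * (1 / Real.log ((2 ^ 2 ^ J : ℕ) : ℝ)) := by
      rw [div_mul_div_comm, mul_one]
    rw [e2, mul_pow, e]
    have hpos : 0 ≤ ((primorial w : ℝ) / (primorial w).totient) ^ m := by positivity
    have := mul_le_mul_of_nonneg_left hb hpos
    linarith
  gcongr

lemma units_fiber (q M : ℕ) (hM : M ≠ 0) (hq : q ∣ M) (a : (ZMod q)ˣ) :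
    ∃ S : Finset (ZMod M), (S.card : ℝ) ≤ (M.totient : ℝ) / q.totient ∧
      ∀ u : (ZMod M)ˣ, ZMod.unitsMap hq u = a → (u : ZMod M) ∈ S := by
  classical
  haveI : NeZero M := ⟨hM⟩
  haveI : NeZero q := ⟨fun h => hM (by rw [h] at hq; exact zero_dvd_iff.1 hq)⟩
  let f := ZMod.unitsMap hq
  have hf : Function.Surjective f := ZMod.unitsMap_surjective hq
  have hfib : ∀ b : (ZMod q)ˣ, (Finset.univ.filter (fun u => f u = b)).card =
      (Finset.univ.filter (fun u => f u = a)).card := by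
    intro b
    obtain ⟨v, hv⟩ := hf (a * b⁻¹)
    refine Finset.card_bij (fun u _ => v * u) ?_ ?_ ?_
    · intro u hu
      simp only [Finset.mem_filter, Finset.mem_univ, true_and] at hu ⊢
      rw [map_mul, hv, hu]; simp
    · intro u _ u' _ h
      exact mul_left_cancel h
    · intro u hu
      simp only [Finset.mem_filter, Finset.mem_univ, true_and] at hu ⊢
      refine ⟨v⁻¹ * u, ?_, by simp⟩
      rw [map_mul, map_inv, hv, hu]; simp
  have htot : (M.totient) = q.totient * (Finset.univ.filter (fun u => f u = a)).card := by
    have h1 := Finset.card_eq_sum_card_fiberwise (f := f) (s := Finset.univ)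
      (t := Finset.univ) (fun _ _ => Finset.mem_coe.2 (Finset.mem_univ _))
    rw [Finset.sum_congr rfl (fun b _ => hfib b)] at h1
    simpa [ZMod.card_units_eq_totient] using h1
  refine ⟨(Finset.univ.filter (fun u => f u = a)).image (fun u : (ZMod M)ˣ => (u : ZMod M)), ?_, ?_⟩
  · have hq0 : (0:ℝ) < q.totient := by
      exact_mod_cast Nat.totient_pos.2 (Nat.pos_of_ne_zero (NeZero.ne q))
    rw [le_div_iff₀ hq0, htot]
    push_cast
    rw [mul_comm]
    gcongr
    exact Finset.card_image_le
  · intro u hu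
    exact Finset.mem_image_of_mem (fun u : (ZMod M)ˣ => (u : ZMod M))
      (Finset.mem_filter.2 ⟨Finset.mem_univ _, hu⟩)

lemma nth_sm : StrictMono (Nat.nth Nat.Prime) := Nat.nth_strictMono Nat.infinite_setOfPred_prime

lemma gaps_det (m M n n' : ℕ) 
    (hD : (Finset.univ.image fun k : Fin (m - 1) =>
        (Nat.nth Nat.Prime (n + (k + 1)) - Nat.nth Nat.Prime n) / M + k) =
      (Finset.univ.image fun k : Fin (m - 1) =>
        (Nat.nth Nat.Prime (n' + (k + 1)) - Nat.nth Nat.Prime n') / M + k))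
    (hr : ∀ i < m, (Nat.nth Nat.Prime (n + i) : ZMod M) = Nat.nth Nat.Prime (n' + i)) :
    ∀ i < m, Nat.nth Nat.Prime (n + i) - Nat.nth Nat.Prime n =
      Nat.nth Nat.Prime (n' + i) - Nat.nth Nat.Prime n' := by
  have sm : ∀ n : ℕ, StrictMono fun k : Fin (m - 1) =>
        (Nat.nth Nat.Prime (n + (k + 1)) - Nat.nth Nat.Prime n) / M + (k:ℕ) := by
    intro n k k' hk
    have h1 : (Nat.nth Nat.Prime (n + (k + 1)) - Nat.nth Nat.Prime n) / M ≤
      (Nat.nth Nat.Prime (n + (k' + 1)) - Nat.nth Nat.Prime n) / M := by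
      apply Nat.div_le_div_right
      apply Nat.sub_le_sub_right
      apply nth_sm.monotone
      have : (k:ℕ) < k' := hk
      omega
    have : (k:ℕ) < k' := hk
    simp only
    omega
  have hfun := ((sm n).range_inj (sm n')).1 (by
    have := congrArg (fun s : Finset ℕ => (s : Set ℕ)) hD
    simpa using this)
  intro i hi
  rcases Nat.eq_zero_or_pos i with rfl | hi0
  · simp
  have hk := congrFun hfun ⟨i - 1, by omega⟩
  simp only [Nat.sub_add_cancel hi0] at hk
  have hdiv : (Nat.nth Nat.Prime (n + i) - Nat.nth Nat.Prime n) / M =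
      (Nat.nth Nat.Prime (n' + i) - Nat.nth Nat.Prime n') / M := by omega
  have hmod : (Nat.nth Nat.Prime (n + i) - Nat.nth Nat.Prime n) % M =
      (Nat.nth Nat.Prime (n' + i) - Nat.nth Nat.Prime n') % M := by
    rw [← ZMod.natCast_eq_natCast_iff']
    rw [Nat.cast_sub (nth_sm.monotone (by omega)), Nat.cast_sub (nth_sm.monotone (by omega)),
      hr i hi]
    have := hr 0 (by omega)
    simp only [add_zero] at this
    rw [this]
  rw [← Nat.div_add_mod (Nat.nth Nat.Prime (n + i) - Nat.nth Nat.Prime n) M, hdiv, hmod,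
    Nat.div_add_mod]

lemma pattern_count (q m J w X Y t : ℕ) (hm : 1 ≤ m) (hw : 2 * m ≤ w) (hwz : w ≤ 2 ^ 2 ^ J)
    (hY : Y < w ^ (t + 1)) (ht : 2 * m ^ 3 * t ≤ w) (hq : q ∣ primorial w)
    (a : Fin m → (ZMod q)ˣ) (G : Finset ℕ)
    (hG : ∀ n ∈ G, Nat.nth Nat.Prime n < X ∧ 2 ^ 2 ^ J < Nat.nth Nat.Prime n ∧
      (∀ i : Fin m, ((Nat.nth Nat.Prime (n + (i : ℕ)) : ℕ) : ZMod q) = (a i : ZMod q)) ∧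
      Nat.nth Nat.Prime (n + (m - 1)) ≤ Nat.nth Nat.Prime n + Y) :
    (G.card : ℝ) ≤ ((primorial w).totient / (q.totient : ℝ)) ^ m *
      ((Y / primorial w + m).choose (m - 1) : ℕ) *
      (X / primorial w * (6 * (primorial w / ((primorial w).totient *
      Real.log ((2 ^ 2 ^ J : ℕ) : ℝ))) ^ m) + 2 ^ (2 ^ J * (128 * m + 16))) := by
  classical
  set M := primorial w with hMdef
  set Bd : ℝ := (X / M * (6 * (M / (M.totient *
      Real.log ((2 ^ 2 ^ J : ℕ) : ℝ))) ^ m) + 2 ^ (2 ^ J * (128 * m + 16))) with hBd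
  have hM0 : M ≠ 0 := primorial_ne_zero w
  have hlog : 0 ≤ Real.log ((2 ^ 2 ^ J : ℕ) : ℝ) := Real.log_natCast_nonneg _
  have hBd0 : 0 ≤ Bd := by positivity
  choose S hS1 hS2 using fun i => units_fiber q M hM0 hq (a i)
  let D : ℕ → Finset ℕ := fun n => Finset.univ.image fun k : Fin (m - 1) =>
        (Nat.nth Nat.Prime (n + (k + 1)) - Nat.nth Nat.Prime n) / M + k
  let R : ℕ → (Fin m → ZMod M) := fun n i => (Nat.nth Nat.Prime (n + i) : ZMod M)
  let K := Fintype.piFinset S ×ˢ Finset.powersetCard (m - 1) (Finset.range (Y / M + m))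
  have hpr : ∀ n, (Nat.nth Nat.Prime n).Prime := fun n => Nat.prime_nth_prime n
  have hmaps : ∀ n ∈ G, (R n, D n) ∈ K := by
    intro n hn
    obtain ⟨h1, h2, h3, h4⟩ := hG n hn
    rw [Finset.mem_product, Fintype.mem_piFinset, Finset.mem_powersetCard]
    refine ⟨fun i => ?_, ?_, ?_⟩
    · have hbig : 2 ^ 2 ^ J < Nat.nth Nat.Prime (n + i) :=
        h2.trans_le (nth_sm.monotone (by omega))
      have hcop : (Nat.nth Nat.Prime (n + i)).Coprime M := by
        rw [(hpr _).coprime_iff_not_dvd, hMdef, (hpr _).dvd_primorial_iff]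
        omega
      have := hS2 i (ZMod.unitOfCoprime _ hcop) (by
        ext
        rw [ZMod.unitsMap_val, ZMod.coe_unitOfCoprime, ← h3 i, ZMod.cast_natCast hq])
      simpa [R] using this
    · intro x hx
      obtain ⟨k, -, rfl⟩ := Finset.mem_image.1 hx
      rw [Finset.mem_range]
      have : (Nat.nth Nat.Prime (n + (k + 1)) - Nat.nth Nat.Prime n) / M ≤ Y / M := by
        apply Nat.div_le_div_right
        have : Nat.nth Nat.Prime (n + (k + 1)) ≤ Nat.nth Nat.Prime (n + (m - 1)) :=
          nth_sm.monotone (by have := k.2; omega)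
        omega
      have := k.2
      omega
    · rw [Finset.card_image_of_injective, Finset.card_univ, Fintype.card_fin]
      refine StrictMono.injective fun k k' hk => ?_
      have h1 : (Nat.nth Nat.Prime (n + (k + 1)) - Nat.nth Nat.Prime n) / M ≤
        (Nat.nth Nat.Prime (n + (k' + 1)) - Nat.nth Nat.Prime n) / M := by
        apply Nat.div_le_div_right
        apply Nat.sub_le_sub_right
        apply nth_sm.monotone
        have : (k:ℕ) < k' := hk
        omega
      have : (k:ℕ) < k' := hk
      omega
  have hfib : ∀ κ ∈ K, ((G.filter fun n => (R n, D n) = κ).card : ℝ) ≤ Bd := by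
    intro κ _
    rcases (G.filter fun n => (R n, D n) = κ).eq_empty_or_nonempty with he | ⟨n0, hn0⟩
    · rw [he]; simpa using hBd0
    rw [Finset.mem_filter] at hn0
    have hdet : ∀ n ∈ G.filter (fun n => (R n, D n) = κ),
        ∀ i < m, Nat.nth Nat.Prime (n + i) - Nat.nth Nat.Prime n =
      Nat.nth Nat.Prime (n0 + i) - Nat.nth Nat.Prime n0 := by
      intro n hn
      have h1 := (Finset.mem_filter.1 hn).2.trans hn0.2.symm
      rw [Prod.mk.injEq] at h1
      exact gaps_det m M n n0 h1.2 fun i hi => congrFun h1.1 ⟨i, hi⟩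
    have hc : ((G.filter fun n => (R n, D n) = κ).image (Nat.nth Nat.Prime)).card =
        (G.filter fun n => (R n, D n) = κ).card :=
      Finset.card_image_of_injective _ nth_sm.injective
    rw [← hc]
    refine sieve_final m J w X (Nat.nth Nat.Prime n0) Y t hm hw hwz
      (fun i => Nat.nth Nat.Prime (n0 + i) - Nat.nth Nat.Prime n0) ?_ ?_ hY ht _ ?_
    · intro i i' hii
      simp only at hii
      have h1 : Nat.nth Nat.Prime n0 ≤ Nat.nth Nat.Prime (n0 + i) := nth_sm.monotone (by omega)
      have h2 : Nat.nth Nat.Prime n0 ≤ Nat.nth Nat.Prime (n0 + i') := nth_sm.monotone (by omega)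
      have := nth_sm.injective (show Nat.nth Nat.Prime (n0 + i) = Nat.nth Nat.Prime (n0 + i') by
        omega)
      exact Fin.ext (by omega)
    · intro i
      have := (hG n0 hn0.1).2.2.2
      have : Nat.nth Nat.Prime (n0 + i) ≤ Nat.nth Nat.Prime (n0 + (m - 1)) :=
          nth_sm.monotone (by have := i.2; omega)
      omega
    · intro x hx
      obtain ⟨n, hn, rfl⟩ := Finset.mem_image.1 hx
      have hn' := Finset.mem_filter.1 hn
      obtain ⟨h1, h2, h3, h4⟩ := hG n hn'.1
      refine ⟨h1, ?_, ?_⟩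
      · have h5 := congrFun (congrArg Prod.fst (hn'.2.trans hn0.2.symm)) ⟨0, hm⟩
        rw [← ZMod.natCast_eq_natCast_iff]
        simpa [R] using h5
      · intro p hp hwp hpz i hdvd
        rw [← hdet n hn i i.2] at hdvd
        have h6 : Nat.nth Nat.Prime n ≤ Nat.nth Nat.Prime (n + i) := nth_sm.monotone (by omega)
        rw [Nat.add_sub_cancel' h6, Nat.prime_dvd_prime_iff_eq hp (hpr _)] at hdvd
        omega
  have hcard : (K.card : ℝ) ≤ (M.totient / (q.totient : ℝ)) ^ m *
      ((Y / M + m).choose (m - 1) : ℕ) := by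
    rw [Finset.card_product, Fintype.card_piFinset, Finset.card_powersetCard, Finset.card_range]
    push_cast
    gcongr
    calc _ ≤ ∏ i : Fin m, (M.totient / (q.totient : ℝ)) :=
          Finset.prod_le_prod (fun _ _ => by positivity) fun i _ => hS1 i
      _ = _ := by rw [Finset.prod_const, Finset.card_univ, Fintype.card_fin]
  have hsum := Finset.card_eq_sum_card_fiberwise (f := fun n => (R n, D n)) (s := G)
      (t := K) (fun n hn => Finset.mem_coe.2 (hmaps n (Finset.mem_coe.1 hn)))
  rw [hsum]
  push_cast
  calc _ ≤ ∑ κ ∈ K, Bd := Finset.sum_le_sum hfib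
    _ = K.card * Bd := by rw [Finset.sum_const, nsmul_eq_mul]
    _ ≤ _ := by gcongr

lemma span_sum (f : ℕ → ℝ) (hf : ∀ n, 0 ≤ f n) (K : ℕ) (X : ℝ) (k : ℕ)
    (hX : ∀ j < k, f (K + j) ≤ X) :
    ∑ n ∈ Finset.range K, (f (n + k) - f n) ≤ k * X := by
  induction k with
  | zero => simp
  | succ k ih =>
    have h1 := ih fun j hj => hX j (by omega)
    have h2 : ∑ n ∈ Finset.range K, (f (n + 1 + k) - f (n + k)) = f (K + k) - f (0 + k) :=
      Finset.sum_range_sub (fun n => f (n + k)) K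
    have h3 : ∑ n ∈ Finset.range K, (f (n + (k + 1)) - f n) =
        ∑ n ∈ Finset.range K, (f (n + k) - f n) +
        ∑ n ∈ Finset.range K, (f (n + 1 + k) - f (n + k)) := by
      rw [← Finset.sum_add_distrib]
      refine Finset.sum_congr rfl fun n _ => ?_
      rw [show n + (k + 1) = n + 1 + k by ring]; ring
    rw [h3, h2]
    push_cast
    have := hX k (by omega)
    have := hf (0 + k)
    linarith

lemma pi_pow (E : ℕ) (hE : 1 ≤ E) :
    ((2:ℝ) ^ E) / E - 2 ≤ (Nat.count Nat.Prime (2 ^ E) : ℝ) + 1 := by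
  have h := Chebyshev.pi_ge (2 ^ E)
  have h2 : ((Nat.primeCounting (2 ^ E) : ℕ) : ℝ) ≤ (Nat.count Nat.Prime (2 ^ E) : ℝ) + 1 := by
    have : Nat.primeCounting (2 ^ E) ≤ Nat.count Nat.Prime (2 ^ E) + 1 := by
      unfold Nat.primeCounting Nat.primeCounting'
      rw [Nat.count_succ]
      split_ifs <;> omega
    exact_mod_cast this
  refine le_trans ?_ (h.trans h2)
  have hE' : (1:ℝ) ≤ E := by exact_mod_cast hE
  have hl : 0 < Real.log 2 := Real.log_pos (by norm_num)
  have hlX : Real.log ((2 ^ E : ℕ) : ℝ) = E * Real.log 2 := by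
    push_cast; rw [Real.log_pow]
  have hl1 : Real.log (((2 ^ E : ℕ) : ℝ) + 1) ≤ 2 * (E * Real.log 2) := by
    have : Real.log (((2 ^ E : ℕ) : ℝ) + 1) ≤ Real.log ((2:ℝ) ^ (E + 1)) := by
      apply Real.log_le_log (by positivity)
      push_cast
      have : (1:ℝ) ≤ 2 ^ E := one_le_pow₀ (by norm_num)
      rw [pow_succ]; linarith
    rw [Real.log_pow] at this
    push_cast at this ⊢
    nlinarith
  rw [hlX, sub_div]
  have e1 : ((2 ^ E : ℕ) : ℝ) * Real.log 2 / (E * Real.log 2) = 2 ^ E / E := by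
    push_cast; field_simp
  have e2 : Real.log (((2 ^ E : ℕ) : ℝ) + 1) / (E * Real.log 2) ≤ 2 := by
    rw [div_le_iff₀ (by positivity)]; exact hl1
  rw [e1]; linarith

lemma good_count (m J : ℕ) (hm : 1 ≤ m) :
    ∃ G : Finset ℕ, (∀ n ∈ G, Nat.nth Nat.Prime n < 2 ^ (300 * m * 2 ^ J) ∧
      2 ^ 2 ^ J < Nat.nth Nat.Prime n ∧
      Nat.nth Nat.Prime (n + (m - 1)) ≤ Nat.nth Nat.Prime n + 1200 * m ^ 2 * 2 ^ J) ∧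
      (2:ℝ) ^ (300 * m * 2 ^ J) / (300 * m * 2 ^ J) * (3 / 4) - (m + 3 + 2 ^ 2 ^ J) ≤ G.card := by
  classical
  set X := 2 ^ (300 * m * 2 ^ J) with hX
  set Y := 1200 * m ^ 2 * 2 ^ J with hY
  set z := 2 ^ 2 ^ J with hz
  set N := Nat.count Nat.Prime X with hN
  set K := N - (m - 1) with hK
  let A := (Finset.range K).filter fun n => Nat.nth Nat.Prime n ≤ z
  let B := (Finset.range K).filter fun n =>
    Nat.nth Nat.Prime n + Y < Nat.nth Nat.Prime (n + (m - 1))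
  let G := (Finset.range K).filter fun n =>
    z < Nat.nth Nat.Prime n ∧ Nat.nth Nat.Prime (n + (m - 1)) ≤ Nat.nth Nat.Prime n + Y
  refine ⟨G, ?_, ?_⟩
  · intro n hn
    obtain ⟨h1, h2⟩ := Finset.mem_filter.1 hn
    refine ⟨Nat.nth_lt_of_lt_count ?_, h2⟩
    rw [Finset.mem_range] at h1
    omega
  have hcov : Finset.range K ⊆ (A ∪ B) ∪ G := by
    intro n hn
    simp only [A, B, G, Finset.mem_union, Finset.mem_filter]
    by_cases h1 : Nat.nth Nat.Prime n ≤ z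
    · exact Or.inl (Or.inl ⟨hn, h1⟩)
    · by_cases h2 : Nat.nth Nat.Prime n + Y < Nat.nth Nat.Prime (n + (m - 1))
      · exact Or.inl (Or.inr ⟨hn, h2⟩)
      · exact Or.inr ⟨hn, by omega, by omega⟩
  have hKc : K ≤ A.card + B.card + G.card := by
    have := Finset.card_le_card hcov
    rw [Finset.card_range] at this
    have h1 := Finset.card_union_le (A ∪ B) G
    have h2 := Finset.card_union_le A B
    omega
  have hA : A.card ≤ z := by
    have : (A.image (Nat.nth Nat.Prime)).card ≤ (Finset.Icc 1 z).card := by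
      apply Finset.card_le_card
      intro x hx
      obtain ⟨n, hn, rfl⟩ := Finset.mem_image.1 hx
      exact Finset.mem_Icc.2 ⟨(Nat.prime_nth_prime n).one_lt.le, (Finset.mem_filter.1 hn).2⟩
    rwa [Finset.card_image_of_injective _ nth_sm.injective, Nat.card_Icc,
      Nat.add_sub_cancel] at this
  have hB : (B.card : ℝ) * Y ≤ m * X := by
    by_cases hK0 : K = 0
    · have hB0 : B = ∅ := by
        simp only [B, hK0, Finset.range_zero, Finset.filter_empty]
      rw [hB0, Finset.card_empty, Nat.cast_zero, zero_mul]
      positivity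
    have h1 := span_sum (fun n => (Nat.nth Nat.Prime n : ℝ)) (fun n => Nat.cast_nonneg _) K X
      (m - 1) (by
        intro j hj
        exact_mod_cast (Nat.nth_lt_of_lt_count (show K + j < Nat.count Nat.Prime X by
            omega)).le)
    have h2 : (B.card : ℝ) * Y ≤ ∑ n ∈ Finset.range K,
        ((Nat.nth Nat.Prime (n + (m - 1)) : ℝ) - Nat.nth Nat.Prime n) := by
      calc (B.card : ℝ) * Y = ∑ n ∈ B, (Y : ℝ) := by rw [Finset.sum_const, nsmul_eq_mul]
        _ ≤ ∑ n ∈ B, ((Nat.nth Nat.Prime (n + (m - 1)) : ℝ) - Nat.nth Nat.Prime n) := by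
            refine Finset.sum_le_sum fun n hn => ?_
            have := (Finset.mem_filter.1 hn).2
            have : (Nat.nth Nat.Prime n : ℝ) + Y < Nat.nth Nat.Prime (n + (m - 1)) := by
              exact_mod_cast this
            linarith
        _ ≤ _ := by
            refine Finset.sum_le_sum_of_subset_of_nonneg (Finset.filter_subset _ _) ?_
            intro n _ _
            rw [sub_nonneg]
            exact_mod_cast nth_sm.monotone (by omega)
    have h3 : ((m - 1 : ℕ) : ℝ) * X ≤ m * X := by
      gcongr; omega
    exact h2.trans (h1.trans h3)
  have hpi := pi_pow (300 * m * 2 ^ J) (Nat.mul_pos (by omega) (by positivity))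
  have hm' : (0:ℝ) < m := by exact_mod_cast hm
  have hB2 : (B.card : ℝ) ≤ (2:ℝ) ^ (300 * m * 2 ^ J) / (300 * m * 2 ^ J) * (1 / 4) := by
    have e : (2:ℝ) ^ (300 * m * 2 ^ J) / (300 * m * 2 ^ J) * (1 / 4) = m * X / Y := by
      rw [hX, hY]; push_cast; field_simp; norm_num
    rw [e, le_div_iff₀ (by rw [hY]; positivity)]
    exact hB
  have hK' : (N : ℝ) ≤ K + m := by
    have : N ≤ K + m := by omega
    exact_mod_cast this
  have hKc' : (K : ℝ) ≤ A.card + B.card + G.card := by exact_mod_cast hKc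
  have hA' : (A.card : ℝ) ≤ 2 ^ 2 ^ J := by exact_mod_cast hA
  push_cast at hpi
  linarith

lemma bd_alg (k : ℕ) (X M F φ l L C : ℝ) (hX : 0 < X) (hM : 0 < M) (hF : 0 < F) (hφ : 0 < φ)
    (hL : 0 < L) (hl : L / 2 ≤ l) (hC : C * M ^ k ≤ (2400 * ((k:ℝ) + 1) ^ 2 * L) ^ k / k.factorial) :
    (F / φ) ^ (k + 1) * C * (2 * (X / M * (6 * (M / (F * l)) ^ (k + 1)))) ≤
      12 * ((k:ℝ) + 1) * (X / L) * (4800 * Real.exp 1 * ((k:ℝ) + 1) / φ) ^ (k + 1) := by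
  have hl0 : 0 < l := by linarith
  have hk : (0:ℝ) < (k:ℝ) + 1 := by positivity
  have e1 : (F / φ) ^ (k + 1) * C * (2 * (X / M * (6 * (M / (F * l)) ^ (k + 1)))) =
      12 * X / (φ ^ (k + 1) * l ^ (k + 1)) * (C * M ^ k) := by
    rw [div_pow, div_pow, mul_pow]; field_simp; ring
  rw [e1]
  have hfac : 1 / (k.factorial : ℝ) ≤
      ((k:ℝ) + 1) * Real.exp 1 ^ (k + 1) / ((k:ℝ) + 1) ^ (k + 1) := by
    have h := Real.pow_div_factorial_le_exp (x := (k:ℝ) + 1) hk.le (k + 1)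
    rw [Nat.factorial_succ] at h
    push_cast at h
    have he : Real.exp ((k:ℝ) + 1) = Real.exp 1 ^ (k + 1) := by
      rw [← Real.exp_nat_mul]; push_cast; rw [mul_one]
    rw [he, div_le_iff₀ (by positivity)] at h
    rw [div_le_div_iff₀ (by positivity) (by positivity)]
    linarith
  have hll : 1 / l ^ (k + 1) ≤ 2 ^ (k + 1) / L ^ (k + 1) := by
    rw [← div_pow, ← one_div_pow]
    apply pow_le_pow_left₀ (by positivity)
    rw [div_le_div_iff₀ hl0 hL]; linarith
  have h2400 : (2400 * ((k:ℝ) + 1) ^ 2) ^ k ≤ (2400 * ((k:ℝ) + 1) ^ 2) ^ (k + 1) := by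
    apply pow_le_pow_right₀ _ (by omega)
    have : (1:ℝ) ≤ ((k:ℝ) + 1) ^ 2 := one_le_pow₀ (by have : (0:ℝ) ≤ k := by positivity
                                                      linarith)
    linarith
  calc 12 * X / (φ ^ (k + 1) * l ^ (k + 1)) * (C * M ^ k)
      ≤ 12 * X / (φ ^ (k + 1) * l ^ (k + 1)) *
        ((2400 * ((k:ℝ) + 1) ^ 2 * L) ^ k / k.factorial) := by gcongr
    _ = 12 * X / φ ^ (k + 1) * (1 / l ^ (k + 1)) *
        ((2400 * ((k:ℝ) + 1) ^ 2) ^ k * L ^ k * (1 / k.factorial)) := by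
        rw [mul_pow]; field_simp
    _ ≤ 12 * X / φ ^ (k + 1) * (2 ^ (k + 1) / L ^ (k + 1)) *
        ((2400 * ((k:ℝ) + 1) ^ 2) ^ (k + 1) * L ^ k *
          (((k:ℝ) + 1) * Real.exp 1 ^ (k + 1) / ((k:ℝ) + 1) ^ (k + 1))) := by gcongr
    _ = _ := by
        have e3 : (4800 * Real.exp 1 * ((k:ℝ) + 1) / φ) ^ (k + 1) =
          2 ^ (k + 1) * (2400 * ((k:ℝ) + 1) ^ 2) ^ (k + 1) * Real.exp 1 ^ (k + 1) /
            (((k:ℝ) + 1) ^ (k + 1) * φ ^ (k + 1)) := by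
          rw [← mul_pow, ← mul_pow, ← mul_pow, ← div_pow]
          congr 1
          field_simp; norm_num
        rw [e3, pow_succ L k]
        field_simp

lemma pattern_bound (q m J : ℕ) (hm : 1 ≤ m) (hq : Squarefree q) 
    (hJ1 : 2 ^ (16 * m ^ 3) ≤ J / 4) (hJ2 : 1200 * m ^ 2 + 6 ≤ J) (hJq : q ≤ J / 4)
    (a : Fin m → (ZMod q)ˣ) (G : Finset ℕ)
    (hG : ∀ n ∈ G, Nat.nth Nat.Prime n < 2 ^ (300 * m * 2 ^ J) ∧ 2 ^ 2 ^ J < Nat.nth Nat.Prime n ∧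
      (∀ i : Fin m, ((Nat.nth Nat.Prime (n + (i : ℕ)) : ℕ) : ZMod q) = (a i : ZMod q)) ∧
      Nat.nth Nat.Prime (n + (m - 1)) ≤ Nat.nth Nat.Prime n + 1200 * m ^ 2 * 2 ^ J) :
    (G.card : ℝ) ≤ 12 * m * ((2:ℝ) ^ (300 * m * 2 ^ J) / 2 ^ J) *
      (4800 * Real.exp 1 * m / q.totient) ^ m := by
  set w := J / 4 with hw
  have hm3 : m ≤ m ^ 3 := Nat.le_self_pow (by norm_num) m
  have hw2m : 2 * m ≤ w := by
    have : 16 * m ^ 3 < 2 ^ (16 * m ^ 3) := Nat.lt_two_pow_self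
    omega
  have hJL : J < 2 ^ J := Nat.lt_two_pow_self
  have hLz : 2 ^ J < 2 ^ 2 ^ J := Nat.lt_two_pow_self
  have hqw : q ∣ primorial w := by
    rw [← Nat.prod_primeFactors_of_squarefree hq]
    refine Finset.prod_primes_dvd _ (fun p hp => (Nat.prime_of_mem_primeFactors hp).prime) ?_
    intro p hp
    rw [(Nat.prime_of_mem_primeFactors hp).dvd_primorial_iff]
    exact (Nat.le_of_mem_primeFactors hp).trans hJq
  have hY : 1200 * m ^ 2 * 2 ^ J < w ^ (w / (2 * m ^ 3) + 1) := by
    set t := w / (2 * m ^ 3) with ht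
    have h1 : w < (2 * m ^ 3) * (t + 1) := Nat.lt_mul_div_succ w (by positivity)
    calc 1200 * m ^ 2 * 2 ^ J < 2 ^ (1200 * m ^ 2) * 2 ^ J := by
          gcongr; exact Nat.lt_two_pow_self
      _ = 2 ^ (1200 * m ^ 2 + J) := by rw [pow_add]
      _ ≤ 2 ^ (16 * m ^ 3 * (t + 1)) := by
          apply Nat.pow_le_pow_right (by norm_num)
          have : 16 * m ^ 3 * (t + 1) = 8 * ((2 * m ^ 3) * (t + 1)) := by ring
          rw [this]
          omega
      _ = (2 ^ (16 * m ^ 3)) ^ (t + 1) := by rw [pow_mul]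
      _ ≤ w ^ (t + 1) := Nat.pow_le_pow_left hJ1 _
  have ht : 2 * m ^ 3 * (w / (2 * m ^ 3)) ≤ w := Nat.mul_div_le _ _
  have hmain := pattern_count q m J w _ _ _ hm hw2m (by omega) hY ht hqw a G hG
  have hML : primorial w ≤ 2 ^ J := by
    refine (primorial_le_four_pow w).trans ?_
    rw [show (4:ℕ) = 2 ^ 2 by norm_num, ← pow_mul]
    exact Nat.pow_le_pow_right (by norm_num) (by omega)
  refine hmain.trans ?_
  clear hmain hG
  have hq0 : 0 < q := Nat.pos_of_ne_zero hq.ne_zero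
  set M := primorial w with hMd
  have hM0 : 0 < M := primorial_pos w
  have hlog : Real.log ((2 ^ 2 ^ J : ℕ) : ℝ) = 2 ^ J * Real.log 2 := by
    push_cast; rw [Real.log_pow]; push_cast; rfl
  set l := Real.log ((2 ^ 2 ^ J : ℕ) : ℝ) with hl
  set L : ℝ := 2 ^ J with hL
  have hL0 : 0 < L := by positivity
  have hl2 : L / 2 ≤ l := by rw [hlog]; nlinarith [Real.log_two_gt_d9]
  have hlL : l ≤ L := by rw [hlog]; nlinarith [Real.log_two_lt_d9]
  have hl0 : 0 < l := by linarith
  have hF0 : (0:ℝ) < M.totient := by exact_mod_cast Nat.totient_pos.2 hM0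
  have hFM : (M.totient : ℝ) ≤ M := by exact_mod_cast Nat.totient_le M
  have hM0' : (0:ℝ) < M := by exact_mod_cast hM0
  have hML' : (M : ℝ) ≤ L := by rw [hL]; exact_mod_cast hML
  have herr : (2:ℝ) ^ (2 ^ J * (128 * m + 16)) ≤
      ((2 ^ (300 * m * 2 ^ J) : ℕ) : ℝ) / M * (6 * (M / (M.totient * l)) ^ m) := by
    have s1 : 1 / L ≤ M / (M.totient * l) := by
      rw [div_le_div_iff₀ hL0 (by positivity), one_mul]
      gcongr
    have s2 : (2:ℝ) ^ (2 ^ J * (128 * m + 16)) * (L * L ^ m) ≤ 2 ^ (300 * m * 2 ^ J) := by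
      rw [hL, ← pow_mul, ← pow_add, ← pow_add]
      apply pow_le_pow_right₀ (by norm_num)
      nlinarith
    calc (2:ℝ) ^ (2 ^ J * (128 * m + 16)) ≤ 2 ^ (300 * m * 2 ^ J) / (L * L ^ m) := by
          rw [le_div_iff₀ (by positivity)]; exact s2
      _ = 2 ^ (300 * m * 2 ^ J) / L * (1 * (1 / L) ^ m) := by
          rw [one_div_pow]; field_simp
      _ ≤ _ := by
          push_cast
          gcongr
          norm_num
  have hC : (((1200 * m ^ 2 * 2 ^ J / M + m).choose (m - 1) : ℕ) : ℝ) * (M : ℝ) ^ (m - 1) ≤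
      (2400 * (m:ℝ) ^ 2 * L) ^ (m - 1) / (m - 1).factorial := by
    have h1 := Nat.choose_le_pow_div (α := ℝ) (m - 1) (1200 * m ^ 2 * 2 ^ J / M + m)
    have h2 : (1200 * m ^ 2 * 2 ^ J / M + m) * M ≤ 2400 * m ^ 2 * 2 ^ J := by
      have h3 := Nat.div_mul_le_self (1200 * m ^ 2 * 2 ^ J) M
      have h4 : m * M ≤ m ^ 2 * 2 ^ J := by
        apply Nat.mul_le_mul _ hML
        exact Nat.le_self_pow (by norm_num) m
      rw [add_mul]; nlinarith
    have h2' : (((1200 * m ^ 2 * 2 ^ J / M + m : ℕ) : ℝ)) * M ≤ 2400 * (m:ℝ) ^ 2 * L := by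
      rw [hL]; exact_mod_cast h2
    calc _ ≤ (((1200 * m ^ 2 * 2 ^ J / M + m : ℕ) : ℝ)) ^ (m - 1) / (m - 1).factorial *
          (M : ℝ) ^ (m - 1) := by gcongr
      _ = ((((1200 * m ^ 2 * 2 ^ J / M + m : ℕ) : ℝ)) * M) ^ (m - 1) / (m - 1).factorial := by
          rw [mul_pow]; ring
      _ ≤ _ := by gcongr
  obtain ⟨k, rfl⟩ : ∃ k, m = k + 1 := ⟨m - 1, by omega⟩
  rw [Nat.add_sub_cancel] at hC ⊢
  have hfin := bd_alg k ((2:ℝ) ^ (300 * (k + 1) * 2 ^ J)) M M.totient q.totient l L _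
    (by positivity) hM0' hF0 (by exact_mod_cast Nat.totient_pos.2 hq0) hL0 hl2
    (by push_cast at hC ⊢; exact hC)
  push_cast at hfin ⊢
  refine le_trans ?_ hfin
  push_cast at herr
  gcongr
  linarith

lemma tendsto_of_infinite (q m : ℕ) (a : Fin m → (ZMod q)ˣ)
    (h : {n : ℕ | ∀ i : Fin m,
      ((Nat.nth Nat.Prime (n + (i : ℕ)) : ℕ) : ZMod q) = (a i : ZMod q)}.Infinite) :
    Tendsto (consecCount q m a) atTop atTop := by
  rw [tendsto_atTop]
  intro b
  obtain ⟨s, hs, hb⟩ := h.exists_subset_card_eq b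
  filter_upwards [eventually_ge_atTop (∑ n ∈ s, (Nat.nth Nat.Prime n : ℝ))] with x hx
  rw [← hb, ← Set.ncard_coe_finset]
  unfold consecCount
  apply Set.ncard_le_ncard
  · intro n hn
    refine ⟨le_trans ?_ hx, hs hn⟩
    exact Finset.single_le_sum (f := fun n => (Nat.nth Nat.Prime n : ℝ))
      (fun _ _ => Nat.cast_nonneg _) (Finset.mem_coe.1 hn)
  · refine (Set.finite_Iic ⌊x⌋₊).subset fun n hn => ?_
    exact (nth_sm.le_apply (x := n)).trans (Nat.le_floor hn.1)

lemma end_alg (m : ℕ) (hm : 1 ≤ m) (N X L φ : ℝ) (hN : 0 ≤ N) (hX : 0 < X) (hL : 0 < L)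
    (hφ : 0 < φ)
    (hkey : X / (300 * m * L) * (1 / 4) ≤
      N * (12 * m * (X / L) * (4800 * Real.exp 1 * m / φ) ^ m)) :
    (φ / (10 ^ 9 * m)) ^ m ≤ N := by
  have hm' : (1:ℝ) ≤ m := by exact_mod_cast hm
  set Q : ℝ := 4800 * Real.exp 1 * m / φ with hQ
  have hQ0 : 0 < Q := by positivity
  have hkey2 : 1 ≤ N * (14400 * (m:ℝ) ^ 2 * Q ^ m) := by
    have e1 : X / (300 * m * L) * (1 / 4) = X / (1200 * m * L) * 1 := by
      field_simp; norm_num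
    have e2 : N * (12 * m * (X / L) * Q ^ m) =
        X / (1200 * m * L) * (N * (14400 * (m:ℝ) ^ 2 * Q ^ m)) := by
      generalize Q ^ m = W
      field_simp; ring
    rw [e1, e2] at hkey
    exact le_of_mul_le_mul_left hkey (by positivity)
  have hmm : (14400 * (m:ℝ) ^ 2) ≤ 57600 ^ m := by
    have h1 : (m:ℝ) ≤ 2 ^ m := by exact_mod_cast (Nat.lt_two_pow_self (n := m)).le
    have h2 : (m:ℝ) ^ 2 ≤ 4 ^ m := by
      calc (m:ℝ) ^ 2 ≤ (2 ^ m) ^ 2 := by gcongr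
        _ = 4 ^ m := by rw [← pow_mul, mul_comm, pow_mul]; norm_num
    have h3 : (14400:ℝ) ≤ 14400 ^ m := le_self_pow₀ (by norm_num) (by omega)
    calc (14400 * (m:ℝ) ^ 2) ≤ 14400 ^ m * 4 ^ m := by gcongr
      _ = _ := by rw [← mul_pow]; norm_num
  have hprod : φ / (10 ^ 9 * m) * (57600 * Q) ≤ 1 := by
    rw [hQ]
    have e : φ / (10 ^ 9 * m) * (57600 * (4800 * Real.exp 1 * m / φ)) =
        57600 * 4800 / 10 ^ 9 * Real.exp 1 := by field_simp
    rw [e]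
    have := Real.exp_one_lt_d9
    linarith
  set R : ℝ := φ / (10 ^ 9 * m) with hR
  have hR0 : 0 ≤ R := by positivity
  calc R ^ m = R ^ m * 1 := by ring
    _ ≤ R ^ m * (N * (57600 ^ m * Q ^ m)) := by
        gcongr
        exact hkey2.trans (by gcongr)
    _ = N * (R * (57600 * Q)) ^ m := by rw [mul_pow, mul_pow]; ring
    _ ≤ N * 1 := by
        gcongr
        exact pow_le_one₀ (by positivity) hprod
    _ = _ := mul_one _

lemma main_count (m q : ℕ) (hm : 1 ≤ m) (hq : Squarefree q) :
    ((q.totient : ℝ) / (10 ^ 9 * m)) ^ m ≤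
      ({a : Fin m → (ZMod q)ˣ | Tendsto (consecCount q m a) atTop atTop}.ncard : ℝ) := by
  classical
  have hq0 : 0 < q := Nat.pos_of_ne_zero hq.ne_zero
  have : NeZero q := ⟨hq0.ne'⟩
  let pat : (Fin m → (ZMod q)ˣ) → ℕ → Prop := fun a n => ∀ i : Fin m,
      ((Nat.nth Nat.Prime (n + (i : ℕ)) : ℕ) : ZMod q) = (a i : ZMod q)
  let Gd : Finset (Fin m → (ZMod q)ˣ) :=
    Finset.univ.filter fun a => Tendsto (consecCount q m a) atTop atTop
  have hGd : {a : Fin m → (ZMod q)ˣ | Tendsto (consecCount q m a) atTop atTop} = (Gd : Set _) := by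
    ext a; simp [Gd]
  rw [hGd, Set.ncard_coe_finset]
  have hfin : (⋃ a ∈ Gdᶜ, {n : ℕ | pat a n}).Finite := by
    refine Set.Finite.biUnion (Finset.finite_toSet _) fun a ha => ?_
    by_contra hinf
    have := tendsto_of_infinite q m a hinf
    simp [Gd, this] at ha
  set Bad := hfin.toFinset with hBad
  set J := 4 * 2 ^ (16 * m ^ 3) + (1200 * m ^ 2 + 6) + 4 * q + (m + 3 + Bad.card) with hJ
  have hJL : J < 2 ^ J := Nat.lt_two_pow_self
  have hLz : 2 ^ J < 2 ^ 2 ^ J := Nat.lt_two_pow_self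
  obtain ⟨G, hG, hGc⟩ := good_count m J hm
  set B : ℝ := 12 * m * ((2:ℝ) ^ (300 * m * 2 ^ J) / 2 ^ J) *
      (4800 * Real.exp 1 * m / q.totient) ^ m with hB
  have hpb : ∀ a ∈ Gd, ((G.filter (pat a)).card : ℝ) ≤ B := by
    intro a _
    refine pattern_bound q m J hm hq (by omega) (by omega) (by omega) a _ ?_
    intro n hn
    obtain ⟨h1, h2⟩ := Finset.mem_filter.1 hn
    obtain ⟨h3, h4, h5⟩ := hG n h1
    exact ⟨h3, h4, h2, h5⟩
  have hcov : G ⊆ Bad ∪ Gd.biUnion fun a => G.filter (pat a) := by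
    intro n hn
    obtain ⟨h3, h4, h5⟩ := hG n hn
    have hcop : ∀ i : Fin m, (Nat.nth Nat.Prime (n + i)).Coprime q := by
      intro i
      have hbig : 2 ^ 2 ^ J < Nat.nth Nat.Prime (n + i) :=
        h4.trans_le (nth_sm.monotone (by omega))
      rw [(Nat.prime_nth_prime _).coprime_iff_not_dvd]
      intro hd
      have := Nat.le_of_dvd hq0 hd
      omega
    let a : Fin m → (ZMod q)ˣ := fun i => ZMod.unitOfCoprime _ (hcop i)
    have hpa : pat a n := fun i => by simp [a]
    rw [Finset.mem_union]
    by_cases ha : a ∈ Gd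
    · exact Or.inr (Finset.mem_biUnion.2 ⟨a, ha, Finset.mem_filter.2 ⟨hn, hpa⟩⟩)
    · left
      rw [hBad, Set.Finite.mem_toFinset]
      exact Set.mem_biUnion (Finset.mem_compl.2 ha) hpa
  have hcount : (G.card : ℝ) ≤ Bad.card + Gd.card * B := by
    have h1 : G.card ≤ Bad.card + ∑ a ∈ Gd, (G.filter (pat a)).card :=
      (Finset.card_le_card hcov).trans ((Finset.card_union_le _ _).trans
        (Nat.add_le_add_left Finset.card_biUnion_le _))
    calc (G.card : ℝ) ≤ Bad.card + ∑ a ∈ Gd, ((G.filter (pat a)).card : ℝ) := by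
          exact_mod_cast h1
      _ ≤ Bad.card + ∑ a ∈ Gd, B := by
          gcongr with a ha; exact hpb a ha
      _ = _ := by rw [Finset.sum_const, nsmul_eq_mul]
  have hm' : (1:ℝ) ≤ m := by exact_mod_cast hm
  set X : ℝ := (2:ℝ) ^ (300 * m * 2 ^ J) with hX
  have hX0 : 0 < X := by positivity
  have hsmall : ((m:ℝ) + 3 + 2 ^ 2 ^ J) + Bad.card ≤ X / (300 * m * 2 ^ J) * (1 / 2) := by
    have s1 : ((m:ℝ) + 3 + 2 ^ 2 ^ J) + Bad.card ≤ 2 * 2 ^ 2 ^ J := by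
      have : (m + 3 + 2 ^ 2 ^ J) + Bad.card ≤ 2 * 2 ^ 2 ^ J := by omega
      exact_mod_cast this
    refine s1.trans ?_
    have s2 : (2 * 2 ^ 2 ^ J) * (600 * m * 2 ^ J) ≤ 2 ^ (300 * m * 2 ^ J) := by
      calc (2 * 2 ^ 2 ^ J) * (600 * m * 2 ^ J)
          ≤ (2 * 2 ^ 2 ^ J) * (2 ^ 10 * 2 ^ m * 2 ^ 2 ^ J) := by
            gcongr
            · norm_num
            · exact Nat.lt_two_pow_self.le
        _ = 2 ^ (11 + m + 2 * 2 ^ J) := by ring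
        _ ≤ _ := by
            apply Nat.pow_le_pow_right (by norm_num)
            have : 1 ≤ 2 ^ J := by omega
            nlinarith [Nat.mul_le_mul hm this]
    have s3 : (2 * 2 ^ 2 ^ J : ℝ) * (600 * m * 2 ^ J) ≤ X := by
      rw [hX]; exact_mod_cast s2
    have e : X / (300 * m * 2 ^ J) * (1 / 2) = X / (600 * m * 2 ^ J) := by
      field_simp; norm_num
    rw [e, le_div_iff₀ (by positivity)]
    exact s3
  have hkey : X / (300 * m * 2 ^ J) * (1 / 4) ≤ Gd.card * B := by linarith
  exact end_alg m hm Gd.card X (2 ^ J) q.totient (Nat.cast_nonneg _) hX0 (by positivity)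
    (by exact_mod_cast Nat.totient_pos.2 hq0) hkey

theorem stmt6 :
    ∃ C : ℝ, 0 < C ∧ ∀ᶠ m : ℕ in atTop, ∀ q : ℕ, 0 < q → Squarefree q →
      8 * Real.exp 1 ^ 2 * (m : ℝ) * Real.log m < (q.totient : ℝ) →
      Real.exp (-C * (m : ℝ) * Real.log (Real.log m) / Real.log m) *
          (q.totient : ℝ) ^ ((m : ℝ) / Real.log m) ≤
        ({a : Fin m → (ZMod q)ˣ | Tendsto (consecCount q m a) atTop atTop}.ncard : ℝ) := by
  refine ⟨1, one_pos, ?_⟩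
  have hlog : Tendsto (fun m : ℕ => Real.log m) atTop atTop :=
    Real.tendsto_log_atTop.comp tendsto_natCast_atTop_atTop
  have hloglog : Tendsto (fun m : ℕ => Real.log (Real.log m)) atTop atTop :=
    Real.tendsto_log_atTop.comp hlog
  filter_upwards [eventually_ge_atTop 1, hlog.eventually_ge_atTop 2,
    hloglog.eventually_ge_atTop (Real.log (10 ^ 9) + 2)] with m hm hl hll q hq0 hq hφ
  refine le_trans ?_ (main_count m q hm hq)
  set l := Real.log m with hld
  have hm' : (0:ℝ) < m := by exact_mod_cast hm
  have hc : 0 ≤ Real.log (10 ^ 9) := Real.log_nonneg (by norm_num)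
  have hl0 : 0 < l := by linarith
  have hlogl : Real.log l ≤ l := (Real.log_le_sub_one_of_pos hl0).trans (by linarith)
  have hφ0 : (0:ℝ) < q.totient := lt_of_le_of_lt (by positivity) hφ
  have hu : l + Real.log l ≤ Real.log q.totient := by
    rw [hld, ← Real.log_mul hm'.ne' hl0.ne']
    apply Real.log_le_log (by positivity)
    refine le_trans ?_ hφ.le
    have he : (1:ℝ) ≤ Real.exp 1 ^ 2 := one_le_pow₀ (Real.one_le_exp (by norm_num))
    have hml : 0 < (m:ℝ) * l := by positivity
    nlinarith
  have h1 : Real.exp (-1 * (m : ℝ) * Real.log l / l) ≤ 1 := by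
    rw [Real.exp_le_one_iff]
    apply div_nonpos_of_nonpos_of_nonneg _ hl0.le
    have : 0 ≤ (m:ℝ) * Real.log l := mul_nonneg hm'.le (by linarith)
    linarith
  have h2 : (q.totient : ℝ) ^ (1 / l) ≤ (q.totient : ℝ) / (10 ^ 9 * m) := by
    rw [← Real.log_le_log_iff (by positivity) (by positivity), Real.log_rpow hφ0,
      Real.log_div hφ0.ne' (by positivity), Real.log_mul (by norm_num) hm'.ne', ← hld]
    have h3 : (l + Real.log l) * (1 - 1 / l) ≤ Real.log q.totient * (1 - 1 / l) := by
      apply mul_le_mul_of_nonneg_right hu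
      rw [sub_nonneg, div_le_one hl0]; linarith
    have h4 : (l + Real.log l) * (1 - 1 / l) = l + Real.log l - 1 - Real.log l / l := by
      field_simp; ring
    have h5 : Real.log l / l ≤ 1 := by rw [div_le_one hl0]; exact hlogl
    rw [h4, mul_sub, mul_one, mul_comm (Real.log (q.totient : ℝ)) (1 / l)] at h3
    generalize Real.log (10 ^ 9) = c at *
    generalize 1 / l * Real.log (q.totient : ℝ) = d at *
    linarith
  calc _ ≤ 1 * (q.totient : ℝ) ^ ((m : ℝ) / l) := by gcongr
    _ = ((q.totient : ℝ) ^ (1 / l)) ^ m := by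
        rw [one_mul, ← Real.rpow_mul_natCast hφ0.le]
        congr 1; ring
    _ ≤ _ := by gcongr
end
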